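/- Let E ⊆ X be a set of finite perimeter. Then the set N of points x ∈ X for which there exist θ ∈ (0,1) and a sequence r_i → 0 with inf{ V(χ_E + φ, B(x,r_i)) : φ ∈ BV_c(B(x,r_i)) } < θ·P(E, B(x,r_i)) for all i, satisfies P(E,N) = 0. Equivalently, for P(E,·)-a.e. x ∈ X, liminf_{r→0} [ inf_{φ ∈ BV_c(B(x,r))} V(χ_E + φ, B(x,r)) ] / P(E,B(x,r)) ≥ 1. -/

import Mathlib

open MeasureTheory Metric Filter Set Topology
open scoped NNReal ENNReal

noncomputable section

universe u

/-- The measure `μ` is doubling with constant `Cd`: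
`0 < μ(B(x,2r)) ≤ Cd·μ(B(x,r)) < ∞` for every `x` and every `r > 0`. -/
def IsDoublingWith {X : Type u} [PseudoMetricSpace X] [MeasurableSpace X]
    (μ : Measure X) (Cd : ℝ≥0) : Prop :=
  ∀ (x : X) (r : ℝ), 0 < r →
    0 < μ (ball x (2 * r)) ∧
      μ (ball x (2 * r)) ≤ (Cd : ℝ≥0∞) * μ (ball x r) ∧
      (Cd : ℝ≥0∞) * μ (ball x r) < ⊤

/-- `X` is a geodesic space: any two points are joined by a unit-speed geodesic. -/
def IsGeodesic (X : Type u) [PseudoMetricSpace X] : Prop :=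
  ∀ x y : X, ∃ γ : ℝ → X,
    LipschitzOnWith 1 γ (Icc 0 (dist x y)) ∧ γ 0 = x ∧ γ (dist x y) = y

/-- `g` is an upper gradient of `u`: for every `L ≥ 0` and every `1`-Lipschitz curve
`γ : [0,L] → X`, `|u(γ 0) − u(γ L)| ≤ ∫₀^L g(γ t) dt`. -/
def IsUpperGradientOf {X : Type u} [PseudoMetricSpace X] (g u : X → ℝ) : Prop :=
  ∀ L : ℝ, 0 ≤ L → ∀ γ : ℝ → X, LipschitzOnWith 1 γ (Icc 0 L) →
    |u (γ 0) - u (γ L)| ≤ ∫ t in (0:ℝ)..L, g (γ t)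

/-- The lower pointwise Lipschitz constant
`lip u (x) = liminf_{r→0} r⁻¹ sup_{y ∈ B(x,r)} |u y − u x|`. -/
def lipConst {X : Type u} [PseudoMetricSpace X] (u : X → ℝ) (x : X) : ℝ≥0∞ :=
  Filter.liminf
    (fun r : ℝ => ⨆ y ∈ ball x r, ENNReal.ofReal (|u y - u x| / r)) (𝓝[>] (0:ℝ))

/-- `u` is locally Lipschitz on `W`: Lipschitz on every closed bounded subset of `W`. -/
def LocallyLipschitzOnSet {X : Type u} [PseudoMetricSpace X] (u : X → ℝ) (W : Set X) : Prop :=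
  ∀ K : Set X, IsClosed K → Bornology.IsBounded K → K ⊆ W →
    ∃ L : ℝ≥0, LipschitzOnWith L u K

/-- `u i → f` in `L¹_loc(W)`. -/
def TendstoL1loc {X : Type u} [PseudoMetricSpace X] [MeasurableSpace X]
    (μ : Measure X) (u : ℕ → X → ℝ) (f : X → ℝ) (W : Set X) : Prop :=
  ∀ K : Set X, IsClosed K → Bornology.IsBounded K → K ⊆ W →
    Tendsto (fun i => ∫⁻ x in K, ENNReal.ofReal |u i x - f x| ∂μ) atTop (𝓝 0)

/-- Total variation `V(f,W)` of `f` on an open set `W`: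
the infimum over sequences of locally Lipschitz functions converging to `f` in `L¹_loc(W)`
of the liminf of `∫_W lip u_i dμ`. -/
def totVarOn {X : Type u} [PseudoMetricSpace X] [MeasurableSpace X]
    (μ : Measure X) (f : X → ℝ) (W : Set X) : ℝ≥0∞ :=
  ⨅ (us : ℕ → X → ℝ) (_ : ∀ i, LocallyLipschitzOnSet (us i) W)
    (_ : TendstoL1loc μ us f W),
    Filter.liminf (fun i => ∫⁻ x in W, lipConst (us i) x ∂μ) atTop

/-- Total variation `V(f,A)` of `f` on an arbitrary set `A`:
infimum of `V(f,W)` over open `W ⊇ A`. -/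
def totVarSet {X : Type u} [PseudoMetricSpace X] [MeasurableSpace X]
    (μ : Measure X) (f : X → ℝ) (A : Set X) : ℝ≥0∞ :=
  ⨅ (W : Set X) (_ : IsOpen W) (_ : A ⊆ W), totVarOn μ f W

/-- `f` is of bounded variation: locally integrable and `V(f,X) < ∞`. -/
def IsBV {X : Type u} [MetricSpace X] [MeasurableSpace X]
    (μ : Measure X) (f : X → ℝ) : Prop :=
  LocallyIntegrable f μ ∧ totVarOn μ f Set.univ < ⊤

/-- `(X,d,μ)` supports a `1`-Poincaré inequality with constant `CP`. -/
def SupportsPoincare {X : Type u} [MetricSpace X] [MeasurableSpace X]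
    (μ : Measure X) (CP : ℝ) : Prop :=
  ∀ u : X → ℝ, LocallyLipschitzOnSet u Set.univ →
    ∀ g : X → ℝ, (∀ x, 0 ≤ g x) → Measurable g → IsUpperGradientOf g u →
      ∀ (x : X) (r : ℝ), 0 < r →
        (⨍ y in ball x r, |u y - (⨍ z in ball x r, u z ∂μ)| ∂μ) ≤
          CP * r * (⨍ y in ball x r, g y ∂μ)

/-- Standing assumptions: a complete geodesic metric measure space with at least two
points, whose measure is doubling and supports a 1-Poincaré inequality. -/
def GoodSpace (X : Type u) [MetricSpace X] [MeasurableSpace X]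
    (μ : Measure X) (Cd : ℝ≥0) (CP : ℝ) : Prop :=
  Nontrivial X ∧ CompleteSpace X ∧ IsGeodesic X ∧
    IsDoublingWith μ Cd ∧ SupportsPoincare μ CP

/-- The codimension-1 Hausdorff measure
`𝓗(A) = sup_{δ>0} inf { Σ μ(B_i)/r_i : 0 < r_i ≤ δ, A ⊆ ⋃ B_i }`,
the infimum over countable coverings of `A` by balls (balls of nonpositive radius
are empty and contribute `0`). -/
def codimOneH {X : Type u} [PseudoMetricSpace X] [MeasurableSpace X]
    (μ : Measure X) (A : Set X) : ℝ≥0∞ :=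
  ⨆ (δ : ℝ) (_ : 0 < δ),
    ⨅ (c : ℕ → X) (r : ℕ → ℝ) (_ : ∀ i, r i ≤ δ)
      (_ : A ⊆ ⋃ i, ball (c i) (r i)),
      ∑' i, if 0 < r i then μ (ball (c i) (r i)) / ENNReal.ofReal (r i) else 0

/-- The measure theoretic boundary `∂*E`. -/
def measBdry {X : Type u} [PseudoMetricSpace X] [MeasurableSpace X]
    (μ : Measure X) (E : Set X) : Set X :=
  {x : X |
    0 < Filter.limsup (fun r : ℝ => μ (E ∩ ball x r) / μ (ball x r)) (𝓝[>] (0:ℝ)) ∧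
    0 < Filter.limsup (fun r : ℝ => μ (Eᶜ ∩ ball x r) / μ (ball x r)) (𝓝[>] (0:ℝ))}

/-- `A` has density `0` at `x`. -/
def DensityZeroAt {X : Type u} [PseudoMetricSpace X] [MeasurableSpace X]
    (μ : Measure X) (A : Set X) (x : X) : Prop :=
  Tendsto (fun r : ℝ => μ (A ∩ ball x r) / μ (ball x r)) (𝓝[>] (0:ℝ)) (𝓝 0)

/-- `A` has density `1` at `x`. -/
def DensityOneAt {X : Type u} [PseudoMetricSpace X] [MeasurableSpace X]
    (μ : Measure X) (A : Set X) (x : X) : Prop :=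
  Tendsto (fun r : ℝ => μ (A ∩ ball x r) / μ (ball x r)) (𝓝[>] (0:ℝ)) (𝓝 1)

/-- `x` is a Lebesgue point of `u`. -/
def LebesguePointOf {X : Type u} [MetricSpace X] [MeasurableSpace X]
    (μ : Measure X) (u : X → ℝ) (x : X) : Prop :=
  Tendsto (fun r : ℝ => ⨍ y in ball x r, |u y - u x| ∂μ) (𝓝[>] (0:ℝ)) (𝓝 0)

/-- `u` is a Borel representative whose value at each Lebesgue point equals the limit
of its ball averages. -/
def PreciseRep {X : Type u} [MetricSpace X] [MeasurableSpace X]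
    (μ : Measure X) (u : X → ℝ) : Prop :=
  Measurable u ∧ ∀ (x : X) (c : ℝ),
    Tendsto (fun r : ℝ => ⨍ y in ball x r, u y ∂μ) (𝓝[>] (0:ℝ)) (𝓝 c) → u x = c

/-- The restricted maximal function `M_R ν (x) = sup_{0<r≤R} ν(B(x,r))/μ(B(x,r))`. -/
def restrMaximal {X : Type u} [PseudoMetricSpace X] [MeasurableSpace X]
    (μ ν : Measure X) (R : ℝ) (x : X) : ℝ≥0∞ :=
  ⨆ (r : ℝ) (_ : 0 < r) (_ : r ≤ R), ν (ball x r) / μ (ball x r)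

/-- `F_g(x,y)`: the infimum of `∫_γ g ds` over 1-Lipschitz curves `γ : [0,L] → Z`
joining `x` to `y` (the infimum over the empty set is `∞`). -/
def curveInf {Z : Type u} [PseudoMetricSpace Z] (g : Z → ℝ) (x y : Z) : ℝ≥0∞ :=
  ⨅ (L : ℝ) (_ : 0 ≤ L) (γ : ℝ → Z) (_ : LipschitzOnWith 1 γ (Icc 0 L))
    (_ : γ 0 = x) (_ : γ L = y),
    ∫⁻ t in Icc (0:ℝ) L, ENNReal.ofReal (g (γ t))

/-- Weak-star convergence of measures: test against continuous, compactly
supported functions. -/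
def WeakStar {Z : Type u} [MetricSpace Z] [MeasurableSpace Z]
    (ν : ℕ → Measure Z) (m : Measure Z) : Prop :=
  ∀ φ : Z → ℝ, Continuous φ → HasCompactSupport φ →
    Tendsto (fun n => ∫ x, φ x ∂(ν n)) atTop (𝓝 (∫ x, φ x ∂m))

/-- `φ ∈ BV_c(U)`: a BV function whose support is compact and contained in `U`. -/
def MemBVc {X : Type u} [MetricSpace X] [MeasurableSpace X]
    (μ : Measure X) (φ : X → ℝ) (U : Set X) : Prop :=
  IsBV μ φ ∧ IsCompact (tsupport φ) ∧ tsupport φ ⊆ U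

/-
Put `ν r = P(E, B(x, r))` and `m r = μ (B(x, r))`. A set `A` is `P(E, ·)`-null as soon as, around
each of its points, `E` can be modified in arbitrarily small balls so as to save a fixed proportion
of the perimeter of the six times larger ball, at an `L¹` cost of order `r * ν (6 * r)`: a Vitali
covering of `A` by such balls yields functions close to `χ_E` in `L¹` whose energy is smaller than
`P(E, X)` by a multiple of `P(E, A)`, against lower semicontinuity. Near a point where
`r * ν r / m r` stays between two positive constants the competitors of the theorem are of this
kind, after truncation to `[0, 1]`. Elsewhere one cuts off `E` or its complement near the ball, at a
scale where `ν` is doubling. If `r * ν r / m r` is large this costs less than it saves, as `m` is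
doubling. If it is small, the relative isoperimetric inequality leaves one of `E` and `Eᶜ` with so
little mass in the ball that removing it pays off.
-/

/-- `u` is Lipschitz in a neighbourhood of `x`: the pointwise form of `LocallyLipschitz`. -/
def LipschitzNear {X : Type*} [PseudoMetricSpace X] (u : X → ℝ) (x : X) : Prop :=
  ∃ K : ℝ≥0, ∃ t ∈ 𝓝 x, LipschitzOnWith K u t

section LipschitzNear

variable {X : Type*} [PseudoMetricSpace X] {f g h u : X → ℝ} {x : X} {W W' : Set X}

lemma LipschitzNear.of_abs_sub_le (hf : LipschitzNear f x) (hg : LipschitzNear g x)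
    (hfg : ∀ y z, |h y - h z| ≤ |f y - f z| + |g y - g z|) : LipschitzNear h x := by
  obtain ⟨K, s, hs, hfs⟩ := hf
  obtain ⟨L, t, ht, hgt⟩ := hg
  refine ⟨K + L, s ∩ t, inter_mem hs ht, LipschitzOnWith.of_dist_le_mul fun y hy z hz => ?_⟩
  rw [NNReal.coe_add, add_mul]
  exact (hfg y z).trans
    (add_le_add (hfs.dist_le_mul y hy.1 z hz.1) (hgt.dist_le_mul y hy.2 z hz.2))

lemma LipschitzNear.congr (hf : LipschitzNear f x) (hfg : f =ᶠ[𝓝 x] g) : LipschitzNear g x := by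
  obtain ⟨K, s, hs, hfs⟩ := hf
  exact ⟨K, s ∩ {y | f y = g y}, inter_mem hs hfg,
    LipschitzOnWith.of_dist_le_mul fun y hy z hz => by
      simpa only [← hy.2.out, ← hz.2.out] using hfs.dist_le_mul y hy.1 z hz.1⟩

lemma lipschitzNear_of_lipschitzWith {K : ℝ≥0} (hf : LipschitzWith K f) (x : X) :
    LipschitzNear f x :=
  ⟨K, univ, univ_mem, hf.lipschitzOnWith⟩

lemma lipschitzNear_const (c : ℝ) (x : X) : LipschitzNear (fun _ => c) x :=
  lipschitzNear_of_lipschitzWith (LipschitzWith.const c) x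

lemma LipschitzNear.max (hf : LipschitzNear f x) (hg : LipschitzNear g x) :
    LipschitzNear (fun y => max (f y) (g y)) x :=
  hf.of_abs_sub_le hg fun _ _ => (abs_max_sub_max_le_max _ _ _ _).trans
    (max_le_add_of_nonneg (abs_nonneg _) (abs_nonneg _))

lemma LipschitzNear.min (hf : LipschitzNear f x) (hg : LipschitzNear g x) :
    LipschitzNear (fun y => min (f y) (g y)) x :=
  hf.of_abs_sub_le hg fun _ _ => (abs_min_sub_min_le_max _ _ _ _).trans
    (max_le_add_of_nonneg (abs_nonneg _) (abs_nonneg _))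

lemma LipschitzNear.add (hf : LipschitzNear f x) (hg : LipschitzNear g x) :
    LipschitzNear (fun y => f y + g y) x :=
  hf.of_abs_sub_le hg fun y z => by
    rw [add_sub_add_comm]
    exact abs_add_le _ _

lemma LipschitzNear.sub (hf : LipschitzNear f x) (hg : LipschitzNear g x) :
    LipschitzNear (fun y => f y - g y) x :=
  hf.of_abs_sub_le hg fun y z => by
    rw [sub_sub_sub_comm]
    exact abs_sub _ _

lemma LipschitzNear.continuousAt (hf : LipschitzNear f x) : ContinuousAt f x := by
  obtain ⟨K, t, ht, hft⟩ := hf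
  exact hft.continuousOn.continuousAt ht

lemma LocallyLipschitzOnSet.lipschitzNear (h : LocallyLipschitzOnSet u W) (hW : IsOpen W)
    (hx : x ∈ W) : LipschitzNear u x := by
  obtain ⟨r, hr, hrW⟩ := nhds_basis_closedBall.mem_iff.1 (hW.mem_nhds hx)
  obtain ⟨L, hL⟩ := h (closedBall x r) isClosed_closedBall isBounded_closedBall hrW
  exact ⟨L, closedBall x r, closedBall_mem_nhds x hr, hL⟩

lemma LocallyLipschitzOnSet.of_lipschitzNear [ProperSpace X] (h : ∀ x ∈ W, LipschitzNear u x) :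
    LocallyLipschitzOnSet u W := by
  intro K hK hKb hKW
  have hKc : IsCompact K := isCompact_of_isClosed_isBounded hK hKb
  refine LocallyLipschitzOn.exists_lipschitzOnWith_of_compact hKc fun x hx => ?_
  obtain ⟨L, t, ht, hut⟩ := h x (hKW hx)
  exact ⟨L, t, mem_nhdsWithin_of_mem_nhds ht, hut⟩

lemma LocallyLipschitzOnSet.mono (h : LocallyLipschitzOnSet u W) (hW : W' ⊆ W) :
    LocallyLipschitzOnSet u W' :=
  fun K hK hKb hKW => h K hK hKb (hKW.trans hW)

end LipschitzNear

section LipConst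

variable {X : Type*} [PseudoMetricSpace X] {f g : X → ℝ} {x : X}

lemma eventually_forall_mem_ball {p : X → Prop} (h : ∀ᶠ y in 𝓝 x, p y) :
    ∀ᶠ r in 𝓝[>] (0 : ℝ), ∀ y ∈ ball x r, p y := by
  obtain ⟨s, hs, hp⟩ := eventually_nhds_iff_ball.1 h
  filter_upwards [Ioo_mem_nhdsGT hs] with r hr y hy
  exact hp y (ball_subset_ball hr.2.le hy)

lemma lipConst_le_add {C : ℝ}
    (h : ∀ᶠ r in 𝓝[>] (0 : ℝ), ∀ y ∈ ball x r, |f y - f x| ≤ |g y - g x| + C * r) :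
    lipConst f x ≤ lipConst g x + ENNReal.ofReal C := by
  unfold lipConst
  rw [← liminf_add_const (𝓝[>] (0 : ℝ)) _ _ (by isBoundedDefault) (by isBoundedDefault)]
  refine liminf_le_liminf ?_
  filter_upwards [h, self_mem_nhdsWithin] with r hr (hr0 : 0 < r)
  refine iSup₂_le fun y hy => ?_
  have hquot : |f y - f x| / r ≤ |g y - g x| / r + C := by
    simpa [add_div, hr0.ne'] using div_le_div_of_nonneg_right (hr y hy) hr0.le
  refine (ENNReal.ofReal_le_ofReal hquot).trans (ENNReal.ofReal_add_le.trans ?_)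
  gcongr
  exact le_iSup₂ (f := fun y (_ : y ∈ ball x r) => ENNReal.ofReal (|g y - g x| / r)) y hy

lemma lipConst_le_add_of_eventually {C : ℝ} (hC : 0 ≤ C)
    (h : ∀ᶠ y in 𝓝 x, |f y - f x| ≤ |g y - g x| + C * dist y x) :
    lipConst f x ≤ lipConst g x + ENNReal.ofReal C := by
  refine lipConst_le_add ?_
  filter_upwards [eventually_forall_mem_ball h] with r hr y hy
  refine (hr y hy).trans ?_
  gcongr
  exact (mem_ball.1 hy).le

lemma lipConst_le_of_eventually (h : ∀ᶠ y in 𝓝 x, |f y - f x| ≤ |g y - g x|) :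
    lipConst f x ≤ lipConst g x := by
  simpa using lipConst_le_add_of_eventually le_rfl (by simpa using h)

lemma lipConst_congr (h : f =ᶠ[𝓝 x] g) : lipConst f x = lipConst g x := by
  refine le_antisymm (lipConst_le_of_eventually ?_) (lipConst_le_of_eventually ?_) <;>
  · filter_upwards [h] with y hy
    rw [h.self_of_nhds, hy]

@[simp] lemma lipConst_const (c : ℝ) (x : X) : lipConst (fun _ => c) x = 0 := by
  simp [lipConst]

lemma lipConst_comp_le {φ : ℝ → ℝ} (hφ : LipschitzWith 1 φ) :
    lipConst (fun y => φ (f y)) x ≤ lipConst f x :=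
  lipConst_le_of_eventually <| Eventually.of_forall fun y => by
    simpa [Real.dist_eq] using hφ.dist_le_mul (f y) (f x)

lemma lipConst_le_of_lipschitzOnWith {K : ℝ≥0} {t : Set X} (ht : t ∈ 𝓝 x)
    (hf : LipschitzOnWith K f t) : lipConst f x ≤ K := by
  have h : lipConst f x ≤ lipConst (fun _ : X => (0 : ℝ)) x + ENNReal.ofReal K := by
    refine lipConst_le_add_of_eventually K.2 ?_
    filter_upwards [ht] with y hy
    simpa [Real.dist_eq] using hf.dist_le_mul y hy x (mem_of_mem_nhds ht)
  simpa using h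

lemma LipschitzNear.lipConst_lt_top (h : LipschitzNear f x) : lipConst f x < ⊤ := by
  obtain ⟨K, t, ht, hft⟩ := h
  exact (lipConst_le_of_lipschitzOnWith ht hft).trans_lt ENNReal.coe_lt_top

end LipConst

section LipConstMeasurable

lemma exists_rat_btwn_mul_ofReal_div_lt {c d : ℝ≥0∞} (hcd : c < d) {r : ℝ} (hr : 0 < r) :
    ∃ q : ℚ, 0 < (q : ℝ) ∧ (q : ℝ) < r ∧ c * ENNReal.ofReal (r / q) < d := by
  have hdiv : Tendsto (fun q : ℝ => r / q) (𝓝[<] r) (𝓝 1) := by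
    have h : Tendsto (fun q : ℝ => r / q) (𝓝 r) (𝓝 (r / r)) :=
      tendsto_const_nhds.div tendsto_id hr.ne'
    rw [div_self hr.ne'] at h
    exact h.mono_left nhdsWithin_le_nhds
  have hmul : Tendsto (fun q : ℝ => c * ENNReal.ofReal (r / q)) (𝓝[<] r) (𝓝 c) := by
    simpa using ENNReal.Tendsto.const_mul (ENNReal.tendsto_ofReal hdiv) (Or.inr hcd.ne_top)
  obtain ⟨a, ha, har⟩ := (mem_nhdsLT_iff_exists_Ioo_subset' hr).1
    ((hmul.eventually_lt_const hcd).and (Ioo_mem_nhdsLT hr))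
  obtain ⟨q, haq, hqr⟩ := exists_rat_btwn (show a < r from ha)
  have hq := har ⟨haq, hqr⟩
  exact ⟨q, hq.2.1, hqr, hq.1⟩

lemma liminf_nhdsGT_zero_eq_iSup_iInf_rat {G : ℝ → ℝ≥0∞}
    (hG : ∀ q r, 0 < q → q ≤ r → G q ≤ G r * ENNReal.ofReal (r / q)) :
    liminf G (𝓝[>] (0 : ℝ)) =
      ⨆ n : ℕ, ⨅ q : {q : ℚ // (q : ℝ) ∈ Ioo (0 : ℝ) (1 / (n + 1))}, G (q : ℚ) := by
  have hbasis : (𝓝[>] (0 : ℝ)).HasBasis (fun _ : ℕ => True)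
      (fun n => Ioo (0 : ℝ) (1 / (n + 1))) := by
    refine (nhdsGT_basis (0 : ℝ)).to_hasBasis (fun i hi => ?_)
      fun n _ => ⟨1 / (n + 1), by positivity, subset_rfl⟩
    obtain ⟨n, hn⟩ := exists_nat_one_div_lt hi
    exact ⟨n, trivial, Ioo_subset_Ioo_right hn.le⟩
  rw [hbasis.liminf_eq_iSup_iInf]
  simp only [iSup_pos]
  refine iSup_congr fun n => le_antisymm (le_iInf fun q => iInf₂_le (q : ℝ) q.2) ?_
  refine le_iInf₂ fun r hr => le_of_forall_gt fun d hd => ?_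
  obtain ⟨q, hq0, hqr, hqd⟩ := exists_rat_btwn_mul_ofReal_div_lt hd hr.1
  calc ⨅ q : {q : ℚ // (q : ℝ) ∈ Ioo (0 : ℝ) (1 / (n + 1))}, G (q : ℚ)
      ≤ G q := iInf_le_of_le ⟨q, hq0, hqr.trans hr.2⟩ le_rfl
    _ ≤ G r * ENNReal.ofReal (r / q) := hG q r hq0 hqr.le
    _ < d := hqd

variable {X : Type*} [PseudoMetricSpace X] {f : X → ℝ} {W : Set X}

lemma lipConst_eq_iSup_iInf_rat {x : X} (hW : W ∈ 𝓝 x) :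
    lipConst f x = ⨆ n : ℕ, ⨅ q : {q : ℚ // (q : ℝ) ∈ Ioo (0 : ℝ) (1 / (n + 1))},
      ⨆ y ∈ ball x (q : ℚ) ∩ W, ENNReal.ofReal (|f y - f x| / (q : ℚ)) := by
  rw [← liminf_nhdsGT_zero_eq_iSup_iInf_rat
    (G := fun r => ⨆ y ∈ ball x r ∩ W, ENNReal.ofReal (|f y - f x| / r))]
  · refine liminf_congr ?_
    filter_upwards [eventually_forall_mem_ball (eventually_mem_set.2 hW)] with r hr
    rw [inter_eq_self_of_subset_left hr]
  · refine fun q r hq hqr => iSup₂_le fun y hy => ?_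
    have hr : 0 < r := hq.trans_le hqr
    calc ENNReal.ofReal (|f y - f x| / q)
        = ENNReal.ofReal (|f y - f x| / r) * ENNReal.ofReal (r / q) := by
          rw [← ENNReal.ofReal_mul (by positivity), div_mul_div_cancel₀ hr.ne']
      _ ≤ _ := by
          gcongr
          exact le_iSup₂ (f := fun y (_ : y ∈ ball x r ∩ W) => ENNReal.ofReal (|f y - f x| / r))
            y ⟨ball_subset_ball hqr hy.1, hy.2⟩

variable [MeasurableSpace X] [BorelSpace X]

lemma measurable_indicator_iSup_ball_ofReal_abs_sub_div (hW : IsOpen W) (hf : ContinuousOn f W)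
    (r : ℝ) : Measurable
      (W.indicator fun x => ⨆ y ∈ ball x r ∩ W, ENNReal.ofReal (|f y - f x| / r)) := by
  refine measurable_of_Ioi fun c => IsOpen.measurableSet ?_
  have hpre : W.indicator (fun x => ⨆ y ∈ ball x r ∩ W, ENNReal.ofReal (|f y - f x| / r)) ⁻¹' Ioi c
      = ⋃ y ∈ W, (ball y r ∩ (W ∩ f ⁻¹' {t | c < ENNReal.ofReal (|f y - t| / r)})) := by
    ext x
    by_cases hx : x ∈ W
    · simp [hx, lt_iSup_iff, dist_comm, and_comm]
    · simp [hx]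
  rw [hpre]
  refine isOpen_biUnion fun y _ => isOpen_ball.inter (hf.isOpen_inter_preimage hW
    (isOpen_lt continuous_const ?_))
  exact ENNReal.continuous_ofReal.comp (by fun_prop)

lemma measurable_indicator_lipConst (hW : IsOpen W) (hf : ContinuousOn f W) :
    Measurable (W.indicator (lipConst f)) := by
  have hrep : W.indicator (lipConst f) = W.indicator fun x =>
      ⨆ n : ℕ, ⨅ q : {q : ℚ // (q : ℝ) ∈ Ioo (0 : ℝ) (1 / (n + 1))}, W.indicator
        (fun x => ⨆ y ∈ ball x (q : ℚ) ∩ W, ENNReal.ofReal (|f y - f x| / (q : ℚ))) x :=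
    indicator_congr fun x hx => by
      rw [lipConst_eq_iSup_iInf_rat (hW.mem_nhds hx)]
      simp only [indicator_of_mem hx]
  rw [hrep]
  exact (Measurable.iSup fun n => Measurable.iInf fun q =>
    measurable_indicator_iSup_ball_ofReal_abs_sub_div hW hf _).indicator hW.measurableSet

lemma measurable_lipConst (hf : Continuous f) : Measurable (lipConst f) := by
  simpa using measurable_indicator_lipConst isOpen_univ hf.continuousOn

lemma aemeasurable_lipConst {μ : Measure X} (hW : IsOpen W) (hf : ContinuousOn f W) :
    AEMeasurable (lipConst f) (μ.restrict W) :=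
  (aemeasurable_indicator_iff hW.measurableSet).1 (measurable_indicator_lipConst hW hf).aemeasurable

end LipConstMeasurable

section Contact

variable {X : Type*} [PseudoMetricSpace X] {f g : X → ℝ} {x : X} {W S : Set X}

lemma lipConst_le_of_forall_exists_mem_eq (hfg : LipschitzNear (fun y => f y - g y) x)
    (hS : ∀ z ∈ S, f z = g z) (hx : x ∈ S)
    (hdense : ∀ n : ℕ, ∀ᶠ r in 𝓝[>] (0 : ℝ), ∀ y ∈ ball x r,
      ∃ z ∈ S, dist z y ≤ 1 / ((n : ℝ) + 1) * r) :
    lipConst f x ≤ lipConst g x := by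
  obtain ⟨L, t, ht, hL⟩ := hfg
  obtain ⟨r, hr, hrt⟩ := Metric.mem_nhds_iff.1 ht
  have happrox (n : ℕ) :
      lipConst f x ≤ lipConst g x + ENNReal.ofReal (L * (1 / ((n : ℝ) + 1))) := by
    refine lipConst_le_add ?_
    filter_upwards [hdense n, Ioo_mem_nhdsGT (half_pos hr)] with s hs hsr y hy
    obtain ⟨z, hzS, hzy⟩ := hs y hy
    have hyx : dist y x < s := hy
    have hzx : dist z x < r := by
      have hn : (1 : ℝ) / (n + 1) * s ≤ s :=
        mul_le_of_le_one_left hsr.1.le (div_le_one_of_le₀ (by simp) (by positivity))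
      linarith [dist_triangle z y x, hsr.2]
    have hdiff : |f y - g y| ≤ L * (1 / ((n : ℝ) + 1) * s) := by
      have h := hL.dist_le_mul y (hrt (mem_ball.2 (by linarith [hsr.2]))) z (hrt hzx)
      simp only [Real.dist_eq, sub_eq_zero.2 (hS z hzS), sub_zero, dist_comm y z] at h
      exact h.trans (by gcongr)
    calc |f y - f x| = |(g y - g x) + (f y - g y)| := by rw [hS x hx]; congr 1; ring
      _ ≤ |g y - g x| + |f y - g y| := abs_add_le _ _
      _ ≤ |g y - g x| + L * (1 / ((n : ℝ) + 1)) * s := by rw [mul_assoc]; gcongr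
  have hlim : Tendsto (fun n : ℕ => lipConst g x + ENNReal.ofReal (L * (1 / ((n : ℝ) + 1)))) atTop
      (𝓝 (lipConst g x)) := by
    simpa using tendsto_const_nhds.add (ENNReal.tendsto_ofReal
      (tendsto_one_div_add_atTop_nhds_zero_nat.const_mul (L : ℝ)))
  exact ge_of_tendsto' hlim happrox

variable [MeasurableSpace X] [BorelSpace X]

lemma measurableSet_contact (hW : IsOpen W) (hf : ContinuousOn f W) (hg : ContinuousOn g W) :
    MeasurableSet {x ∈ W | f x = g x} := by
  have hne : MeasurableSet (W ∩ (fun x => f x - g x) ⁻¹' {0}ᶜ) :=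
    ((hf.sub hg).isOpen_inter_preimage hW isOpen_compl_singleton).measurableSet
  convert hW.measurableSet.diff hne using 1
  ext x
  simp only [mem_ofPred_eq, Set.mem_sdiff, mem_inter_iff, mem_preimage, mem_compl_iff,
    mem_singleton_iff, sub_eq_zero]
  tauto

variable {μ : Measure X} [SecondCountableTopology X] [IsLocallyFiniteMeasure μ]
  [IsUnifLocDoublingMeasure μ]

lemma ae_eventually_forall_ball_exists_dist_le (hS : MeasurableSet S) {ε : ℝ} (hε : 0 < ε) :
    ∀ᵐ x ∂μ, x ∈ S → ∀ᶠ r in 𝓝[>] (0 : ℝ), ∀ y ∈ ball x r, ∃ z ∈ S, dist z y ≤ ε * r := by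
  have hdensity := IsUnifLocDoublingMeasure.ae_tendsto_measure_inter_div μ S ε⁻¹
  rw [ae_restrict_iff' hS] at hdensity
  filter_upwards [hdensity] with x hx hxS
  by_contra hcon
  let IsHole (r : ℝ) (y : X) : Prop := y ∈ ball x r ∧ ∀ z ∈ S, ¬dist z y ≤ ε * r
  have hhole : ∃ᶠ r in 𝓝[>] (0 : ℝ), ∃ y, IsHole r y := by
    simpa only [not_eventually, not_forall, not_exists, not_and, exists_prop] using hcon
  classical
  let w (r : ℝ) : X := if h : ∃ y, IsHole r y then h.choose else x
  have hw {r : ℝ} (h : ∃ y, IsHole r y) : IsHole r (w r) := by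
    simpa only [w, dif_pos h] using h.choose_spec
  have hwx {r : ℝ} (hr : 0 < r) : x ∈ closedBall (w r) r := by
    by_cases h : ∃ y, IsHole r y
    · exact mem_closedBall'.2 (mem_ball.1 (hw h).1).le
    · simpa only [w, dif_neg h] using mem_closedBall_self hr.le
  have hradius : Tendsto (fun r : ℝ => ε * r) (𝓝[>] 0) (𝓝[>] 0) := by
    refine tendsto_nhdsWithin_iff.2 ⟨?_, ?_⟩
    · simpa using (tendsto_id.const_mul ε).mono_left (nhdsWithin_le_nhds (a := (0 : ℝ)))
    · filter_upwards [self_mem_nhdsWithin] with r hr using mul_pos hε hr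
  have hone := hx hxS w (fun r => ε * r) hradius <| by
    filter_upwards [self_mem_nhdsWithin] with r hr
    rw [inv_mul_cancel_left₀ hε.ne']
    exact hwx hr
  obtain ⟨r, hr, hne⟩ := (hhole.and_eventually (hone.eventually_ne one_ne_zero)).exists
  have hempty : S ∩ closedBall (w r) (ε * r) = ∅ :=
    eq_empty_of_forall_notMem fun z hz => (hw hr).2 z hz.1 hz.2
  exact hne (by rw [hempty, measure_empty, ENNReal.zero_div])

lemma ae_lipConst_le_of_eq (hW : IsOpen W) (hf : ∀ x ∈ W, LipschitzNear f x)
    (hg : ∀ x ∈ W, LipschitzNear g x) :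
    ∀ᵐ x ∂μ, x ∈ W → f x = g x → lipConst f x ≤ lipConst g x := by
  have hS : MeasurableSet {x ∈ W | f x = g x} := measurableSet_contact hW
    (fun x hx => (hf x hx).continuousAt.continuousWithinAt)
    (fun x hx => (hg x hx).continuousAt.continuousWithinAt)
  have hdense : ∀ᵐ x ∂μ, ∀ n : ℕ, x ∈ {x ∈ W | f x = g x} → ∀ᶠ r in 𝓝[>] (0 : ℝ),
      ∀ y ∈ ball x r, ∃ z ∈ {x ∈ W | f x = g x}, dist z y ≤ 1 / ((n : ℝ) + 1) * r :=
    ae_all_iff.2 fun n => ae_eventually_forall_ball_exists_dist_le hS (by positivity)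
  filter_upwards [hdense] with x hx hxW hfg
  exact lipConst_le_of_forall_exists_mem_eq ((hf x hxW).sub (hg x hxW)) (fun z hz => hz.2)
    (show x ∈ {x ∈ W | f x = g x} from ⟨hxW, hfg⟩) fun n => hx n ⟨hxW, hfg⟩

lemma ae_lipConst_eq_of_eq (hW : IsOpen W) (hf : ∀ x ∈ W, LipschitzNear f x)
    (hg : ∀ x ∈ W, LipschitzNear g x) :
    ∀ᵐ x ∂μ, x ∈ W → f x = g x → lipConst f x = lipConst g x := by
  filter_upwards [ae_lipConst_le_of_eq (μ := μ) hW hf hg, ae_lipConst_le_of_eq (μ := μ) hW hg hf]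
    with x hfg hgf hx he
  exact le_antisymm (hfg hx he) (hgf hx he.symm)

end Contact

section TotalVariation

section Exhaustion

variable {X : Type*} [TopologicalSpace X]

lemma exists_compact_exhaustion [LocallyCompactSpace X] [SecondCountableTopology X] {W : Set X}
    (hW : IsOpen W) :
    ∃ P : ℕ → Set X, (∀ n, IsCompact (P n)) ∧ (∀ n, P n ⊆ interior (P (n + 1))) ∧
      (∀ n, P n ⊆ W) ∧ ∀ K, IsCompact K → K ⊆ W → ∃ n, K ⊆ P n := by
  have : LocallyCompactSpace W := hW.locallyCompactSpace
  let Q : CompactExhaustion W := CompactExhaustion.choice W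
  refine ⟨fun n => Subtype.val '' Q n, fun n => (Q.isCompact n).image continuous_subtype_val,
    fun n => ?_, fun n => Subtype.coe_image_subset W (Q n), fun K hK hKW => ?_⟩
  · exact (image_mono (Q.subset_interior_succ n)).trans (interior_maximal
      (image_mono interior_subset) (hW.isOpenEmbedding_subtypeVal.isOpenMap _ isOpen_interior))
  · have hK' : IsCompact ((Subtype.val : W → X) ⁻¹' K) := by
      rwa [Topology.IsEmbedding.subtypeVal.isCompact_iff, Subtype.image_preimage_coe,
        inter_eq_self_of_subset_right hKW]
    obtain ⟨n, hn⟩ := Q.exists_superset_of_isCompact hK'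
    exact ⟨n, fun x hx => ⟨⟨x, hKW hx⟩, hn hx, rfl⟩⟩

lemma monotone_of_subset_interior_succ {P : ℕ → Set X} (hP : ∀ n, P n ⊆ interior (P (n + 1))) :
    Monotone P :=
  monotone_nat_of_le_succ fun n => (hP n).trans interior_subset

end Exhaustion

lemma lintegral_ofReal_abs_sub_le_add {X : Type*} [MeasurableSpace X] {f g h : X → ℝ}
    {ν : Measure X} (hf : AEMeasurable f ν) (hg : AEMeasurable g ν) :
    ∫⁻ x, ENNReal.ofReal |f x - h x| ∂ν ≤
      ∫⁻ x, ENNReal.ofReal |f x - g x| ∂ν + ∫⁻ x, ENNReal.ofReal |g x - h x| ∂ν := by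
  rw [← lintegral_add_left' (by fun_prop)]
  refine lintegral_mono fun x => ?_
  rw [← ENNReal.ofReal_add (abs_nonneg _) (abs_nonneg _)]
  exact ENNReal.ofReal_le_ofReal (abs_sub_le _ _ _)

lemma sum_restrict_le_smul_restrict {X ι : Type*} [MeasurableSpace X] {μ : Measure X}
    {F : Finset ι} {A : ι → Set X} {W : Set X} {c : ℝ≥0∞} (hA : ∀ k ∈ F, MeasurableSet (A k))
    (hAW : ∀ k ∈ F, A k ⊆ W) (hc : ∀ x, ∑ k ∈ F, (A k).indicator (fun _ => 1) x ≤ c) :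
    ∑ k ∈ F, μ.restrict (A k) ≤ c • μ.restrict W := by
  refine Measure.le_iff.2 fun s hs => ?_
  have hrestrict : ∀ k ∈ F, μ.restrict (A k) s = ∫⁻ x in s ∩ W, (A k).indicator (fun _ => 1) x ∂μ :=
    fun k hk => by
      rw [lintegral_indicator (hA k hk), setLIntegral_const, one_mul, Measure.restrict_apply hs,
        Measure.restrict_apply (hA k hk), inter_comm s W, ← inter_assoc,
        inter_eq_self_of_subset_left (hAW k hk), inter_comm]
  rw [Measure.coe_finsetSum, Finset.sum_apply, Measure.smul_apply, smul_eq_mul,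
    Finset.sum_congr rfl hrestrict,
    ← lintegral_finsetSum' _ fun k hk => (measurable_const.indicator (hA k hk)).aemeasurable]
  refine (lintegral_mono hc).trans ?_
  rw [setLIntegral_const, Measure.restrict_apply hs]

lemma liminf_add_liminf_le (u v : ℕ → ℝ≥0∞) :
    liminf u atTop + liminf v atTop ≤ liminf (fun i => u i + v i) atTop := by
  simp only [liminf_eq_iSup_iInf_of_nat]
  rw [ENNReal.iSup_add_iSup_of_monotone
    (fun a b hab => le_iInf₂ fun i hi => iInf₂_le i (hab.trans hi))
    (fun a b hab => le_iInf₂ fun i hi => iInf₂_le i (hab.trans hi))]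
  exact iSup_mono fun n => le_iInf₂ fun i hi => add_le_add (iInf₂_le i hi) (iInf₂_le i hi)

lemma sum_liminf_le_liminf_sum {ι : Type*} (F : Finset ι) (u : ι → ℕ → ℝ≥0∞) :
    ∑ k ∈ F, liminf (u k) atTop ≤ liminf (fun i => ∑ k ∈ F, u k i) atTop := by
  classical
  induction F using Finset.induction_on with
  | empty => simp
  | insert a s ha ih =>
    simp_rw [Finset.sum_insert ha]
    exact (add_le_add_right ih _).trans (liminf_add_liminf_le _ _)

lemma LocallyLipschitzOnSet.comp {X : Type*} [PseudoMetricSpace X] {f : X → ℝ} {W : Set X}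
    {φ : ℝ → ℝ} (hf : LocallyLipschitzOnSet f W) (hφ : LipschitzWith 1 φ) :
    LocallyLipschitzOnSet (fun x => φ (f x)) W := fun K hK hKb hKW => by
  obtain ⟨L, hL⟩ := hf K hK hKb hKW
  exact ⟨1 * L, hφ.comp_lipschitzOnWith hL⟩

section PseudoMetric

variable {X : Type*} [PseudoMetricSpace X] [MeasurableSpace X] {μ : Measure X} {f : X → ℝ}
  {W : Set X}

lemma TendstoL1loc.mono {us : ℕ → X → ℝ} {W' : Set X} (h : TendstoL1loc μ us f W)
    (hW : W' ⊆ W) : TendstoL1loc μ us f W' :=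
  fun K hK hKb hKW => h K hK hKb (hKW.trans hW)

lemma TendstoL1loc.comp {us : ℕ → X → ℝ} {φ : ℝ → ℝ} (h : TendstoL1loc μ us f W)
    (hφ : LipschitzWith 1 φ) :
    TendstoL1loc μ (fun i x => φ (us i x)) (fun x => φ (f x)) W := fun K hK hKb hKW =>
  tendsto_of_tendsto_of_tendsto_of_le_of_le tendsto_const_nhds (h K hK hKb hKW)
    (fun _ => bot_le) fun i => lintegral_mono fun x => ENNReal.ofReal_le_ofReal <| by
      simpa [Real.dist_eq] using hφ.dist_le_mul (us i x) (f x)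

lemma TendstoL1loc.min_right {us : ℕ → X → ℝ} (h : TendstoL1loc μ us f W) (g : X → ℝ) :
    TendstoL1loc μ (fun i x => min (us i x) (g x)) (fun x => min (f x) (g x)) W :=
  fun K hK hKb hKW => tendsto_of_tendsto_of_tendsto_of_le_of_le tendsto_const_nhds
    (h K hK hKb hKW) (fun _ => bot_le) fun i => lintegral_mono fun x =>
      ENNReal.ofReal_le_ofReal ((abs_min_sub_min_le_max _ _ _ _).trans (by simp))

lemma totVarOn_mono {W' : Set X} (h : W' ⊆ W) : totVarOn μ f W' ≤ totVarOn μ f W :=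
  le_iInf fun us => le_iInf₂ fun hus hlim =>
    (iInf_le_of_le us (iInf₂_le_of_le (fun i => (hus i).mono h) (hlim.mono h) le_rfl)).trans
      (liminf_le_liminf (Eventually.of_forall fun _ => lintegral_mono_set h))

lemma totVarOn_le_liminf {us : ℕ → X → ℝ} (hus : ∀ i, LocallyLipschitzOnSet (us i) W)
    (hlim : TendstoL1loc μ us f W) :
    totVarOn μ f W ≤ liminf (fun i => ∫⁻ x in W, lipConst (us i) x ∂μ) atTop :=
  iInf_le_of_le us (iInf₂_le_of_le hus hlim le_rfl)

@[simp]
lemma totVarOn_empty (f : X → ℝ) : totVarOn μ f ∅ = 0 := by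
  refine le_antisymm ((totVarOn_le_liminf (us := fun _ _ => 0)
    (fun _ K _ _ h => ⟨0, ?_⟩) fun K _ _ h => ?_).trans ?_) bot_le
  · rw [subset_empty_iff.1 h]; exact fun x hx => hx.elim
  · simp [subset_empty_iff.1 h]
  · simp

lemma exists_approx_of_totVarOn_lt {K : Set X} {c ε : ℝ≥0∞} (h : totVarOn μ f W < c)
    (hK : IsClosed K) (hKb : Bornology.IsBounded K) (hKW : K ⊆ W) (hε : 0 < ε) :
    ∃ g : X → ℝ, LocallyLipschitzOnSet g W ∧ ∫⁻ x in K, ENNReal.ofReal |g x - f x| ∂μ < ε ∧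
      ∫⁻ x in W, lipConst g x ∂μ < c := by
  simp only [totVarOn, iInf_lt_iff] at h
  obtain ⟨us, hus, hlim, henergy⟩ := h
  obtain ⟨i, hi, hi'⟩ := ((frequently_lt_of_liminf_lt (by isBoundedDefault) henergy).and_eventually
    ((hlim K hK hKb hKW).eventually_lt_const hε)).exists
  exact ⟨us i, hus i, hi', hi⟩

lemma totVarOn_comp_le {φ : ℝ → ℝ} (hφ : LipschitzWith 1 φ) :
    totVarOn μ (fun x => φ (f x)) W ≤ totVarOn μ f W :=
  le_iInf fun _ => le_iInf₂ fun hus hlim =>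
    (totVarOn_le_liminf (fun i => (hus i).comp hφ) (hlim.comp hφ)).trans
      (liminf_le_liminf (Eventually.of_forall fun _ => lintegral_mono fun _ =>
        lipConst_comp_le hφ))

lemma totVarOn_one_sub (f : X → ℝ) (W : Set X) :
    totVarOn μ (fun x => 1 - f x) W = totVarOn μ f W := by
  have hφ : LipschitzWith 1 fun t : ℝ => 1 - t :=
    LipschitzWith.of_dist_le_mul fun s t => by
      rw [Real.dist_eq, Real.dist_eq, NNReal.coe_one, one_mul, sub_sub_sub_cancel_left,
        abs_sub_comm]
  refine le_antisymm (totVarOn_comp_le hφ) ?_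
  simpa using totVarOn_comp_le (μ := μ) (f := fun x => 1 - f x) (W := W) hφ

lemma totVarSet_mono {A B : Set X} (h : A ⊆ B) : totVarSet μ f A ≤ totVarSet μ f B :=
  le_iInf fun W => le_iInf₂ fun hW hBW => iInf_le_of_le W (iInf₂_le hW (h.trans hBW))

section Borel

variable [BorelSpace X]

lemma totVarOn_congr {g : X → ℝ} (h : EqOn f g W) : totVarOn μ f W = totVarOn μ g W := by
  have htendsto : ∀ us, TendstoL1loc μ us f W ↔ TendstoL1loc μ us g W := fun us => by
    refine forall₂_congr fun K hK => forall₂_congr fun _ hKW => ?_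
    have hint : ∀ i, ∫⁻ x in K, ENNReal.ofReal |us i x - f x| ∂μ
        = ∫⁻ x in K, ENNReal.ofReal |us i x - g x| ∂μ := fun i =>
      setLIntegral_congr_fun hK.measurableSet fun x hx => by rw [h (hKW hx)]
    simp only [hint]
  simp only [totVarOn, htendsto]

lemma totVarOn_indicator_compl (E W : Set X) :
    totVarOn μ (Eᶜ.indicator fun _ => (1 : ℝ)) W = totVarOn μ (E.indicator fun _ => (1 : ℝ)) W := by
  rw [← totVarOn_one_sub]
  refine totVarOn_congr fun x _ => ?_
  by_cases hx : x ∈ E <;> simp [hx]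

lemma LocallyLipschitzOnSet.aemeasurable (hf : LocallyLipschitzOnSet f W) (hW : IsOpen W) :
    AEMeasurable f (μ.restrict W) :=
  ContinuousOn.aemeasurable
    (fun _ hx => (hf.lipschitzNear hW hx).continuousAt.continuousWithinAt) hW.measurableSet

end Borel

end PseudoMetric

variable {X : Type*} [MetricSpace X] [ProperSpace X] [MeasurableSpace X] {μ : Measure X}
  {f : X → ℝ} {W : Set X}

lemma exists_seq_of_approx (hW : IsOpen W) {c : ℝ≥0∞} {p : (X → ℝ) → Prop}
    (h : ∀ K, IsCompact K → K ⊆ W → ∀ ε : ℝ≥0∞, 0 < ε → ∃ g : X → ℝ, p g ∧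
      ∫⁻ x in K, ENNReal.ofReal |g x - f x| ∂μ ≤ ε ∧ ∫⁻ x in W, lipConst g x ∂μ ≤ c + ε) :
    ∃ us : ℕ → X → ℝ, (∀ i, p (us i)) ∧ TendstoL1loc μ us f W ∧
      limsup (fun i => ∫⁻ x in W, lipConst (us i) x ∂μ) atTop ≤ c := by
  obtain ⟨P, hPc, hPint, hPW, hPK⟩ := exists_compact_exhaustion hW
  have htendsto : Tendsto (fun n : ℕ => ((n : ℝ≥0∞) + 1)⁻¹) atTop (𝓝 0) := by
    simpa using (tendsto_add_atTop_iff_nat 1).2 ENNReal.tendsto_inv_nat_nhds_zero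
  choose us hp hL1 henergy using fun n : ℕ =>
    h (P n) (hPc n) (hPW n) ((n : ℝ≥0∞) + 1)⁻¹ (by simp)
  refine ⟨us, hp, fun K hK hKb hKW => ?_,
    (limsup_le_limsup (Eventually.of_forall henergy)).trans ?_⟩
  · obtain ⟨n, hn⟩ := hPK K (Metric.isCompact_of_isClosed_isBounded hK hKb) hKW
    refine tendsto_of_tendsto_of_tendsto_of_le_of_le' tendsto_const_nhds htendsto
      (Eventually.of_forall fun _ => bot_le) ?_
    filter_upwards [eventually_ge_atTop n] with i hi
    exact (lintegral_mono_set
      (hn.trans (monotone_of_subset_interior_succ hPint hi))).trans (hL1 i)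
  · simpa using (tendsto_const_nhds.add htendsto).limsup_eq.le

lemma totVarOn_le_of_approx (hW : IsOpen W) {c : ℝ≥0∞}
    (h : ∀ K, IsCompact K → K ⊆ W → ∀ ε : ℝ≥0∞, 0 < ε → ∃ g : X → ℝ,
      LocallyLipschitzOnSet g W ∧
      ∫⁻ x in K, ENNReal.ofReal |g x - f x| ∂μ ≤ ε ∧ ∫⁻ x in W, lipConst g x ∂μ ≤ c + ε) :
    totVarOn μ f W ≤ c := by
  obtain ⟨us, hus, hlim, henergy⟩ := exists_seq_of_approx hW h
  exact (totVarOn_le_liminf hus hlim).trans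
    ((liminf_le_limsup (by isBoundedDefault) (by isBoundedDefault)).trans henergy)

lemma exists_optimal_seq (hW : IsOpen W) (h : totVarOn μ f W < ⊤) :
    ∃ us : ℕ → X → ℝ, (∀ i, LocallyLipschitzOnSet (us i) W) ∧ TendstoL1loc μ us f W ∧
      Tendsto (fun i => ∫⁻ x in W, lipConst (us i) x ∂μ) atTop (𝓝 (totVarOn μ f W)) := by
  obtain ⟨us, hus, hlim, henergy⟩ := exists_seq_of_approx (f := f) (μ := μ) hW
    (c := totVarOn μ f W) (p := fun g => LocallyLipschitzOnSet g W) fun K hK hKW ε hε => by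
      obtain ⟨g, hg, hgL1, hgenergy⟩ := exists_approx_of_totVarOn_lt
        (ENNReal.lt_add_right h.ne hε.ne') hK.isClosed hK.isBounded hKW hε
      exact ⟨g, hg, hgL1.le, hgenergy.le⟩
  exact ⟨us, hus, hlim,
    tendsto_of_le_liminf_of_limsup_le (totVarOn_le_liminf hus hlim) henergy⟩

lemma exists_optimal_seq_mem_Icc (hW : IsOpen W) (h : totVarOn μ f W < ⊤)
    (hf : ∀ x, f x ∈ Icc (0 : ℝ) 1) :
    ∃ us : ℕ → X → ℝ, (∀ i, LocallyLipschitzOnSet (us i) W) ∧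
      (∀ i x, us i x ∈ Icc (0 : ℝ) 1) ∧ TendstoL1loc μ us f W ∧
      Tendsto (fun i => ∫⁻ x in W, lipConst (us i) x ∂μ) atTop (𝓝 (totVarOn μ f W)) := by
  obtain ⟨us, hus, hlim, henergy⟩ := exists_optimal_seq hW h
  let φ : ℝ → ℝ := fun t => projIcc (0 : ℝ) 1 zero_le_one t
  have hφ : LipschitzWith 1 φ := LipschitzWith.projIcc zero_le_one
  have hφf : (fun x => φ (f x)) = f :=
    funext fun x => congrArg Subtype.val (projIcc_of_mem zero_le_one (hf x))
  have hlim' : TendstoL1loc μ (fun i x => φ (us i x)) f W := hφf ▸ hlim.comp hφ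
  refine ⟨fun i x => φ (us i x), fun i => (hus i).comp hφ, fun i x => Subtype.coe_prop _, hlim', ?_⟩
  refine tendsto_of_le_liminf_of_limsup_le
    (totVarOn_le_liminf (fun i => (hus i).comp hφ) hlim') ?_
  rw [← henergy.limsup_eq]
  exact limsup_le_limsup (Eventually.of_forall fun i => lintegral_mono fun x =>
    lipConst_comp_le hφ)

variable [BorelSpace X]

lemma totVarOn_le_of_approx_totVarOn (hW : IsOpen W) {c : ℝ≥0∞}
    (h : ∀ K, IsCompact K → K ⊆ W → ∀ ε : ℝ≥0∞, 0 < ε → ∃ w : X → ℝ, AEMeasurable w μ ∧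
      ∫⁻ x in K, ENNReal.ofReal |w x - f x| ∂μ ≤ ε ∧ totVarOn μ w W ≤ c + ε) :
    totVarOn μ f W ≤ c := by
  rcases eq_or_ne c ⊤ with rfl | hc
  · exact le_top
  refine totVarOn_le_of_approx hW fun K hK hKW ε hε => ?_
  rcases eq_or_ne ε ⊤ with rfl | hεtop
  · exact ⟨fun _ => 0, .of_lipschitzNear fun x _ => lipschitzNear_const 0 x, le_top, by simp⟩
  have hhalf : 0 < ε / 2 := ENNReal.half_pos hε.ne'
  have hhalf_lt : ε / 2 < ε := ENNReal.half_lt_self hε.ne' hεtop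
  obtain ⟨w, hw, hwL1, hwV⟩ := h K hK hKW (ε / 2) hhalf
  obtain ⟨g, hg, hgL1, hgenergy⟩ := exists_approx_of_totVarOn_lt (c := c + ε)
    (hwV.trans_lt (by gcongr)) hK.isClosed hK.isBounded hKW hhalf
  refine ⟨g, hg, ?_, hgenergy.le⟩
  calc ∫⁻ x in K, ENNReal.ofReal |g x - f x| ∂μ
      ≤ ∫⁻ x in K, ENNReal.ofReal |g x - w x| ∂μ + ∫⁻ x in K, ENNReal.ofReal |w x - f x| ∂μ :=
        lintegral_ofReal_abs_sub_le_add
          ((hg.aemeasurable hW).mono_measure (Measure.restrict_mono hKW le_rfl)) hw.restrict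
    _ ≤ ε / 2 + ε / 2 := add_le_add hgL1.le hwL1
    _ = ε := ENNReal.add_halves ε

lemma sum_totVarOn_le {ι : Type*} (hW : IsOpen W) (F : Finset ι) (A : ι → Set X)
    (hA : ∀ k ∈ F, IsOpen (A k)) (hAW : ∀ k ∈ F, A k ⊆ W) {m : ℕ} (hm : m ≠ 0)
    (hoverlap : ∀ x, ∑ k ∈ F, (A k).indicator (fun _ => (1 : ℝ≥0∞)) x ≤ m) :
    ∑ k ∈ F, totVarOn μ f (A k) ≤ m * totVarOn μ f W := by
  rcases eq_or_ne (totVarOn μ f W) ⊤ with hV | hV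
  · rw [hV, ENNReal.mul_top (by simpa using hm)]
    exact le_top
  obtain ⟨us, hus, hlim, henergy⟩ := exists_optimal_seq hW hV.lt_top
  have hle : ∀ i, ∑ k ∈ F, ∫⁻ x in A k, lipConst (us i) x ∂μ
      ≤ m * ∫⁻ x in W, lipConst (us i) x ∂μ := fun i => by
    rw [← lintegral_finsetSum_measure, ← smul_eq_mul, ← lintegral_smul_measure]
    exact lintegral_mono' (sum_restrict_le_smul_restrict (fun k hk => (hA k hk).measurableSet)
      hAW hoverlap) le_rfl
  calc ∑ k ∈ F, totVarOn μ f (A k)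
      ≤ ∑ k ∈ F, liminf (fun i => ∫⁻ x in A k, lipConst (us i) x ∂μ) atTop :=
        Finset.sum_le_sum fun k hk => totVarOn_le_liminf (fun i => (hus i).mono (hAW k hk))
          (hlim.mono (hAW k hk))
    _ ≤ liminf (fun i => ∑ k ∈ F, ∫⁻ x in A k, lipConst (us i) x ∂μ) atTop :=
        sum_liminf_le_liminf_sum F _
    _ ≤ liminf (fun i => m * ∫⁻ x in W, lipConst (us i) x ∂μ) atTop :=
        liminf_le_liminf (Eventually.of_forall hle)
    _ = m * totVarOn μ f W := (ENNReal.Tendsto.const_mul henergy (Or.inr (by simp))).liminf_eq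

end TotalVariation

section Cutoff

/-- `β` is an `l`-Lipschitz cutoff between `C` and `K`: it vanishes on `C` and is at least `1`
off `K`. It serves as the half-width of the strip in which approximants are glued. -/
structure IsCutoff {X : Type*} [PseudoMetricSpace X] (β : X → ℝ) (l : ℝ≥0) (C K : Set X) :
    Prop where
  lipschitzWith : LipschitzWith l β
  nonneg : ∀ x, 0 ≤ β x
  eq_zero : ∀ x ∈ C, β x = 0
  one_le : ∀ x ∉ K, 1 ≤ β x

lemma IsCutoff.eq_zero_or_eq {X : Type*} [PseudoMetricSpace X] {β f₀ f₁ : X → ℝ} {l : ℝ≥0}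
    {C K : Set X} (hβ : IsCutoff β l C K) (heq : ∀ x ∉ C, f₀ x = f₁ x) (x : X) :
    β x = 0 ∨ f₀ x = f₁ x :=
  or_iff_not_imp_right.2 fun h => hβ.eq_zero x (not_imp_comm.1 (heq x) h)

lemma exists_isCutoff {X : Type*} [PseudoMetricSpace X] [ProperSpace X] {C O : Set X}
    (hC : IsCompact C) (hO : IsOpen O) (hCO : C ⊆ O) :
    ∃ (β : X → ℝ) (l : ℝ≥0) (K : Set X), IsCutoff β l C K ∧ IsCompact K ∧ C ⊆ K ∧ K ⊆ O := by
  rcases C.eq_empty_or_nonempty with rfl | hne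
  · exact ⟨fun _ => 1, 0, ∅, ⟨LipschitzWith.const 1, by simp, by simp, by simp⟩, isCompact_empty,
      subset_rfl, empty_subset _⟩
  obtain ⟨ρ, hρ, hsub⟩ := hC.exists_cthickening_subset_open hO hCO
  refine ⟨fun x => infDist x C / ρ, Real.toNNReal (1 / ρ), cthickening ρ C,
    ⟨LipschitzWith.of_dist_le_mul fun y z => ?_, fun x => div_nonneg infDist_nonneg hρ.le,
      fun x hx => ?_, fun x hx => ?_⟩,
    Metric.isCompact_of_isClosed_isBounded isClosed_cthickening hC.isBounded.cthickening,
    self_subset_cthickening C, hsub⟩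
  · have hinf := (lipschitz_infDist_pt C).dist_le_mul y z
    rw [NNReal.coe_one, one_mul, Real.dist_eq] at hinf
    rw [Real.dist_eq, ← sub_div, abs_div, abs_of_pos hρ,
      Real.coe_toNNReal _ (by positivity), div_mul_eq_mul_div, one_mul]
    gcongr
  · simp only [infDist_zero_of_mem hx, zero_div]
  · rw [mem_cthickening_iff, not_le] at hx
    rw [one_le_div hρ]
    exact (ENNReal.ofReal_le_iff_le_toReal (infEDist_ne_top hne)).1 hx.le

end Cutoff

section SmallIntegral

variable {X : Type*} [MeasurableSpace X] {ν : Measure X} [IsFiniteMeasure ν] {ζ : X → ℝ}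

lemma exists_pos_measure_mem_Ioo_lt (hζ : Measurable ζ) {ε : ℝ≥0∞} (hε : 0 < ε) :
    ∃ s : ℝ, 0 < s ∧ ν (ζ ⁻¹' Ioo 0 s) < ε := by
  have hlim : Tendsto (fun n : ℕ => ν (ζ ⁻¹' Ioo 0 (1 / ((n : ℝ) + 1)))) atTop
      (𝓝 (ν (⋂ n : ℕ, ζ ⁻¹' Ioo 0 (1 / ((n : ℝ) + 1))))) := by
    refine tendsto_measure_iInter_atTop (fun n => (hζ measurableSet_Ioo).nullMeasurableSet)
      (fun a b hab => preimage_mono (Ioo_subset_Ioo_right ?_)) ⟨0, measure_ne_top ν _⟩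
    gcongr
  have hempty : (⋂ n : ℕ, ζ ⁻¹' Ioo 0 (1 / ((n : ℝ) + 1))) = ∅ := by
    refine eq_empty_of_forall_notMem fun x hx => ?_
    rw [mem_iInter] at hx
    obtain ⟨n, hn⟩ := exists_nat_one_div_lt (hx 0).1
    exact (hx n).2.not_gt hn
  rw [hempty, measure_empty] at hlim
  obtain ⟨n, hn⟩ := (hlim.eventually_lt_const hε).exists
  exact ⟨_, by positivity, hn⟩

lemma exists_pos_measure_pos_le_of_lintegral_le (hζ : Measurable ζ) {ε : ℝ≥0∞} (hε : 0 < ε) :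
    ∃ δ : ℝ≥0∞, 0 < δ ∧ ∀ g : X → ℝ, AEMeasurable g ν →
      ∫⁻ x, ENNReal.ofReal (g x) ∂ν ≤ δ → ν {x | 0 < ζ x ∧ ζ x ≤ g x} ≤ ε := by
  have hhalf : 0 < ε / 2 := ENNReal.half_pos hε.ne'
  obtain ⟨s, hs, hsmall⟩ := exists_pos_measure_mem_Ioo_lt (ν := ν) hζ hhalf
  have hs' : ENNReal.ofReal s ≠ 0 := by simpa using hs
  refine ⟨ENNReal.ofReal s * (ε / 2), ENNReal.mul_pos hs' hhalf.ne', fun g hg hgδ => ?_⟩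
  have hcheb : ν {x | ENNReal.ofReal s ≤ ENNReal.ofReal (g x)} ≤ ε / 2 :=
    (ENNReal.mul_le_mul_iff_right hs' ENNReal.ofReal_ne_top).1
      ((mul_meas_ge_le_lintegral₀ hg.ennreal_ofReal _).trans hgδ)
  have hsub : {x | 0 < ζ x ∧ ζ x ≤ g x} ⊆
      ζ ⁻¹' Ioo 0 s ∪ {x | ENNReal.ofReal s ≤ ENNReal.ofReal (g x)} := fun x ⟨hpos, hle⟩ =>
    (lt_or_ge (ζ x) s).imp (fun h => ⟨hpos, h⟩)
      fun h => ENNReal.ofReal_le_ofReal (h.trans hle)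
  calc ν {x | 0 < ζ x ∧ ζ x ≤ g x}
      ≤ ν (ζ ⁻¹' Ioo 0 s) + ν {x | ENNReal.ofReal s ≤ ENNReal.ofReal (g x)} :=
        (measure_mono hsub).trans (measure_union_le _ _)
    _ ≤ ε / 2 + ε / 2 := add_le_add hsmall.le hcheb
    _ = ε := ENNReal.add_halves ε

lemma tendsto_measure_pos_le (hζ : Measurable ζ) {g : ℕ → X → ℝ} (hg : ∀ i, AEMeasurable (g i) ν)
    (h : Tendsto (fun i => ∫⁻ x, ENNReal.ofReal (g i x) ∂ν) atTop (𝓝 0)) :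
    Tendsto (fun i => ν {x | 0 < ζ x ∧ ζ x ≤ g i x}) atTop (𝓝 0) := by
  refine ENNReal.tendsto_nhds_zero.2 fun ε hε => ?_
  obtain ⟨δ, hδ, hsmall⟩ := exists_pos_measure_pos_le_of_lintegral_le (ν := ν) hζ hε
  filter_upwards [ENNReal.tendsto_nhds_zero.1 h δ hδ] with i hi
  exact hsmall _ (hg i) hi

end SmallIntegral

section Strip

/-- The truncation of `u` to the strip of half-width `β` around `w`. -/
def strip (u w β : ℝ) : ℝ := max (w - β) (min u (w + β))

variable {u w β : ℝ}

lemma strip_zero (u w : ℝ) : strip u w 0 = w := by simp [strip]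

lemma strip_of_abs_le (h : |u - w| ≤ β) : strip u w β = u := by
  rw [abs_le] at h
  rw [strip, min_eq_left (by linarith), max_eq_right (by linarith)]

lemma strip_of_add_le_left (hβ : 0 ≤ β) (h : w + β ≤ u) : strip u w β = w + β := by
  rw [strip, min_eq_right h, max_eq_right (by linarith)]

lemma strip_of_add_le_right (hβ : 0 ≤ β) (h : u + β ≤ w) : strip u w β = w - β := by
  rw [strip, min_eq_left (by linarith), max_eq_left (by linarith)]

lemma strip_mem_uIcc (hβ : 0 ≤ β) : strip u w β ∈ uIcc u w := by
  refine ⟨?_, max_le (le_max_of_le_right (by linarith)) (min_le_of_left_le le_sup_left)⟩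
  rcases le_total u w with h | h
  · exact inf_le_left.trans (le_max_of_le_right (le_min le_rfl (by linarith)))
  · exact inf_le_right.trans (le_max_of_le_right (le_min h (by linarith)))

lemma abs_strip_sub_le {a b : ℝ} (hβ : 0 ≤ β) (h : β = 0 ∨ a = b) :
    |strip u w β - b| ≤ |u - a| + |w - b| := by
  rcases h with rfl | rfl
  · rw [strip_zero]
    exact le_add_of_nonneg_left (abs_nonneg _)
  · have hmem := strip_mem_uIcc (u := u) (w := w) hβ
    rcases mem_uIcc.1 hmem with ⟨hl, hr⟩ | ⟨hl, hr⟩ <;> rw [abs_le] <;> constructor <;>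
      linarith [neg_abs_le (u - a), le_abs_self (u - a), neg_abs_le (w - a), le_abs_self (w - a),
        abs_nonneg (u - a), abs_nonneg (w - a)]

lemma LipschitzNear.strip {X : Type*} [PseudoMetricSpace X] {u w β : X → ℝ} {x : X}
    (hu : LipschitzNear u x) (hw : LipschitzNear w x) (hβ : LipschitzNear β x) :
    LipschitzNear (fun y => strip (u y) (w y) (β y)) x :=
  (hw.sub hβ).max (hu.min (hw.add hβ))

end Strip

section StripEnergy

variable {X : Type*} [MetricSpace X] [ProperSpace X] [MeasurableSpace X] [BorelSpace X]
  {μ : Measure X} [IsLocallyFiniteMeasure μ] [IsUnifLocDoublingMeasure μ]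
  {u w β : X → ℝ} {U : Set X} {l : ℝ≥0}

lemma ae_lipConst_strip_le (hU : IsOpen U) (hu : ∀ x ∈ U, LipschitzNear u x)
    (hw : ∀ x ∈ U, LipschitzNear w x) (hβ : LipschitzWith l β) (hβ0 : ∀ x, 0 ≤ β x) :
    ∀ᵐ x ∂μ, x ∈ U →
      (β x = 0 → lipConst (fun y => strip (u y) (w y) (β y)) x = lipConst w x) ∧
      (|u x - w x| ≤ β x → lipConst (fun y => strip (u y) (w y) (β y)) x = lipConst u x) ∧
      (β x < |u x - w x| →
        lipConst (fun y => strip (u y) (w y) (β y)) x ≤ lipConst w x + l) := by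
  have hβL : ∀ x, LipschitzNear β x := lipschitzNear_of_lipschitzWith hβ
  have hs : ∀ x ∈ U, LipschitzNear (fun y => strip (u y) (w y) (β y)) x := fun x hx =>
    (hu x hx).strip (hw x hx) (hβL x)
  filter_upwards [ae_lipConst_eq_of_eq (μ := μ) hU hs hu, ae_lipConst_eq_of_eq (μ := μ) hU hs hw,
    ae_lipConst_eq_of_eq (μ := μ) hU hs (fun x hx => (hw x hx).add (hβL x)),
    ae_lipConst_eq_of_eq (μ := μ) hU hs (fun x hx => (hw x hx).sub (hβL x))]
    with x hequ heqw hadd hsub hx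
  have hβdist : ∀ y, |β y - β x| ≤ l * dist y x := fun y => by
    simpa [Real.dist_eq] using hβ.dist_le_mul y x
  refine ⟨fun h => heqw hx (by rw [h, strip_zero]), fun h => hequ hx (strip_of_abs_le h),
    fun h => ?_⟩
  rcases le_abs'.1 h.le with h | h
  · rw [hsub hx (strip_of_add_le_right (hβ0 x) (by linarith)), ← ENNReal.ofReal_coe_nnreal]
    refine lipConst_le_add_of_eventually l.coe_nonneg (Eventually.of_forall fun y => ?_)
    rw [sub_sub_sub_comm]
    exact (abs_sub _ _).trans (by gcongr; exact hβdist y)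
  · rw [hadd hx (strip_of_add_le_left (hβ0 x) (by linarith)), ← ENNReal.ofReal_coe_nnreal]
    refine lipConst_le_add_of_eventually l.coe_nonneg (Eventually.of_forall fun y => ?_)
    rw [add_sub_add_comm]
    exact (abs_add_le _ _).trans (by gcongr; exact hβdist y)

lemma ae_lipConst_strip_add_le (hU : IsOpen U) (hu : ∀ x ∈ U, LipschitzNear u x)
    (hw : ∀ x ∈ U, LipschitzNear w x) (hβ : LipschitzWith l β) (hβ0 : ∀ x, 0 ≤ β x) :
    ∀ᵐ x ∂μ, x ∈ U →
      lipConst (fun y => strip (u y) (w y) (β y)) x +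
          lipConst (fun y => strip (w y) (u y) (β y)) x ≤
        lipConst u x + lipConst w x +
          {x | 0 < β x ∧ β x < |u x - w x|}.indicator (fun _ => (2 * l : ℝ≥0∞)) x := by
  filter_upwards [ae_lipConst_strip_le (μ := μ) hU hu hw hβ hβ0,
    ae_lipConst_strip_le (μ := μ) hU hw hu hβ hβ0] with x hstrip hstrip' hx
  obtain ⟨hzero, hle, hlt⟩ := hstrip hx
  obtain ⟨hzero', hle', hlt'⟩ := hstrip' hx
  rw [abs_sub_comm] at hle' hlt'
  rcases (hβ0 x).eq_or_lt with h | h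
  · rw [hzero h.symm, hzero' h.symm, add_comm]
    exact le_self_add
  rcases le_or_gt |u x - w x| (β x) with h' | h'
  · rw [hle h', hle' h']
    exact le_self_add
  rw [indicator_of_mem (show x ∈ {x | 0 < β x ∧ β x < |u x - w x|} from ⟨h, h'⟩)]
  exact (add_le_add (hlt h') (hlt' h')).trans (le_of_eq (by ring))

lemma lintegral_lipConst_strip_add_le (hU : IsOpen U) (hu : ∀ x ∈ U, LipschitzNear u x)
    (hw : ∀ x ∈ U, LipschitzNear w x) (hβ : LipschitzWith l β) (hβ0 : ∀ x, 0 ≤ β x) :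
    ∫⁻ x in U, lipConst (fun y => strip (u y) (w y) (β y)) x ∂μ +
        ∫⁻ x in U, lipConst (fun y => strip (w y) (u y) (β y)) x ∂μ ≤
      ∫⁻ x in U, lipConst u x ∂μ + ∫⁻ x in U, lipConst w x ∂μ +
        2 * l * μ.restrict U {x | 0 < β x ∧ β x < |u x - w x|} := by
  have hmu : AEMeasurable (lipConst u) (μ.restrict U) := aemeasurable_lipConst hU
    fun x hx => (hu x hx).continuousAt.continuousWithinAt
  have hmw : AEMeasurable (lipConst w) (μ.restrict U) := aemeasurable_lipConst hU
    fun x hx => (hw x hx).continuousAt.continuousWithinAt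
  refine (le_lintegral_add _ _).trans ((lintegral_mono_ae ((ae_restrict_iff' hU.measurableSet).2
    (ae_lipConst_strip_add_le hU hu hw hβ hβ0))).trans ?_)
  have hmadd : AEMeasurable (fun x => lipConst u x + lipConst w x) (μ.restrict U) := hmu.add hmw
  rw [lintegral_add_left' hmadd, lintegral_add_left' hmu]
  gcongr
  exact lintegral_indicator_const_le _ _

end StripEnergy

section Swap

lemma TendstoL1loc.piecewise_univ {X : Type*} [PseudoMetricSpace X] [MeasurableSpace X]
    [OpensMeasurableSpace X] {μ : Measure X} {w : ℕ → X → ℝ} {f : X → ℝ} {U K : Set X}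
    [∀ x, Decidable (x ∈ K)] (h : TendstoL1loc μ w f U) (hK : IsClosed K)
    (hKb : Bornology.IsBounded K) (hKU : K ⊆ U) :
    TendstoL1loc μ (fun i => K.piecewise (w i) f) f univ := fun C _ _ _ => by
  refine tendsto_of_tendsto_of_tendsto_of_le_of_le tendsto_const_nhds (h K hK hKb hKU)
    (fun _ => bot_le) fun i => ?_
  rw [← lintegral_indicator hK.measurableSet]
  refine (lintegral_mono fun x => ?_).trans (lintegral_mono' Measure.restrict_le_self le_rfl)
  by_cases hx : x ∈ K <;> simp [hx]

lemma TendstoL1loc.of_abs_sub_le_add {X : Type*} [PseudoMetricSpace X] [MeasurableSpace X]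
    {μ : Measure X} {u w a : ℕ → X → ℝ} {f₀ f₁ g : X → ℝ} {W : Set X}
    (hu : TendstoL1loc μ u f₀ W) (hw : TendstoL1loc μ w f₁ W)
    (hum : ∀ i, AEMeasurable (u i) μ) (hf₀ : AEMeasurable f₀ μ)
    (h : ∀ i x, |a i x - g x| ≤ |u i x - f₀ x| + |w i x - f₁ x|) :
    TendstoL1loc μ a g W := fun K hK hKb hKW => by
  refine tendsto_of_tendsto_of_tendsto_of_le_of_le tendsto_const_nhds
    (by simpa using (hu K hK hKb hKW).add (hw K hK hKb hKW)) (fun _ => bot_le) fun i => ?_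
  have hmeas : AEMeasurable (fun x => ENNReal.ofReal |u i x - f₀ x|) (μ.restrict K) := by
    have := hum i
    have : AEMeasurable (fun x => ENNReal.ofReal |u i x - f₀ x|) μ := by fun_prop
    exact this.restrict
  refine (lintegral_mono fun x => ?_).trans_eq (lintegral_add_left' hmeas _)
  rw [← ENNReal.ofReal_add (abs_nonneg _) (abs_nonneg _)]
  exact ENNReal.ofReal_le_ofReal (h i x)

lemma LocallyLipschitzOnSet.strip_univ {X : Type*} [PseudoMetricSpace X] [ProperSpace X]
    {u w β : X → ℝ} {U K : Set X} (hu : LocallyLipschitzOnSet u univ)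
    (hw : LocallyLipschitzOnSet w U) (hβ : ∀ x, LipschitzNear β x) (hU : IsOpen U)
    (hK : IsClosed K) (hKU : K ⊆ U) (hoff : ∀ x ∉ K, strip (u x) (w x) (β x) = u x) :
    LocallyLipschitzOnSet (fun x => strip (u x) (w x) (β x)) univ := .of_lipschitzNear fun x _ => by
  have hux := hu.lipschitzNear isOpen_univ (mem_univ x)
  by_cases hx : x ∈ U
  · exact hux.strip (hw.lipschitzNear hU hx) (hβ x)
  · exact hux.congr (eventually_of_mem (hK.isOpen_compl.mem_nhds fun h => hx (hKU h))
      fun y hy => (hoff y hy).symm)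

lemma TendstoL1loc.strip_univ {X : Type*} [PseudoMetricSpace X] [MeasurableSpace X]
    [OpensMeasurableSpace X] {μ : Measure X} {u w : ℕ → X → ℝ} {f₀ f₁ β : X → ℝ} {U C K : Set X}
    {l : ℝ≥0} (hu : TendstoL1loc μ u f₀ univ) (hw : TendstoL1loc μ w f₁ U)
    (hβ : IsCutoff β l C K) (hK : IsClosed K) (hKb : Bornology.IsBounded K) (hCK : C ⊆ K)
    (hKU : K ⊆ U) (hum : ∀ i, AEMeasurable (u i) μ) (hf₀ : AEMeasurable f₀ μ)
    (heq : ∀ x ∉ C, f₀ x = f₁ x) (hoff : ∀ i, ∀ x ∉ K, strip (u i x) (w i x) (β x) = u i x) :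
    TendstoL1loc μ (fun i x => strip (u i x) (w i x) (β x)) f₁ univ := by
  classical
  refine hu.of_abs_sub_le_add (hw.piecewise_univ hK hKb hKU) hum hf₀ fun i x => ?_
  by_cases hx : x ∈ K
  · simpa [hx] using abs_strip_sub_le (hβ.nonneg x) (hβ.eq_zero_or_eq heq x)
  · rw [hoff i x hx, heq x fun h => hx (hCK h)]
    exact le_add_of_nonneg_right (abs_nonneg _)

variable {X : Type*} [MetricSpace X] [MeasurableSpace X] [BorelSpace X] {μ : Measure X}
  [IsLocallyFiniteMeasure μ] {f₀ f₁ β : X → ℝ} {U C K : Set X} {l : ℝ≥0}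

lemma tendsto_measure_cutoff_lt_abs_sub {u w : ℕ → X → ℝ} (hβ : IsCutoff β l C K)
    (hK : IsCompact K) (hKU : K ⊆ U) (hf₀ : AEMeasurable f₀ μ) (hf₁ : AEMeasurable f₁ μ)
    (heq : ∀ x ∉ C, f₀ x = f₁ x) (hum : ∀ i, AEMeasurable (u i) (μ.restrict U))
    (hwm : ∀ i, AEMeasurable (w i) (μ.restrict U)) (hu : TendstoL1loc μ u f₀ U)
    (hw : TendstoL1loc μ w f₁ U) (huw : ∀ i x, |u i x - w i x| ≤ 1) :
    Tendsto (fun i => μ.restrict U {x | 0 < β x ∧ β x < |u i x - w i x|}) atTop (𝓝 0) := by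
  have : IsFiniteMeasure (μ.restrict K) := isFiniteMeasure_restrict.2 hK.measure_lt_top.ne
  have hrestrict : μ.restrict K ≤ μ.restrict U := Measure.restrict_mono hKU le_rfl
  have hmeas : ∀ {v : X → ℝ} {f : X → ℝ}, AEMeasurable v (μ.restrict U) → AEMeasurable f μ →
      AEMeasurable (fun x => |v x - f x|) (μ.restrict K) := fun hv hf => by
    have := hv.mono_measure hrestrict
    have := hf.restrict (s := K)
    fun_prop
  have hlim : Tendsto (fun i => ∫⁻ x in K,
      ENNReal.ofReal (|u i x - f₀ x| + |w i x - f₁ x|) ∂μ) atTop (𝓝 0) := by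
    have hadd := (hu K hK.isClosed hK.isBounded hKU).add (hw K hK.isClosed hK.isBounded hKU)
    rw [add_zero] at hadd
    refine hadd.congr fun i => ?_
    rw [← lintegral_add_left' (hmeas (hum i) hf₀).ennreal_ofReal]
    simp only [ENNReal.ofReal_add (abs_nonneg _) (abs_nonneg _)]
  refine tendsto_of_tendsto_of_tendsto_of_le_of_le tendsto_const_nhds
    (tendsto_measure_pos_le hβ.lipschitzWith.continuous.measurable
      (fun i => (hmeas (hum i) hf₀).add (hmeas (hwm i) hf₁)) hlim) (fun _ => bot_le) fun i => ?_
  dsimp only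
  rw [Measure.restrict_apply' hK.measurableSet]
  refine (Measure.restrict_apply_le _ _).trans (measure_mono fun x ⟨hpos, hlt⟩ => ?_)
  have hxK : x ∈ K := by_contra fun hx => ((huw i x).trans (hβ.one_le x hx)).not_gt hlt
  have hxC : x ∉ C := fun hx => hpos.ne' (hβ.eq_zero x hx)
  have htriangle : |u i x - w i x| ≤ |u i x - f₀ x| + |w i x - f₁ x| := by
    rw [heq x hxC, abs_sub_comm (w i x)]
    exact abs_sub_le _ _ _
  exact ⟨⟨hpos, hlt.le.trans htriangle⟩, hxK⟩

variable [ProperSpace X] [IsUnifLocDoublingMeasure μ]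

lemma lintegral_lipConst_strip_swap_le {u w : X → ℝ} (hU : IsOpen U) (hK : IsClosed K)
    (hKU : K ⊆ U) (hu : ∀ x ∈ U, LipschitzNear u x) (hw : ∀ x ∈ U, LipschitzNear w x)
    (hβ : LipschitzWith l β) (hβ0 : ∀ x, 0 ≤ β x)
    (hoff : ∀ x ∉ K, strip (u x) (w x) (β x) = u x) :
    ∫⁻ x, lipConst (fun y => strip (u y) (w y) (β y)) x ∂μ +
        ∫⁻ x in U, lipConst (fun y => strip (w y) (u y) (β y)) x ∂μ ≤
      ∫⁻ x, lipConst u x ∂μ + ∫⁻ x in U, lipConst w x ∂μ +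
        2 * l * μ.restrict U {x | 0 < β x ∧ β x < |u x - w x|} := by
  have hcompl : ∫⁻ x in Uᶜ, lipConst (fun y => strip (u y) (w y) (β y)) x ∂μ =
      ∫⁻ x in Uᶜ, lipConst u x ∂μ :=
    setLIntegral_congr_fun hU.measurableSet.compl fun x hx => lipConst_congr <|
      eventually_of_mem (hK.isOpen_compl.mem_nhds fun h => hx (hKU h)) hoff
  rw [← lintegral_add_compl _ hU.measurableSet, ← lintegral_add_compl (lipConst u) hU.measurableSet,
    hcompl, add_right_comm]
  exact (add_le_add_left (lintegral_lipConst_strip_add_le hU hu hw hβ hβ0) _).trans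
    (le_of_eq (by ring))

lemma totVarOn_add_totVarOn_le_of_tendsto {u w : ℕ → X → ℝ} {a b : ℝ≥0∞} (hU : IsOpen U)
    (hC : IsCompact C) (hCU : C ⊆ U) (hm₀ : AEMeasurable f₀ μ) (hm₁ : AEMeasurable f₁ μ)
    (heq : ∀ x ∉ C, f₀ x = f₁ x) (hu : ∀ i, LocallyLipschitzOnSet (u i) univ)
    (hw : ∀ i, LocallyLipschitzOnSet (w i) U) (huw : ∀ i x, |u i x - w i x| ≤ 1)
    (hulim : TendstoL1loc μ u f₀ univ) (hwlim : TendstoL1loc μ w f₁ U)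
    (hua : Tendsto (fun i => ∫⁻ x in univ, lipConst (u i) x ∂μ) atTop (𝓝 a))
    (hwb : Tendsto (fun i => ∫⁻ x in U, lipConst (w i) x ∂μ) atTop (𝓝 b)) :
    totVarOn μ f₁ univ + totVarOn μ f₀ U ≤ a + b := by
  obtain ⟨β, l, K, hβ, hK, hCK, hKU⟩ := exists_isCutoff hC hU hCU
  have hunear := fun i x => (hu i).lipschitzNear isOpen_univ (mem_univ x)
  have hwnear := fun i x => (hw i).lipschitzNear hU (x := x)
  have hβnear := lipschitzNear_of_lipschitzWith hβ.lipschitzWith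
  have hum : ∀ i, AEMeasurable (u i) μ := fun i => by
    simpa using (hu i).aemeasurable (μ := μ) isOpen_univ
  -- Truncating each sequence to the strip around the other one leaves no cross term in the energy.
  let v₁ : ℕ → X → ℝ := fun i y => strip (u i y) (w i y) (β y)
  let v₀ : ℕ → X → ℝ := fun i y => strip (w i y) (u i y) (β y)
  have hoff : ∀ i, ∀ x ∉ K, v₁ i x = u i x := fun i x hx =>
    strip_of_abs_le ((huw i x).trans (hβ.one_le x hx))
  have hv₁ : ∀ i, LocallyLipschitzOnSet (v₁ i) univ := fun i =>
    (hu i).strip_univ (hw i) hβnear hU hK.isClosed hKU (hoff i)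
  have hv₀ : ∀ i, LocallyLipschitzOnSet (v₀ i) U := fun i => .of_lipschitzNear fun x hx =>
    (hwnear i x hx).strip (hunear i x) (hβnear x)
  have hlim₁ : TendstoL1loc μ v₁ f₁ univ :=
    hulim.strip_univ hwlim hβ hK.isClosed hK.isBounded hCK hKU hum hm₀ heq hoff
  have hlim₀ : TendstoL1loc μ v₀ f₀ U :=
    (hulim.mono (subset_univ U)).of_abs_sub_le_add hwlim hum hm₀ fun i x =>
      (abs_strip_sub_le (hβ.nonneg x)
        ((hβ.eq_zero_or_eq heq x).imp_right Eq.symm)).trans_eq (add_comm _ _)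
  have hS : Tendsto (fun i => 2 * l * μ.restrict U {x | 0 < β x ∧ β x < |u i x - w i x|}) atTop
      (𝓝 (2 * l * 0)) := ENNReal.Tendsto.const_mul
    (tendsto_measure_cutoff_lt_abs_sub hβ hK hKU hm₀ hm₁ heq (fun i => (hum i).restrict)
      (fun i => (hw i).aemeasurable hU) (hulim.mono (subset_univ U)) hwlim huw)
    (Or.inr (by finiteness))
  calc totVarOn μ f₁ univ + totVarOn μ f₀ U
      ≤ _ := (add_le_add (totVarOn_le_liminf hv₁ hlim₁) (totVarOn_le_liminf hv₀ hlim₀)).trans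
        (liminf_add_liminf_le _ _)
    _ ≤ _ := liminf_le_liminf <| Eventually.of_forall fun i => by
        simpa using lintegral_lipConst_strip_swap_le hU hK.isClosed hKU (fun x _ => hunear i x)
          (hwnear i) hβ.lipschitzWith hβ.nonneg (hoff i)
    _ = a + b + 2 * l * 0 := by simpa using ((hua.add hwb).add hS).liminf_eq
    _ = a + b := by simp

lemma totVarOn_swap (hU : IsOpen U) (hC : IsCompact C) (hCU : C ⊆ U)
    (h₀ : ∀ x, f₀ x ∈ Icc (0 : ℝ) 1) (h₁ : ∀ x, f₁ x ∈ Icc (0 : ℝ) 1) (hm₀ : AEMeasurable f₀ μ)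
    (hm₁ : AEMeasurable f₁ μ) (heq : ∀ x ∉ C, f₀ x = f₁ x) :
    totVarOn μ f₁ univ + totVarOn μ f₀ U ≤ totVarOn μ f₀ univ + totVarOn μ f₁ U := by
  rcases eq_or_ne (totVarOn μ f₀ univ) ⊤ with hV₀ | hV₀
  · simp [hV₀]
  rcases eq_or_ne (totVarOn μ f₁ U) ⊤ with hV₁ | hV₁
  · simp [hV₁]
  obtain ⟨u, hu, hu01, hulim, huV⟩ := exists_optimal_seq_mem_Icc isOpen_univ hV₀.lt_top h₀
  obtain ⟨w, hw, hw01, hwlim, hwV⟩ := exists_optimal_seq_mem_Icc hU hV₁.lt_top h₁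
  exact totVarOn_add_totVarOn_le_of_tendsto hU hC hCU hm₀ hm₁ heq hu hw
    (fun i x => Real.dist_le_of_mem_Icc_01 (hu01 i x) (hw01 i x)) hulim hwlim huV hwV

end Swap

section Gluing

section LocallyFiniteSup

variable {J : Type*} {v : J → ℝ} {G : Finset J}

lemma iSup_eq_fold_max (h0 : ∀ j, 0 ≤ v j) (hG : ∀ j ∉ G, v j = 0) :
    ⨆ j, v j = G.fold max 0 v := by
  have hle : ∀ j, v j ≤ G.fold max 0 v := fun j => by
    rw [Finset.le_fold_max]
    exact (em (j ∈ G)).symm.imp (fun hj => (hG j hj).le) fun hj => ⟨j, hj, le_rfl⟩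
  have hfold : 0 ≤ G.fold max 0 v := (Finset.le_fold_max 0).2 (Or.inl le_rfl)
  refine le_antisymm (Real.iSup_le hle hfold)
    ((Finset.fold_max_le _).2 ⟨Real.iSup_nonneg h0, fun j _ => ?_⟩)
  exact le_ciSup ⟨_, forall_mem_range.2 hle⟩ j

lemma lipschitzNear_iSup {X : Type*} [PseudoMetricSpace X] {v : J → X → ℝ} {x : X}
    (h0 : ∀ j y, 0 ≤ v j y) (hv : ∀ j, LipschitzNear (v j) x)
    (hG : ∀ᶠ y in 𝓝 x, ∀ j ∉ G, v j y = 0) : LipschitzNear (fun y => ⨆ j, v j y) x := by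
  have hfold : ∀ G : Finset J, LipschitzNear (fun y => G.fold max 0 fun j => v j y) x := fun G => by
    induction G using Finset.cons_induction with
    | empty => exact lipschitzNear_const 0 x
    | cons j G hj ih => simpa only [Finset.fold_cons] using (hv j).max ih
  exact (hfold G).congr (hG.mono fun y hy => (iSup_eq_fold_max (fun j => h0 j y) hy).symm)

end LocallyFiniteSup

section Tolerance

variable {J : Type*} {F : J → Finset J}

lemma exists_pos_sum_le (hF : ∀ i j, i ∈ F j ↔ j ∈ F i) {δ : J → ℝ≥0∞} (hδ : ∀ j, 0 < δ j) :
    ∃ τ : J → ℝ≥0∞, (∀ i, 0 < τ i) ∧ ∀ j, ∑ i ∈ F j, τ i ≤ δ j := by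
  have hpos : ∀ j, 0 < δ j / ((F j).card + 1) := fun j =>
    ENNReal.div_pos (hδ j).ne' (by finiteness)
  refine ⟨fun i => (F i).inf fun j => δ j / ((F j).card + 1),
    fun i => (Finset.lt_inf_iff ENNReal.zero_lt_top).2 fun j _ => hpos j, fun j => ?_⟩
  calc ∑ i ∈ F j, (F i).inf (fun j => δ j / ((F j).card + 1))
      ≤ ∑ i ∈ F j, δ j / ((F j).card + 1) :=
        Finset.sum_le_sum fun i hi => Finset.inf_le ((hF i j).1 hi)
    _ ≤ ((F j).card + 1) * (δ j / ((F j).card + 1)) := by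
        rw [Finset.sum_const, nsmul_eq_mul]
        gcongr
        exact le_self_add
    _ ≤ δ j := ENNReal.mul_div_le

lemma exists_pos_mul_le {e : ℝ≥0∞} (he : e ≠ 0) (l : ℝ≥0) :
    ∃ η : ℝ≥0∞, 0 < η ∧ l * η ≤ e :=
  ⟨e / (l + 1), ENNReal.div_pos he (by finiteness),
    (by gcongr; exact le_self_add : l * (e / (l + 1)) ≤ (l + 1) * (e / (l + 1))).trans
      ENNReal.mul_div_le⟩

lemma exists_pos_mul_measure_pos_le {X : Type*} [MeasurableSpace X] {μ : Measure X}
    (hF : ∀ i j, i ∈ F j ↔ j ∈ F i) {K : J → Set X} (hK : ∀ j, MeasurableSet (K j))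
    (hKμ : ∀ j, μ (K j) < ⊤) {β : J → X → ℝ} (hβ : ∀ j, Measurable (β j)) (l : J → ℝ≥0)
    {e : J → ℝ≥0∞} (he : ∀ j, e j ≠ 0) :
    ∃ τ : J → ℝ≥0∞, (∀ i, 0 < τ i) ∧ (∀ i, τ i ≤ e i) ∧
      ∀ d : J → X → ℝ, (∀ i x, 0 ≤ d i x) → (∀ i, AEMeasurable (d i) μ) →
        (∀ i, ∫⁻ x, ENNReal.ofReal (d i x) ∂μ ≤ τ i) →
        ∀ j, l j * μ ({x | 0 < β j x ∧ β j x ≤ ∑ i ∈ F j, d i x} ∩ K j) ≤ e j := by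
  choose η hη hηe using fun j => exists_pos_mul_le (he j) (l j)
  have hfinite : ∀ j, IsFiniteMeasure (μ.restrict (K j)) := fun j =>
    isFiniteMeasure_restrict.2 (hKμ j).ne
  choose δ hδ hsmall using fun j =>
    exists_pos_measure_pos_le_of_lintegral_le (ν := μ.restrict (K j)) (hβ j) (hη j)
  obtain ⟨τ, hτ, hτδ⟩ := exists_pos_sum_le hF hδ
  refine ⟨fun i => min (τ i) (e i), fun i => lt_min (hτ i) (he i).bot_lt,
    fun i => min_le_right _ _, fun d hd hdm hdτ j => (mul_le_mul_right ?_ _).trans (hηe j)⟩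
  rw [← Measure.restrict_apply' (hK j)]
  refine hsmall j _ (Finset.aemeasurable_fun_sum _ fun i _ => (hdm i).restrict) ?_
  calc ∫⁻ x in K j, ENNReal.ofReal (∑ i ∈ F j, d i x) ∂μ
      ≤ ∫⁻ x, ENNReal.ofReal (∑ i ∈ F j, d i x) ∂μ := setLIntegral_le_lintegral _ _
    _ = ∑ i ∈ F j, ∫⁻ x, ENNReal.ofReal (d i x) ∂μ := by
        simp_rw [ENNReal.ofReal_sum_of_nonneg fun i _ => hd i _]
        exact lintegral_finsetSum' _ fun i _ => (hdm i).ennreal_ofReal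
    _ ≤ ∑ i ∈ F j, τ i := Finset.sum_le_sum fun i _ => (hdτ i).trans (min_le_left _ _)
    _ ≤ δ j := hτδ j

end Tolerance

section Bump

variable {X : Type*} [PseudoMetricSpace X] {u β : X → ℝ} {l : ℝ≥0} {C K O : Set X} {x : X}

lemma IsCutoff.subset (hβ : IsCutoff β l C K) : C ⊆ K := fun x hx => by
  by_contra hxK
  linarith [hβ.eq_zero x hx, hβ.one_le x hxK]

lemma IsCutoff.max_sub_eq_zero (hβ : IsCutoff β l C K) (hu : u x ≤ 1) (hx : x ∉ K) :
    max 0 (u x - β x) = 0 :=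
  max_eq_left (by linarith [hβ.one_le x hx])

lemma IsCutoff.max_sub_le (hβ : IsCutoff β l C K) (hu : 0 ≤ u x) : max 0 (u x - β x) ≤ u x :=
  max_le hu (sub_le_self _ (hβ.nonneg x))

lemma IsCutoff.lipschitzNear_max_sub (hβ : IsCutoff β l C K) (hK : IsClosed K) (hKO : K ⊆ O)
    (hu1 : ∀ x, u x ≤ 1) (hu : ∀ x ∈ O, LipschitzNear u x) (x : X) :
    LipschitzNear (fun y => max 0 (u y - β y)) x := by
  by_cases hx : x ∈ K
  · exact (lipschitzNear_const 0 x).max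
      ((hu x (hKO hx)).sub (lipschitzNear_of_lipschitzWith hβ.lipschitzWith x))
  · refine (lipschitzNear_const 0 x).congr ?_
    filter_upwards [hK.isOpen_compl.mem_nhds hx] with y hy
    exact (hβ.max_sub_eq_zero (hu1 y) hy).symm

lemma IsCutoff.ae_lipConst_max_sub_le [SecondCountableTopology X] [MeasurableSpace X]
    [BorelSpace X] {μ : Measure X} [IsLocallyFiniteMeasure μ] [IsUnifLocDoublingMeasure μ]
    (hβ : IsCutoff β l C K) (hO : IsOpen O) (hu : ∀ x ∈ O, LipschitzNear u x) :
    ∀ᵐ x ∂μ, x ∈ O → 0 < max 0 (u x - β x) →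
      (β x = 0 → lipConst (fun y => max 0 (u y - β y)) x ≤ lipConst u x) ∧
        lipConst (fun y => max 0 (u y - β y)) x ≤ lipConst u x + l := by
  have hdiff : ∀ x ∈ O, LipschitzNear (fun y => u y - β y) x := fun x hx =>
    (hu x hx).sub (lipschitzNear_of_lipschitzWith hβ.lipschitzWith x)
  have hmax : ∀ x ∈ O, LipschitzNear (fun y => max 0 (u y - β y)) x := fun x hx =>
    (lipschitzNear_const 0 x).max (hdiff x hx)
  filter_upwards [ae_lipConst_eq_of_eq (μ := μ) hO hmax hu,
    ae_lipConst_eq_of_eq (μ := μ) hO hmax hdiff] with x hxu hxdiff hxO hpos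
  have heq : max 0 (u x - β x) = u x - β x :=
    max_eq_right (le_of_lt ((lt_max_iff.1 hpos).resolve_left (lt_irrefl 0)))
  refine ⟨fun h0 => (hxu hxO (by rw [heq, h0, sub_zero])).le, ?_⟩
  rw [hxdiff hxO heq, ← ENNReal.ofReal_coe_nnreal]
  refine lipConst_le_add_of_eventually l.2 (Eventually.of_forall fun y => ?_)
  rw [sub_sub_sub_comm]
  exact (abs_sub _ _).trans (add_le_add_right (hβ.lipschitzWith.dist_le_mul y x) _)

end Bump

section CutoffCover

variable {J X : Type*} [PseudoMetricSpace X] {W : Set X} {β : J → X → ℝ} {l : J → ℝ≥0}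
  {C K : J → Set X}

/-- The cores `C j` of cutoffs `β j`, supported in compact sets `K j ⊆ W` which are locally finite
in `W`, cover `W`. Local functions are glued along such a cover by `IsCutoffCover.glue`. -/
structure IsCutoffCover (W : Set X) (β : J → X → ℝ) (l : J → ℝ≥0) (C K : J → Set X) : Prop where
  isCutoff : ∀ j, IsCutoff (β j) (l j) (C j) (K j)
  isCompact : ∀ j, IsCompact (K j)
  subset : ∀ j, K j ⊆ W
  cover : W ⊆ ⋃ j, C j
  finite_inter : ∀ L, IsCompact L → L ⊆ W → {j | (K j ∩ L).Nonempty}.Finite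

/-- The supremum of the truncations `(u j - β j)⁺`. Near the boundary of the core of `β j` the
competing functions are larger than `u j - β j`, so that the truncation is not seen. -/
def glue (u β : J → X → ℝ) (x : X) : ℝ := ⨆ j, max 0 (u j x - β j x)

namespace IsCutoffCover

variable {u : J → X → ℝ} {x : X}

lemma exists_finset_forall_inter_iff (h : IsCutoffCover W β l C K) (j : J) :
    ∃ F : Finset J, ∀ i, i ∈ F ↔ (K i ∩ K j).Nonempty :=
  ⟨(h.finite_inter (K j) (h.isCompact j) (h.subset j)).toFinset, by simp⟩

lemma lipschitzNear_glue [T2Space X] [LocallyCompactSpace X] (h : IsCutoffCover W β l C K)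
    (hu : ∀ j x, u j x ∈ Icc (0 : ℝ) 1) (hW : IsOpen W) {O : J → Set X}
    (hKO : ∀ j, K j ⊆ O j) (huL : ∀ j, ∀ x ∈ O j, LipschitzNear (u j) x) (hx : x ∈ W) :
    LipschitzNear (glue u β) x := by
  obtain ⟨L, hL, hxL, hLW⟩ := exists_compact_subset hW hx
  refine lipschitzNear_iSup (G := (h.finite_inter L hL hLW).toFinset) (fun j y => le_max_left _ _)
    (fun j => (h.isCutoff j).lipschitzNear_max_sub (h.isCompact j).isClosed (hKO j)
      (fun y => (hu j y).2) (huL j) x) ?_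
  filter_upwards [mem_interior_iff_mem_nhds.1 hxL] with y hy j hj
  refine (h.isCutoff j).max_sub_eq_zero (hu j y).2 fun hyK => hj ?_
  exact (Set.Finite.mem_toFinset _).2 ⟨y, hyK, hy⟩

lemma bddAbove_max_sub (h : IsCutoffCover W β l C K)
    (hu : ∀ j x, u j x ∈ Icc (0 : ℝ) 1) (x : X) :
    BddAbove (range fun j => max 0 (u j x - β j x)) :=
  ⟨1, forall_mem_range.2 fun j => ((h.isCutoff j).max_sub_le (hu j x).1).trans (hu j x).2⟩

lemma exists_glue_eq (h : IsCutoffCover W β l C K)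
    (hu : ∀ j x, u j x ∈ Icc (0 : ℝ) 1) (hx : x ∈ W) :
    ∃ j, x ∈ K j ∧ glue u β x = max 0 (u j x - β j x) := by
  obtain ⟨i, hi⟩ := mem_iUnion.1 (h.cover hx)
  have hfin := h.finite_inter {x} isCompact_singleton (singleton_subset_iff.2 hx)
  simp only [inter_singleton_nonempty] at hfin
  obtain ⟨j, hjK, hj⟩ := exists_max_image _ (fun j => max 0 (u j x - β j x)) hfin
    ⟨i, (h.isCutoff i).subset hi⟩
  refine ⟨j, hjK, le_antisymm (Real.iSup_le (fun k => ?_) (le_max_left _ _))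
    (le_ciSup (h.bddAbove_max_sub hu x) j)⟩
  by_cases hk : x ∈ K k
  · exact hj k hk
  · rw [(h.isCutoff k).max_sub_eq_zero (hu k x).2 hk]
    exact le_max_left _ _

lemma le_glue (h : IsCutoffCover W β l C K) (hu : ∀ j x, u j x ∈ Icc (0 : ℝ) 1)
    {i : J} (hi : x ∈ C i) : u i x ≤ glue u β x := by
  refine le_trans (le_max_of_le_right ?_) (le_ciSup (h.bddAbove_max_sub hu x) i)
  rw [(h.isCutoff i).eq_zero x hi, sub_zero]

lemma exists_abs_glue_sub_le (h : IsCutoffCover W β l C K)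
    (hu : ∀ j x, u j x ∈ Icc (0 : ℝ) 1) (hx : x ∈ W) (a : ℝ) :
    ∃ k, x ∈ K k ∧ |glue u β x - a| ≤ |u k x - a| := by
  obtain ⟨i, hi⟩ := mem_iUnion.1 (h.cover hx)
  obtain ⟨j, hjK, hj⟩ := h.exists_glue_eq hu hx
  rcases le_total a (glue u β x) with ha | ha
  · have hle : glue u β x ≤ u j x := hj.trans_le ((h.isCutoff j).max_sub_le (hu j x).1)
    refine ⟨j, hjK, ?_⟩
    rw [abs_of_nonneg (sub_nonneg.2 ha), abs_of_nonneg (sub_nonneg.2 (ha.trans hle))]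
    exact sub_le_sub_right hle a
  · have hle : u i x ≤ glue u β x := h.le_glue hu hi
    refine ⟨i, (h.isCutoff i).subset hi, ?_⟩
    rw [abs_of_nonpos (sub_nonpos.2 ha), abs_of_nonpos (sub_nonpos.2 (hle.trans ha))]
    linarith

lemma exists_ne_le_abs_add_abs (h : IsCutoffCover W β l C K)
    (hu : ∀ j x, u j x ∈ Icc (0 : ℝ) 1) {j : J} (hx : x ∈ W) (hjK : x ∈ K j) (hβ : 0 < β j x)
    (hj : glue u β x = u j x - β j x) (a : ℝ) :
    ∃ i ≠ j, x ∈ K i ∧ β j x ≤ |u i x - a| + |u j x - a| := by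
  obtain ⟨i, hi⟩ := mem_iUnion.1 (h.cover hx)
  refine ⟨i, ?_, (h.isCutoff i).subset hi, ?_⟩
  · rintro rfl
    exact hβ.ne' ((h.isCutoff i).eq_zero x hi)
  · linarith [h.le_glue hu hi, le_abs_self (u j x - a), neg_abs_le (u i x - a)]

end IsCutoffCover

end CutoffCover

lemma aemeasurable_indicator_abs_sub {X : Type*} [PseudoMetricSpace X] [MeasurableSpace X]
    [BorelSpace X] {μ : Measure X} {f : X → ℝ} {U L : Set X} {w : X → ℝ}
    (hU : IsOpen U) (hL : MeasurableSet L) (hLU : L ⊆ U) (hw : LocallyLipschitzOnSet w U)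
    (hf : AEMeasurable f μ) :
    AEMeasurable (L.indicator fun x => |w x - f x|) μ := by
  refine (aemeasurable_indicator_iff hL).2 ?_
  have hwL := (hw.aemeasurable (μ := μ) hU).mono_measure (Measure.restrict_mono hLU le_rfl)
  have hfL := hf.restrict (s := L)
  fun_prop

lemma lintegral_ofReal_indicator {X : Type*} [MeasurableSpace X] {μ : Measure X} {L : Set X}
    (hL : MeasurableSet L) (g : X → ℝ) :
    ∫⁻ x, ENNReal.ofReal (L.indicator g x) ∂μ = ∫⁻ x in L, ENNReal.ofReal (g x) ∂μ := by
  rw [← lintegral_indicator hL]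
  exact lintegral_congr fun x => congrFun (indicator_comp_of_zero ENNReal.ofReal_zero).symm x

lemma exists_approx_mem_Icc {X : Type*} [MetricSpace X] [ProperSpace X] [MeasurableSpace X]
    {μ : Measure X} {f : X → ℝ} {U L : Set X} (hU : IsOpen U) (hV : totVarOn μ f U < ⊤)
    (hf : ∀ x, f x ∈ Icc (0 : ℝ) 1) (hL : IsCompact L) (hLU : L ⊆ U) {τ e : ℝ≥0∞} (hτ : 0 < τ)
    (he : e ≠ 0) :
    ∃ u : X → ℝ, LocallyLipschitzOnSet u U ∧ (∀ x, u x ∈ Icc (0 : ℝ) 1) ∧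
      ∫⁻ x in L, ENNReal.ofReal |u x - f x| ∂μ ≤ τ ∧
      ∫⁻ x in U, lipConst u x ∂μ ≤ totVarOn μ f U + e := by
  obtain ⟨us, hlip, hmem, hconv, henergy⟩ := exists_optimal_seq_mem_Icc hU hV hf
  obtain ⟨i, hiτ, hie⟩ := ((ENNReal.tendsto_nhds_zero.1
    (hconv L hL.isClosed hL.isBounded hLU) τ hτ).and
    (henergy.eventually_le_const (ENNReal.lt_add_right hV.ne he))).exists
  exact ⟨us i, hlip i, hmem i, hiτ, hie⟩

section GlueEnergy

variable {J X : Type*} [Countable J] [MetricSpace X] [MeasurableSpace X] [BorelSpace X]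
  {μ : Measure X} {W : Set X} {β u : J → X → ℝ} {l : J → ℝ≥0} {C K O : J → Set X} {f : X → ℝ}

lemma IsCutoffCover.setLIntegral_abs_glue_sub_le (h : IsCutoffCover W β l C K)
    (hu : ∀ j x, u j x ∈ Icc (0 : ℝ) 1) {L : Set X} (hL : MeasurableSet L) (hLW : L ⊆ W)
    (hd : ∀ i, AEMeasurable ((K i).indicator fun x => |u i x - f x|) μ) :
    ∫⁻ x in L, ENNReal.ofReal |glue u β x - f x| ∂μ ≤
      ∑' i, ∫⁻ x in K i, ENNReal.ofReal |u i x - f x| ∂μ := by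
  calc ∫⁻ x in L, ENNReal.ofReal |glue u β x - f x| ∂μ
      ≤ ∫⁻ x in L, ∑' i, ENNReal.ofReal ((K i).indicator (fun x => |u i x - f x|) x) ∂μ := by
        refine setLIntegral_mono' hL fun x hx => ?_
        obtain ⟨k, hk, hle⟩ := h.exists_abs_glue_sub_le hu (hLW hx) (f x)
        refine (ENNReal.ofReal_le_ofReal ?_).trans (ENNReal.le_tsum k)
        rwa [indicator_of_mem hk]
    _ ≤ ∑' i, ∫⁻ x, ENNReal.ofReal ((K i).indicator (fun x => |u i x - f x|) x) ∂μ :=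
        (setLIntegral_le_lintegral _ _).trans_eq
          (lintegral_tsum fun i => (hd i).ennreal_ofReal)
    _ = ∑' i, ∫⁻ x in K i, ENNReal.ofReal |u i x - f x| ∂μ := tsum_congr fun i =>
        lintegral_ofReal_indicator (h.isCompact i).measurableSet _

variable [ProperSpace X] [IsLocallyFiniteMeasure μ] [IsUnifLocDoublingMeasure μ]

lemma IsCutoffCover.ae_lipConst_glue_le (h : IsCutoffCover W β l C K) (hW : IsOpen W)
    (hO : ∀ j, IsOpen (O j)) (hKO : ∀ j, K j ⊆ O j) (hu : ∀ j x, u j x ∈ Icc (0 : ℝ) 1)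
    (huL : ∀ j, ∀ x ∈ O j, LipschitzNear (u j) x) :
    ∀ᵐ x ∂μ, x ∈ W → ∃ j, x ∈ K j ∧ (lipConst (glue u β) x ≤ lipConst (u j) x ∨
      0 < β j x ∧ glue u β x = u j x - β j x ∧
        lipConst (glue u β) x ≤ lipConst (u j) x + l j) := by
  have hglue : ∀ x ∈ W, LipschitzNear (glue u β) x := fun x => h.lipschitzNear_glue hu hW hKO huL
  have hbump : ∀ j, ∀ᵐ x ∂μ, x ∈ W → glue u β x = max 0 (u j x - β j x) →
      lipConst (glue u β) x = lipConst (fun y => max 0 (u j y - β j y)) x := fun j =>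
    ae_lipConst_eq_of_eq hW hglue fun x _ => (h.isCutoff j).lipschitzNear_max_sub
      (h.isCompact j).isClosed (hKO j) (fun y => (hu j y).2) (huL j) x
  filter_upwards [ae_all_iff.2 hbump,
    ae_all_iff.2 fun j => (h.isCutoff j).ae_lipConst_max_sub_le (μ := μ) (hO j) (huL j),
    ae_lipConst_eq_of_eq (μ := μ) hW hglue fun x _ => lipschitzNear_const 0 x]
    with x hxbump hxle hxzero hxW
  obtain ⟨j, hjK, hj⟩ := h.exists_glue_eq hu hxW
  refine ⟨j, hjK, ?_⟩
  rcases (le_max_left 0 (u j x - β j x)).eq_or_lt with h0 | hpos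
  · left
    rw [hxzero hxW (hj.trans h0.symm), lipConst_const]
    exact zero_le
  obtain ⟨hcore, hstrip⟩ := hxle j (hKO j hjK) hpos
  rw [hxbump j hxW hj]
  refine ((h.isCutoff j).nonneg x).eq_or_lt.imp (fun hβ => hcore hβ.symm) fun hβ =>
    ⟨hβ, ?_, hstrip⟩
  rw [hj, max_eq_right (le_of_lt ((lt_max_iff.1 hpos).resolve_left (lt_irrefl 0)))]

lemma IsCutoffCover.ae_lipConst_glue_le_tsum (h : IsCutoffCover W β l C K) (hW : IsOpen W)
    (hO : ∀ j, IsOpen (O j)) (hKO : ∀ j, K j ⊆ O j) (hu : ∀ j x, u j x ∈ Icc (0 : ℝ) 1)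
    (huL : ∀ j, ∀ x ∈ O j, LipschitzNear (u j) x) {F : J → Finset J}
    (hF : ∀ j i, i ∈ F j ↔ (K i ∩ K j).Nonempty) (f : X → ℝ) :
    ∀ᵐ x ∂μ, x ∈ W → lipConst (glue u β) x ≤
      ∑' j, ((K j).indicator (lipConst (u j)) x +
        ({y | 0 < β j y ∧ β j y ≤ ∑ i ∈ F j, (K i).indicator (fun z => |u i z - f z|) y} ∩
          K j).indicator (fun _ => (l j : ℝ≥0∞)) x) := by
  filter_upwards [h.ae_lipConst_glue_le (μ := μ) hW hO hKO hu huL] with x hx hxW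
  obtain ⟨j, hjK, hle⟩ := hx hxW
  refine le_trans ?_ (ENNReal.le_tsum j)
  rw [indicator_of_mem hjK]
  rcases hle with hle | ⟨hβ, hj, hle⟩
  · exact le_add_right hle
  obtain ⟨i, hij, hiK, hβle⟩ := h.exists_ne_le_abs_add_abs hu hxW hjK hβ hj (f x)
  have hsum : |u i x - f x| + |u j x - f x| ≤
      ∑ k ∈ F j, (K k).indicator (fun y => |u k y - f y|) x := by
    rw [← indicator_of_mem hiK fun y => |u i y - f y|,
      ← indicator_of_mem hjK fun y => |u j y - f y|]
    exact Finset.add_le_sum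
      (f := fun k => (K k).indicator (fun y => |u k y - f y|) x)
      (fun k _ => indicator_nonneg (fun _ _ => abs_nonneg _) x) ((hF j i).2 ⟨x, hiK, hjK⟩)
      ((hF j j).2 ⟨x, hjK, hjK⟩) hij
  rw [indicator_of_mem]
  · exact hle
  · exact ⟨⟨hβ, hβle.trans hsum⟩, hjK⟩

lemma IsCutoffCover.lintegral_lipConst_glue_le (h : IsCutoffCover W β l C K) (hW : IsOpen W)
    (hO : ∀ j, IsOpen (O j)) (hKO : ∀ j, K j ⊆ O j) (hu : ∀ j x, u j x ∈ Icc (0 : ℝ) 1)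
    (huL : ∀ j, ∀ x ∈ O j, LipschitzNear (u j) x) {F : J → Finset J}
    (hF : ∀ j i, i ∈ F j ↔ (K i ∩ K j).Nonempty)
    (hd : ∀ i, AEMeasurable ((K i).indicator fun x => |u i x - f x|) μ) {e : J → ℝ≥0∞}
    (he : ∀ j, l j * μ ({x | 0 < β j x ∧ β j x ≤
      ∑ i ∈ F j, (K i).indicator (fun y => |u i y - f y|) x} ∩ K j) ≤ e j) :
    ∫⁻ x in W, lipConst (glue u β) x ∂μ ≤ ∑' j, (∫⁻ x in O j, lipConst (u j) x ∂μ + e j) := by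
  set S : J → Set X := fun j => {x | 0 < β j x ∧ β j x ≤
    ∑ i ∈ F j, (K i).indicator (fun y => |u i y - f y|) x} ∩ K j
  have hβm : ∀ j, AEMeasurable (β j) μ := fun j =>
    (h.isCutoff j).lipschitzWith.continuous.aemeasurable
  have hK : ∀ j, MeasurableSet (K j) := fun j => (h.isCompact j).measurableSet
  have hS : ∀ j, NullMeasurableSet (S j) μ := fun j =>
    ((nullMeasurableSet_lt aemeasurable_const (hβm j)).inter (nullMeasurableSet_le (hβm j)
      (Finset.aemeasurable_fun_sum _ fun i _ => hd i))).inter (hK j).nullMeasurableSet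
  have hlip : ∀ j, AEMeasurable ((K j).indicator (lipConst (u j))) μ := fun j =>
    (aemeasurable_indicator_iff (hK j)).2 ((aemeasurable_lipConst (hO j) fun x hx =>
      (huL j x hx).continuousAt.continuousWithinAt).mono_measure
      (Measure.restrict_mono (hKO j) le_rfl))
  calc ∫⁻ x in W, lipConst (glue u β) x ∂μ
      ≤ ∫⁻ x, ∑' j, ((K j).indicator (lipConst (u j)) x +
          (S j).indicator (fun _ => (l j : ℝ≥0∞)) x) ∂μ :=
        (lintegral_mono_ae ((ae_restrict_iff' hW.measurableSet).2
          (h.ae_lipConst_glue_le_tsum hW hO hKO hu huL hF f))).trans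
          (setLIntegral_le_lintegral _ _)
    _ = ∑' j, ∫⁻ x, ((K j).indicator (lipConst (u j)) x +
          (S j).indicator (fun _ => (l j : ℝ≥0∞)) x) ∂μ :=
        lintegral_tsum fun j => (hlip j).add (aemeasurable_const.indicator₀ (hS j))
    _ ≤ ∑' j, (∫⁻ x in O j, lipConst (u j) x ∂μ + e j) := by
        gcongr with j
        rw [lintegral_add_left' (hlip j), lintegral_indicator (hK j)]
        exact add_le_add (lintegral_mono_set (hKO j))
          ((lintegral_indicator_const_le _ _).trans (he j))

lemma IsCutoffCover.totVarOn_le_tsum (h : IsCutoffCover W β l C K) (hW : IsOpen W)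
    (hO : ∀ j, IsOpen (O j)) (hKO : ∀ j, K j ⊆ O j) (hf : ∀ x, f x ∈ Icc (0 : ℝ) 1)
    (hfm : AEMeasurable f μ) : totVarOn μ f W ≤ ∑' j, totVarOn μ f (O j) := by
  rcases eq_or_ne (∑' j, totVarOn μ f (O j)) ⊤ with htop | hfinite
  · exact htop ▸ le_top
  refine totVarOn_le_of_approx hW fun L hL hLW ε hε => ?_
  have hK : ∀ j, MeasurableSet (K j) := fun j => (h.isCompact j).measurableSet
  choose F hF using h.exists_finset_forall_inter_iff
  obtain ⟨e, he, heε⟩ := ENNReal.exists_pos_sum_of_countable' (ENNReal.half_pos hε.ne').ne' J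
  obtain ⟨τ, hτ, hτe, hsmall⟩ := exists_pos_mul_measure_pos_le (μ := μ) (F := F) (e := e)
    (fun i j => by rw [hF, hF, inter_comm]) hK
    (fun j => (h.isCompact j).measure_lt_top)
    (fun j => (h.isCutoff j).lipschitzWith.continuous.measurable) l fun j => (he j).ne'
  choose u huL hu huτ hue using fun j => exists_approx_mem_Icc (hO j)
    (ENNReal.ne_top_of_tsum_ne_top hfinite j).lt_top hf (h.isCompact j) (hKO j) (hτ j) (he j).ne'
  have hnear : ∀ j, ∀ x ∈ O j, LipschitzNear (u j) x := fun j x => (huL j).lipschitzNear (hO j)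
  have hd : ∀ i, AEMeasurable ((K i).indicator fun x => |u i x - f x|) μ := fun i =>
    aemeasurable_indicator_abs_sub (hO i) (hK i) (hKO i) (huL i) hfm
  have hdτ : ∀ i, ∫⁻ x, ENNReal.ofReal ((K i).indicator (fun x => |u i x - f x|) x) ∂μ ≤ τ i :=
    fun i => (lintegral_ofReal_indicator (hK i) _).trans_le (huτ i)
  refine ⟨glue u β, .of_lipschitzNear fun x => h.lipschitzNear_glue hu hW hKO hnear, ?_, ?_⟩
  · exact ((h.setLIntegral_abs_glue_sub_le hu hL.measurableSet hLW hd).trans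
      (ENNReal.tsum_le_tsum fun i => (huτ i).trans (hτe i))).trans
      (heε.le.trans ENNReal.half_le_self)
  · calc ∫⁻ x in W, lipConst (glue u β) x ∂μ
        ≤ ∑' j, (∫⁻ x in O j, lipConst (u j) x ∂μ + e j) :=
          h.lintegral_lipConst_glue_le hW hO hKO hu hnear hF hd
            (hsmall _ (fun i => indicator_nonneg fun _ _ => abs_nonneg _) hd hdτ)
      _ ≤ ∑' j, (totVarOn μ f (O j) + e j + e j) := by
          gcongr with j
          exact hue j
      _ = ∑' j, totVarOn μ f (O j) + (∑' j, e j + ∑' j, e j) := by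
          rw [ENNReal.tsum_add, ENNReal.tsum_add, add_assoc]
      _ ≤ ∑' j, totVarOn μ f (O j) + (ε / 2 + ε / 2) := by gcongr
      _ = ∑' j, totVarOn μ f (O j) + ε := by rw [ENNReal.add_halves]

end GlueEnergy

end Gluing

section Subadditivity

section AnnularCover

variable {X : Type*} [TopologicalSpace X] {W : Set X}

/-- `W` is exhausted by compact cores `c k`, contained in open annuli `A k ⊆ W` of which at most
three meet at a point and only finitely many meet a given compact subset of `W`. -/
structure IsAnnularCover (W : Set X) (A c : ℕ → Set X) : Prop where
  isOpen : ∀ k, IsOpen (A k)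
  isCompact : ∀ k, IsCompact (c k)
  core_subset : ∀ k, c k ⊆ A k
  subset : ∀ k, A k ⊆ W
  cover : W ⊆ ⋃ k, c k
  finite_inter : ∀ L, IsCompact L → L ⊆ W → {k | (A k ∩ L).Nonempty}.Finite
  overlap : ∀ x, ∃ s : Finset ℕ, s.card ≤ 3 ∧ ∀ k, x ∈ A k → k ∈ s

lemma exists_isAnnularCover [T2Space X] [LocallyCompactSpace X] [SecondCountableTopology X]
    (hW : IsOpen W) : ∃ A c : ℕ → Set X, IsAnnularCover W A c := by
  classical
  obtain ⟨P, hP, hPint, hPW, hPx⟩ := exists_compact_exhaustion hW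
  refine ⟨fun k => interior (P (k + 1)) \ ⋃ m ∈ {m | m + 2 ≤ k}, P m,
    fun k => P k \ ⋃ m ∈ {m | m + 1 ≤ k}, interior (P m),
    ⟨fun k => ?_, fun k => ?_, fun k x hx => ?_,
    fun k x hx => hPW _ (interior_subset hx.1), fun x hx => ?_, fun L hL hLW => ?_, fun x => ?_⟩⟩
  · exact isOpen_interior.sdiff (((finite_le_nat k).subset fun m (hm : m + 2 ≤ k) =>
      show m ≤ k by lia).isClosed_biUnion fun m _ => (hP m).isClosed)
  · exact (hP k).diff (isOpen_biUnion fun _ _ => isOpen_interior)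
  · refine ⟨hPint k hx.1, fun hmem => ?_⟩
    obtain ⟨m, hm, hxm⟩ := mem_iUnion₂.1 hmem
    exact hx.2 (mem_iUnion₂.2 ⟨m + 1, hm, hPint m hxm⟩)
  · have hex : ∃ n, x ∈ P n :=
      (hPx {x} isCompact_singleton (singleton_subset_iff.2 hx)).imp fun n hn => hn rfl
    refine mem_iUnion.2 ⟨Nat.find hex, Nat.find_spec hex, fun hmem => ?_⟩
    obtain ⟨m, hm, hxm⟩ := mem_iUnion₂.1 hmem
    exact Nat.find_min hex hm (interior_subset hxm)
  · obtain ⟨n, hn⟩ := hPx L hL hLW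
    refine (finite_lt_nat (n + 2)).subset fun k ⟨x, hxA, hxL⟩ => ?_
    by_contra hk
    exact hxA.2 (mem_iUnion₂.2 ⟨n, (not_lt.1 hk : n + 2 ≤ k), hn hxL⟩)
  · by_cases hex : ∃ n, x ∈ P n
    · refine ⟨Finset.Icc (Nat.find hex - 1) (Nat.find hex + 1), by rw [Nat.card_Icc]; lia,
        fun k hk => Finset.mem_Icc.2 ⟨?_, ?_⟩⟩
      · have hle := Nat.find_min' hex (interior_subset hk.1)
        lia
      · by_contra hlt
        exact hk.2 (mem_iUnion₂.2 ⟨Nat.find hex, (by lia : Nat.find hex + 2 ≤ k),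
          Nat.find_spec hex⟩)
    · exact ⟨∅, by simp, fun k hk => (hex ⟨k + 1, interior_subset hk.1⟩).elim⟩

end AnnularCover

lemma sum_indicator_one_le_card {X ι : Type*} (F : Finset ι) {A : ι → Set X} {x : X}
    {s : Finset ι} (h : ∀ k ∈ F, x ∈ A k → k ∈ s) :
    ∑ k ∈ F, (A k).indicator (fun _ => (1 : ℝ≥0∞)) x ≤ s.card := by
  classical
  calc ∑ k ∈ F, (A k).indicator (fun _ => (1 : ℝ≥0∞)) x
      = (F.filter fun k => x ∈ A k).card := by
        simp only [indicator_apply, Finset.sum_boole]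
    _ ≤ s.card := by
        gcongr
        exact fun k hk => h k (Finset.mem_filter.1 hk).1 (Finset.mem_filter.1 hk).2

lemma exists_isOpen_totVarOn_lt {X : Type*} [PseudoMetricSpace X] [MeasurableSpace X]
    {μ : Measure X} {f : X → ℝ} {N : Set X} {c : ℝ≥0∞} (h : totVarSet μ f N < c) :
    ∃ W, IsOpen W ∧ N ⊆ W ∧ totVarOn μ f W < c := by
  simpa only [totVarSet, iInf_lt_iff, exists_prop] using h

lemma totVarSet_le_totVarOn {X : Type*} [PseudoMetricSpace X] [MeasurableSpace X]
    {μ : Measure X} {f : X → ℝ} {N W : Set X} (hW : IsOpen W) (h : N ⊆ W) :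
    totVarSet μ f N ≤ totVarOn μ f W :=
  iInf_le_of_le W (iInf₂_le hW h)

section OpenUnion

variable {X ι : Type*} [MetricSpace X] [ProperSpace X] {U : ι → Set X} {A c : ℕ → Set X}

lemma IsAnnularCover.exists_isCutoffCover (h : IsAnnularCover (⋃ i, U i) A c)
    (hU : ∀ i, IsOpen (U i)) :
    ∃ (t : ℕ → Finset ι) (β : (Σ k, t k) → X → ℝ) (l : (Σ k, t k) → ℝ≥0)
      (C K : (Σ k, t k) → Set X),
      IsCutoffCover (⋃ i, U i) β l C K ∧ ∀ j, K j ⊆ A j.1 ∩ U j.2 := by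
  choose t ht using fun k => (h.isCompact k).elim_finite_subcover U hU
    ((h.core_subset k).trans (h.subset k))
  choose D hD hDU hcD using fun k => (h.isCompact k).finite_compact_cover (t k)
    (fun i => A k ∩ U i) (fun i _ => (h.isOpen k).inter (hU i)) (fun x hx => by
      obtain ⟨i, hi, hxi⟩ := mem_iUnion₂.1 (ht k hx)
      exact mem_iUnion₂.2 ⟨i, hi, h.core_subset k hx, hxi⟩)
  choose β l K hβ hK _ hKO using fun j : Σ k, t k => exists_isCutoff (hD j.1 j.2)
    ((h.isOpen j.1).inter (hU j.2)) (hDU j.1 j.2)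
  refine ⟨t, β, l, fun j => D j.1 j.2, K, ⟨hβ, hK,
    fun j => (hKO j).trans (inter_subset_left.trans (h.subset j.1)), fun x hx => ?_,
    fun L hL hLW => ?_⟩, hKO⟩
  · obtain ⟨k, hk⟩ := mem_iUnion.1 (h.cover hx)
    rw [hcD k] at hk
    obtain ⟨i, hi, hxi⟩ := mem_iUnion₂.1 hk
    exact mem_iUnion.2 ⟨⟨k, i, hi⟩, hxi⟩
  · refine ((h.finite_inter L hL hLW).preimage' (f := Sigma.fst) fun k _ => ?_).subset
      fun j ⟨x, hxK, hxL⟩ => ⟨x, (hKO j hxK).1, hxL⟩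
    exact (finite_range (Sigma.mk k)).subset fun ⟨_, i⟩ hi => by
      obtain rfl : _ = k := hi
      exact mem_range_self i

variable [Countable ι] [MeasurableSpace X] [BorelSpace X] {μ : Measure X} {f : X → ℝ}
  [IsLocallyFiniteMeasure μ] [IsUnifLocDoublingMeasure μ]

lemma totVarOn_iUnion_le (hU : ∀ i, IsOpen (U i)) (hf : ∀ x, f x ∈ Icc (0 : ℝ) 1)
    (hfm : AEMeasurable f μ) : totVarOn μ f (⋃ i, U i) ≤ 3 * ∑' i, totVarOn μ f (U i) := by
  obtain ⟨A, c, h⟩ := exists_isAnnularCover (isOpen_iUnion hU)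
  obtain ⟨t, β, l, C, K, hcover, hKO⟩ := h.exists_isCutoffCover hU
  have hannuli : ∀ i, ∑' k, totVarOn μ f (A k ∩ U i) ≤ 3 * totVarOn μ f (U i) := fun i => by
    rw [ENNReal.tsum_eq_iSup_sum]
    refine iSup_le fun F => sum_totVarOn_le (m := 3) (hU i) F _
      (fun k _ => (h.isOpen k).inter (hU i)) (fun k _ => inter_subset_right) three_ne_zero
      fun x => ?_
    obtain ⟨s, hs, hxs⟩ := h.overlap x
    exact (sum_indicator_one_le_card F fun k _ hk => hxs k hk.1).trans (by exact_mod_cast hs)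
  calc totVarOn μ f (⋃ i, U i)
      ≤ ∑' j : Σ k, t k, totVarOn μ f (A j.1 ∩ U j.2) :=
        hcover.totVarOn_le_tsum (isOpen_iUnion hU) (fun j => (h.isOpen j.1).inter (hU j.2)) hKO
          hf hfm
    _ = ∑' k, ∑' i : t k, totVarOn μ f (A k ∩ U i) :=
        ENNReal.tsum_sigma' fun j : Σ k, t k => totVarOn μ f (A j.1 ∩ U j.2)
    _ ≤ ∑' k, ∑' i, totVarOn μ f (A k ∩ U i) := by
        gcongr with k
        exact ENNReal.tsum_comp_le_tsum_of_injective Subtype.val_injective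
          fun i => totVarOn μ f (A k ∩ U i)
    _ = ∑' i, ∑' k, totVarOn μ f (A k ∩ U i) := ENNReal.tsum_comm
    _ ≤ 3 * ∑' i, totVarOn μ f (U i) := by
        rw [← ENNReal.tsum_mul_left]
        exact ENNReal.tsum_le_tsum hannuli

lemma totVarSet_iUnion_eq_zero {N : ι → Set X} (hf : ∀ x, f x ∈ Icc (0 : ℝ) 1)
    (hfm : AEMeasurable f μ) (hN : ∀ i, totVarSet μ f (N i) = 0) :
    totVarSet μ f (⋃ i, N i) = 0 := by
  refine le_antisymm (ENNReal.le_of_forall_pos_le_add fun ε hε _ => ?_) bot_le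
  obtain ⟨e, he, heε⟩ := ENNReal.exists_pos_sum_of_countable'
    (ENNReal.div_pos (ENNReal.coe_ne_zero.2 hε.ne') (ENNReal.ofNat_ne_top (n := 3))).ne' ι
  choose W hW hNW hWe using fun i => exists_isOpen_totVarOn_lt ((hN i).trans_lt (he i))
  calc totVarSet μ f (⋃ i, N i)
      ≤ totVarOn μ f (⋃ i, W i) :=
        totVarSet_le_totVarOn (isOpen_iUnion hW) (iUnion_mono hNW)
    _ ≤ 3 * ∑' i, totVarOn μ f (W i) := totVarOn_iUnion_le hW hf hfm
    _ ≤ 3 * (ε / 3) := by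
        gcongr
        exact (ENNReal.tsum_le_tsum fun i => (hWe i).le).trans heε.le
    _ ≤ 0 + ε := ENNReal.mul_div_le.trans_eq (zero_add _).symm

lemma totVarSet_union_eq_zero {A B : Set X} (hf : ∀ x, f x ∈ Icc (0 : ℝ) 1)
    (hfm : AEMeasurable f μ) (hA : totVarSet μ f A = 0) (hB : totVarSet μ f B = 0) :
    totVarSet μ f (A ∪ B) = 0 := by
  rw [union_eq_iUnion]
  exact totVarSet_iUnion_eq_zero hf hfm (Bool.forall_bool.2 ⟨hB, hA⟩)

end OpenUnion

end Subadditivity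

lemma exists_disjoint_balls_covering {X : Type*} [PseudoMetricSpace X]
    [TopologicalSpace.SeparableSpace X] {A : Set X}
    {r : X → ℝ} {R : ℝ} (hr₀ : ∀ x ∈ A, 0 < r x) (hr : ∀ x ∈ A, r x ≤ R) :
    ∃ t ⊆ A, t.Countable ∧ t.PairwiseDisjoint (fun x => closedBall x (r x)) ∧
      A ⊆ ⋃ b ∈ t, ball b (6 * r b) := by
  obtain ⟨t, htA, hdisj, hcov⟩ := Vitali.exists_disjoint_subfamily_covering_enlargement_closedBall
    A id r R hr 5 (by norm_num)
  refine ⟨t, htA, hdisj.countable_of_nonempty_interior fun x hx => ⟨x, ?_⟩, hdisj, fun x hx => ?_⟩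
  · exact ball_subset_interior_closedBall (mem_ball_self (hr₀ x (htA hx)))
  · obtain ⟨b, hb, hsub⟩ := hcov x hx
    refine mem_iUnion₂.2 ⟨b, hb,
      closedBall_subset_ball ?_ (hsub (mem_closedBall_self (hr₀ x hx).le))⟩
    linarith [hr₀ b (htA hb)]

section Competitors

/-- `w` is a competitor of `f` in `ball x r`: it takes values in `[0, 1]`, agrees with `f` off a
compact subset of the ball, and saves there the proportion `c` of the variation of `f` on
`ball x (6 * r)`, at an `L¹` cost of at most `C * r` times that variation. The factor `6` is the
enlargement needed to turn disjoint balls into a Vitali covering. -/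
structure IsCompetitor {X : Type*} [PseudoMetricSpace X] [MeasurableSpace X] (μ : Measure X)
    (f : X → ℝ) (c C : ℝ≥0∞) (x : X) (r : ℝ) (w : X → ℝ) : Prop where
  mem_Icc : ∀ y, w y ∈ Icc (0 : ℝ) 1
  aemeasurable : AEMeasurable w μ
  exists_compact : ∃ K, IsCompact K ∧ K ⊆ ball x r ∧ ∀ y ∉ K, w y = f y
  totVarOn_add_le : totVarOn μ w (ball x r) + c * totVarOn μ f (ball x (6 * r)) ≤
    totVarOn μ f (ball x r)
  lintegral_le : ∫⁻ y, ENNReal.ofReal |w y - f y| ∂μ ≤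
    C * ENNReal.ofReal r * totVarOn μ f (ball x (6 * r))

variable {X : Type*} [MetricSpace X] [ProperSpace X] [MeasurableSpace X] [BorelSpace X]
  {μ : Measure X} {f v w : X → ℝ} {c C : ℝ≥0∞} {x : X} {r δ : ℝ} {A t : Set X}

lemma sum_totVarOn_le_of_disjoint {ι : Type*} {F : Finset ι} {U : ι → Set X} {W : Set X}
    (hW : IsOpen W) (hU : ∀ i ∈ F, IsOpen (U i)) (hUW : ∀ i ∈ F, U i ⊆ W)
    (hdisj : (F : Set ι).PairwiseDisjoint U) :
    ∑ i ∈ F, totVarOn μ f (U i) ≤ totVarOn μ f W := by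
  refine (sum_totVarOn_le (m := 1) hW F U hU hUW one_ne_zero fun x => ?_).trans_eq
    (by rw [Nat.cast_one, one_mul])
  by_cases hx : ∃ i ∈ F, x ∈ U i
  · obtain ⟨i, hiF, hi⟩ := hx
    refine (sum_indicator_one_le_card F (s := {i}) fun k hkF hk => ?_).trans_eq (by simp)
    rw [Finset.mem_singleton]
    by_contra hki
    exact (hdisj hkF hiF hki).notMem_of_mem_left hk hi
  · exact (sum_indicator_one_le_card F (s := ∅) fun k hkF hk => (hx ⟨k, hkF, hk⟩).elim).trans
      (by simp)

variable [IsLocallyFiniteMeasure μ] [IsUnifLocDoublingMeasure μ]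

lemma totVarSet_le_of_covering (hf : ∀ x, f x ∈ Icc (0 : ℝ) 1) (hfm : AEMeasurable f μ)
    {r : X → ℝ} (ht : t.Countable) (hA : A ⊆ ⋃ b ∈ t, ball b (6 * r b)) :
    totVarSet μ f A ≤ 3 * ∑' b : t, totVarOn μ f (ball (b : X) (6 * r b)) := by
  have : Countable t := ht.to_subtype
  rw [biUnion_eq_iUnion] at hA
  exact (totVarSet_le_totVarOn (isOpen_iUnion fun _ => isOpen_ball) hA).trans
    (totVarOn_iUnion_le (fun _ => isOpen_ball) hf hfm)

lemma IsCompetitor.exists_insert (hw : IsCompetitor μ f c C x r w) (hfm : AEMeasurable f μ)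
    (hV : totVarOn μ f (ball x r) ≠ ⊤) (hv : ∀ y, v y ∈ Icc (0 : ℝ) 1) (hvm : AEMeasurable v μ)
    (hvf : ∀ y ∈ ball x r, v y = f y) :
    ∃ v' : X → ℝ, (∀ y, v' y ∈ Icc (0 : ℝ) 1) ∧ AEMeasurable v' μ ∧
      (∀ y ∉ ball x r, v' y = v y) ∧
      totVarOn μ v' univ + c * totVarOn μ f (ball x (6 * r)) ≤ totVarOn μ v univ ∧
      ∫⁻ y, ENNReal.ofReal |v' y - f y| ∂μ ≤ ∫⁻ y, ENNReal.ofReal |v y - f y| ∂μ +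
        C * ENNReal.ofReal r * totVarOn μ f (ball x (6 * r)) := by
  obtain ⟨K, hK, hKU, hwf⟩ := hw.exists_compact
  set v' : X → ℝ := fun y => v y + (w y - f y)
  have hoff : ∀ y ∉ K, v' y = v y := fun y hy => by
    simp only [v', hwf y hy, sub_self, add_zero]
  have hon : ∀ y ∈ ball x r, v' y = w y := fun y hy => by simp only [v', hvf y hy, add_sub_cancel]
  have hv'm : AEMeasurable v' μ := hvm.add (hw.aemeasurable.sub hfm)
  have hv' : ∀ y, v' y ∈ Icc (0 : ℝ) 1 := fun y => by
    by_cases hy : y ∈ K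
    · exact hon y (hKU hy) ▸ hw.mem_Icc y
    · exact hoff y hy ▸ hv y
  refine ⟨v', hv', hv'm, fun y hy => hoff y fun hyK => hy (hKU hyK), ?_, ?_⟩
  · have hswap := totVarOn_swap (μ := μ) isOpen_ball hK hKU hv hv' hvm hv'm
      fun y hy => (hoff y hy).symm
    rw [totVarOn_congr hvf, totVarOn_congr hon] at hswap
    refine (ENNReal.add_le_add_iff_right hV).1 ?_
    calc totVarOn μ v' univ + c * totVarOn μ f (ball x (6 * r)) + totVarOn μ f (ball x r)
        = totVarOn μ v' univ + totVarOn μ f (ball x r) + c * totVarOn μ f (ball x (6 * r)) :=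
          add_right_comm _ _ _
      _ ≤ totVarOn μ v univ + totVarOn μ w (ball x r) + c * totVarOn μ f (ball x (6 * r)) := by
          gcongr
      _ ≤ totVarOn μ v univ + totVarOn μ f (ball x r) := by
          rw [add_assoc]
          gcongr
          exact hw.totVarOn_add_le
  · refine (lintegral_ofReal_abs_sub_le_add hv'm hvm).trans ?_
    simp only [v', add_sub_cancel_left]
    rw [add_comm]
    gcongr
    exact hw.lintegral_le

lemma exists_modification_of_disjoint_competitors (hf : ∀ x, f x ∈ Icc (0 : ℝ) 1)
    (hfm : AEMeasurable f μ) (hV : totVarOn μ f univ ≠ ⊤) {r : X → ℝ} {w : X → X → ℝ}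
    {G : Finset X} (hw : ∀ b ∈ G, IsCompetitor μ f c C b (r b) (w b)) (hr : ∀ b ∈ G, r b ≤ δ)
    (hdisj : (G : Set X).PairwiseDisjoint fun b => ball b (r b)) :
    ∃ v : X → ℝ, (∀ y, v y ∈ Icc (0 : ℝ) 1) ∧ AEMeasurable v μ ∧
      (∀ y, (∀ b ∈ G, y ∉ ball b (r b)) → v y = f y) ∧
      totVarOn μ v univ + c * ∑ b ∈ G, totVarOn μ f (ball b (6 * r b)) ≤ totVarOn μ f univ ∧
      ∫⁻ y, ENNReal.ofReal |v y - f y| ∂μ ≤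
        C * ENNReal.ofReal δ * ∑ b ∈ G, totVarOn μ f (ball b (6 * r b)) := by
  classical
  induction G using Finset.induction_on with
  | empty => exact ⟨f, hf, hfm, fun _ _ => rfl, by simp, by simp⟩
  | insert b G hbG ih =>
    rw [Finset.forall_mem_insert] at hw hr
    rw [Finset.coe_insert, pairwiseDisjoint_insert_of_notMem hbG] at hdisj
    obtain ⟨v, hv, hvm, hvf, hvV, hvI⟩ := ih hw.2 hr.2 hdisj.1
    have hVb : totVarOn μ f (ball b (r b)) ≠ ⊤ := ne_top_of_le_ne_top hV
      (totVarOn_mono (subset_univ _))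
    obtain ⟨v', hv', hv'm, hv'v, hv'V, hv'I⟩ := hw.1.exists_insert hfm hVb hv hvm
      fun y hy => hvf y fun a ha => (hdisj.2 a ha).notMem_of_mem_left hy
    refine ⟨v', hv', hv'm, fun y hy => ?_, ?_, ?_⟩
    · rw [Finset.forall_mem_insert] at hy
      rw [hv'v y hy.1, hvf y hy.2]
    · rw [Finset.sum_insert hbG, mul_add, ← add_assoc]
      exact (add_le_add_left hv'V _).trans hvV
    · rw [Finset.sum_insert hbG, mul_add, add_comm (_ * _)]
      refine hv'I.trans (add_le_add hvI ?_)
      gcongr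
      exact hr.1

lemma exists_disjoint_balls_lt_sum_totVarOn (hf : ∀ x, f x ∈ Icc (0 : ℝ) 1)
    (hfm : AEMeasurable f μ) (hA : totVarSet μ f A ≠ 0) (hA' : totVarSet μ f A ≠ ⊤) {r : X → ℝ}
    (hr₀ : ∀ x ∈ A, 0 < r x) (hr : ∀ x ∈ A, r x ≤ δ) :
    ∃ F : Finset X, (F : Set X) ⊆ A ∧ (F : Set X).PairwiseDisjoint (fun b => ball b (r b)) ∧
      totVarSet μ f A / 6 < ∑ b ∈ F, totVarOn μ f (ball b (6 * r b)) := by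
  classical
  obtain ⟨t, htA, htc, hdisj, hcov⟩ := exists_disjoint_balls_covering hr₀ hr
  have hlt : totVarSet μ f A / 6 < ∑' b : t, totVarOn μ f (ball (b : X) (6 * r b)) := by
    by_contra! hle
    refine (ENNReal.half_lt_self hA hA').not_ge ?_
    calc totVarSet μ f A
        ≤ 3 * (totVarSet μ f A / 6) :=
          (totVarSet_le_of_covering hf hfm htc hcov).trans (by gcongr)
      _ = totVarSet μ f A / 2 := by
          rw [← mul_div_assoc, mul_comm, show (6 : ℝ≥0∞) = 2 * 3 by norm_num]
          exact ENNReal.mul_div_mul_right _ _ (by norm_num) (by norm_num)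
  rw [ENNReal.tsum_eq_iSup_sum] at hlt
  obtain ⟨F, hF⟩ := lt_iSup_iff.1 hlt
  have hFt : (F.map (Function.Embedding.subtype _) : Set X) ⊆ t := by
    simp only [Finset.coe_map, Function.Embedding.subtype_apply, image_subset_iff]
    exact fun b _ => b.2
  refine ⟨F.map (Function.Embedding.subtype _), hFt.trans htA,
    (hdisj.subset hFt).mono fun b => ball_subset_closedBall, ?_⟩
  rwa [Finset.sum_map]

lemma exists_energy_saving (hf : ∀ x, f x ∈ Icc (0 : ℝ) 1) (hfm : AEMeasurable f μ)
    (hV : totVarOn μ f univ ≠ ⊤) (hA : totVarSet μ f A ≠ 0)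
    (h : ∀ x ∈ A, ∃ᶠ r in 𝓝[>] (0 : ℝ), ∃ w, IsCompetitor μ f c C x r w) (hδ : 0 < δ) :
    ∃ v : X → ℝ, AEMeasurable v μ ∧
      totVarOn μ v univ + c * (totVarSet μ f A / 6) ≤ totVarOn μ f univ ∧
      c * ∫⁻ y, ENNReal.ofReal |v y - f y| ∂μ ≤ C * ENNReal.ofReal δ * totVarOn μ f univ := by
  have hscale : ∀ x ∈ A, ∃ r, 0 < r ∧ r < δ ∧ ∃ w, IsCompetitor μ f c C x r w := fun x hx => by
    obtain ⟨r, hw, hr⟩ := ((h x hx).and_eventually (Ioo_mem_nhdsGT hδ)).exists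
    exact ⟨r, hr.1, hr.2, hw⟩
  choose! r hr₀ hr w hw using hscale
  obtain ⟨F, hFA, hdisj, hF⟩ := exists_disjoint_balls_lt_sum_totVarOn hf hfm hA
    (ne_top_of_le_ne_top hV (totVarSet_le_totVarOn isOpen_univ (subset_univ A))) hr₀
    fun x hx => (hr x hx).le
  obtain ⟨v, -, hvm, -, hvV, hvI⟩ := exists_modification_of_disjoint_competitors hf hfm hV
    (fun b hb => hw b (hFA hb)) (fun b hb => (hr b (hFA hb)).le) hdisj
  have hsum : c * ∑ b ∈ F, totVarOn μ f (ball b (6 * r b)) ≤ totVarOn μ f univ := by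
    rw [Finset.mul_sum]
    exact (Finset.sum_le_sum fun b hb => le_add_self.trans (hw b (hFA hb)).totVarOn_add_le).trans
      (sum_totVarOn_le_of_disjoint isOpen_univ (fun _ _ => isOpen_ball)
        (fun _ _ => subset_univ _) hdisj)
  refine ⟨v, hvm, le_trans (by gcongr) hvV, ?_⟩
  calc c * ∫⁻ y, ENNReal.ofReal |v y - f y| ∂μ
      ≤ c * (C * ENNReal.ofReal δ * ∑ b ∈ F, totVarOn μ f (ball b (6 * r b))) := by gcongr
    _ = C * ENNReal.ofReal δ * (c * ∑ b ∈ F, totVarOn μ f (ball b (6 * r b))) := by ring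
    _ ≤ C * ENNReal.ofReal δ * totVarOn μ f univ := by gcongr

lemma totVarSet_eq_zero_of_competitors (hf : ∀ x, f x ∈ Icc (0 : ℝ) 1) (hfm : AEMeasurable f μ)
    (hV : totVarOn μ f univ ≠ ⊤) (hc : c ≠ 0) (hC : C ≠ ⊤)
    (h : ∀ x ∈ A, ∃ᶠ r in 𝓝[>] (0 : ℝ), ∃ w, IsCompetitor μ f c C x r w) :
    totVarSet μ f A = 0 := by
  by_contra hA
  have hAV : totVarSet μ f A ≤ totVarOn μ f univ :=
    totVarSet_le_totVarOn isOpen_univ (subset_univ A)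
  have hA6 : totVarSet μ f A / 6 ≠ 0 := ENNReal.div_ne_zero.2 ⟨hA, by norm_num⟩
  have hsaving : totVarOn μ f univ ≤ totVarOn μ f univ - c * (totVarSet μ f A / 6) := by
    refine totVarOn_le_of_approx_totVarOn isOpen_univ fun K _ _ ε hε => ?_
    obtain ⟨δ, hδ, hδε⟩ := ENNReal.exists_nnreal_pos_mul_lt (ENNReal.mul_ne_top hC hV)
      (mul_ne_zero hc hε.ne')
    obtain ⟨v, hvm, hvV, hvI⟩ := exists_energy_saving hf hfm hV hA h (NNReal.coe_pos.2 hδ)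
    have hcA : c * (totVarSet μ f A / 6) ≠ ⊤ := ne_top_of_le_ne_top hV (le_add_self.trans hvV)
    have hc' : c ≠ ⊤ := fun h => hcA (h ▸ ENNReal.top_mul hA6)
    refine ⟨v, hvm, (setLIntegral_le_lintegral _ _).trans
      ((ENNReal.mul_le_mul_iff_right hc hc').1 (hvI.trans ?_)), le_add_right
      (ENNReal.le_sub_of_add_le_right hcA hvV)⟩
    rw [ENNReal.ofReal_coe_nnreal, mul_comm C, mul_assoc]
    exact hδε.le
  exact (ENNReal.sub_lt_self hV (fun h0 => hA (le_bot_iff.1 (hAV.trans_eq h0)))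
    (mul_ne_zero hc hA6)).not_ge hsaving

end Competitors

section SmallDensity

variable {X : Type*} [MetricSpace X] [ProperSpace X] [MeasurableSpace X] [BorelSpace X]
  {μ : Measure X} [IsLocallyFiniteMeasure μ] [IsUnifLocDoublingMeasure μ] {f : X → ℝ} {A : Set X}

lemma totVarSet_le_of_density_le (hf : ∀ x, f x ∈ Icc (0 : ℝ) 1) (hfm : AEMeasurable f μ)
    {x₀ : X} {R : ℝ} (hA : A ⊆ ball x₀ R) {η : ℝ≥0∞}
    (h : ∀ x ∈ A, ∃ r ∈ Ioo (0 : ℝ) 1, totVarOn μ f (ball x (6 * r)) ≤ η * μ (ball x r)) :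
    totVarSet μ f A ≤ 3 * (η * μ (ball x₀ (R + 1))) := by
  choose! r hr hdens using h
  obtain ⟨t, htA, htc, htd, hcov⟩ :=
    exists_disjoint_balls_covering (fun x hx => (hr x hx).1) fun x hx => (hr x hx).2.le
  have : Countable t := htc.to_subtype
  have hdisj : Pairwise (Function.onFun Disjoint fun b : t => ball (b : X) (r b)) :=
    fun a b hab => (htd a.2 b.2 (Subtype.coe_injective.ne hab)).mono ball_subset_closedBall
      ball_subset_closedBall
  have hsub : ⋃ b : t, ball (b : X) (r b) ⊆ ball x₀ (R + 1) := iUnion_subset fun b =>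
    ball_subset_ball' <| by
      linarith [(hr b (htA b.2)).2, mem_ball.1 (hA (htA b.2))]
  refine (totVarSet_le_of_covering hf hfm htc hcov).trans ?_
  gcongr
  calc ∑' b : t, totVarOn μ f (ball (b : X) (6 * r b))
      ≤ ∑' b : t, η * μ (ball (b : X) (r b)) :=
        ENNReal.tsum_le_tsum fun b => hdens b (htA b.2)
    _ = η * μ (⋃ b : t, ball (b : X) (r b)) := by
        rw [ENNReal.tsum_mul_left, measure_iUnion hdisj fun _ => measurableSet_ball]
    _ ≤ η * μ (ball x₀ (R + 1)) := by gcongr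

lemma totVarSet_setOf_density_eq_zero (hf : ∀ x, f x ∈ Icc (0 : ℝ) 1) (hfm : AEMeasurable f μ) :
    totVarSet μ f {x | ∀ η : ℝ≥0∞, η ≠ 0 →
      ∃ r ∈ Ioo (0 : ℝ) 1, totVarOn μ f (ball x (6 * r)) ≤ η * μ (ball x r)} = 0 := by
  set Z := {x | ∀ η : ℝ≥0∞, η ≠ 0 →
    ∃ r ∈ Ioo (0 : ℝ) 1, totVarOn μ f (ball x (6 * r)) ≤ η * μ (ball x r)}
  rcases isEmpty_or_nonempty X with hX | ⟨⟨x₀⟩⟩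
  · rw [eq_empty_of_isEmpty Z]
    exact le_bot_iff.1 ((totVarSet_le_totVarOn isOpen_empty subset_rfl).trans_eq (totVarOn_empty f))
  rw [← inter_univ Z, ← iUnion_ball_nat x₀, inter_iUnion]
  refine totVarSet_iUnion_eq_zero hf hfm fun n =>
    le_bot_iff.1 (ENNReal.le_of_forall_pos_le_add fun ε hε _ => ?_)
  obtain ⟨η, hη, hηε⟩ := ENNReal.exists_nnreal_pos_mul_lt
    (ENNReal.mul_ne_top (by norm_num : (3 : ℝ≥0∞) ≠ ⊤)
      (measure_ball_lt_top (μ := μ) (x := x₀) (r := n + 1)).ne)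
    (ENNReal.coe_ne_zero.2 hε.ne')
  have hle : totVarSet μ f (Z ∩ ball x₀ n) ≤ 3 * (η * μ (ball x₀ (n + 1))) :=
    totVarSet_le_of_density_le hf hfm inter_subset_right fun x hx =>
      hx.1 η (ENNReal.coe_ne_zero.2 hη.ne')
  rw [bot_eq_zero, zero_add]
  exact hle.trans ((mul_left_comm _ _ _).trans_lt hηε).le

end SmallDensity

section Cut

variable {X : Type*} [PseudoMetricSpace X] {f ζ : X → ℝ} {U D K E : Set X} {l : ℝ≥0}

lemma isCutoff_ball (x : X) {ρ : ℝ} (hρ : 0 < ρ) :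
    IsCutoff (fun y => 2 / ρ * max 0 (dist y x - ρ)) (2 / ρ).toNNReal (ball x ρ)
      (closedBall x (3 / 2 * ρ)) where
  lipschitzWith := LipschitzWith.of_dist_le_mul fun y z => by
    rw [Real.coe_toNNReal _ (by positivity), Real.dist_eq, ← mul_sub, abs_mul,
      abs_of_pos (by positivity)]
    gcongr
    refine (abs_max_sub_max_le_max _ _ _ _).trans (max_le (by simp) ?_)
    rw [sub_sub_sub_cancel_right]
    exact abs_dist_sub_le y z x
  nonneg y := by positivity
  eq_zero y hy := by
    rw [max_eq_left (by linarith [mem_ball.1 hy]), mul_zero]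
  one_le y hy := by
    rw [mem_closedBall, not_le] at hy
    calc (1 : ℝ) = 2 / ρ * (ρ / 2) := by field_simp
      _ ≤ 2 / ρ * max 0 (dist y x - ρ) := by
          gcongr
          exact le_max_of_le_right (by linarith)

lemma IsCutoff.min_mem_Icc (hζ : IsCutoff ζ l D K) (hf : ∀ x, f x ∈ Icc (0 : ℝ) 1) (y : X) :
    min (f y) (ζ y) ∈ Icc (0 : ℝ) 1 :=
  ⟨le_min (hf y).1 (hζ.nonneg y), min_le_of_left_le (hf y).2⟩

lemma IsCutoff.min_eq_of_notMem (hζ : IsCutoff ζ l D K) (hf : ∀ x, f x ∈ Icc (0 : ℝ) 1) {y : X}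
    (hy : y ∉ K) : min (f y) (ζ y) = f y :=
  min_eq_left ((hf y).2.trans (hζ.one_le y hy))

variable [MeasurableSpace X] {μ : Measure X}

lemma IsCutoff.lintegral_min_sub_le (hζ : IsCutoff ζ l D K) (hf : ∀ x, f x ∈ Icc (0 : ℝ) 1)
    (hfE : ∀ x ∉ E, f x = 0) : ∫⁻ y, ENNReal.ofReal |min (f y) (ζ y) - f y| ∂μ ≤ μ (E ∩ K) := by
  refine (lintegral_mono fun y => ?_).trans
    ((lintegral_indicator_const_le (E ∩ K) 1).trans_eq (one_mul _))
  by_cases hy : y ∈ E ∩ K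
  · rw [indicator_of_mem hy, ← ENNReal.ofReal_one]
    have hmin := hζ.min_mem_Icc hf y
    exact ENNReal.ofReal_le_ofReal (abs_sub_le_iff.2
      ⟨by linarith [hmin.2, (hf y).1], by linarith [hmin.1, (hf y).2]⟩)
  · have heq : min (f y) (ζ y) = f y := by
      by_cases hE : y ∈ E
      · exact hζ.min_eq_of_notMem hf fun hK => hy ⟨hE, hK⟩
      · rw [hfE y hE]
        exact min_eq_left (hζ.nonneg y)
    rw [heq, sub_self, abs_zero, ENNReal.ofReal_zero]
    exact bot_le

end Cut

section CutEnergy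

variable {X : Type*} [MetricSpace X] [ProperSpace X] [MeasurableSpace X] [BorelSpace X]
  {μ : Measure X} [IsLocallyFiniteMeasure μ] [IsUnifLocDoublingMeasure μ]
  {f ζ u : X → ℝ} {U D K E : Set X} {l : ℝ≥0}

lemma IsCutoff.ae_lipConst_min_add_le (hζ : IsCutoff ζ l D K) (hU : IsOpen U)
    (hfE : ∀ x ∉ E, f x = 0) (hu : ∀ x ∈ U, LipschitzNear u x)
    (hu' : ∀ x, u x ∈ Icc (0 : ℝ) 1) :
    ∀ᵐ y ∂μ, y ∈ U → lipConst (fun z => min (u z) (ζ z)) y + D.indicator (lipConst u) y ≤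
      lipConst u y +
        ((E ∩ U) ∪ (K ∩ {y | 0 < ζ y ∧ ζ y ≤ |u y - f y|})).indicator
          (fun _ => (l : ℝ≥0∞)) y := by
  have hζL := lipschitzNear_of_lipschitzWith hζ.lipschitzWith
  have hmin : ∀ x ∈ U, LipschitzNear (fun z => min (u z) (ζ z)) x := fun x hx =>
    (hu x hx).min (hζL x)
  filter_upwards [ae_lipConst_eq_of_eq (μ := μ) hU hmin hu,
    ae_lipConst_eq_of_eq (μ := μ) hU hmin fun y _ => hζL y,
    ae_lipConst_eq_of_eq (μ := μ) hU hmin fun y _ => lipschitzNear_const 0 y]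
    with y hleft hright hzero hy
  rcases (hζ.nonneg y).eq_or_lt with hy₀ | hy₀
  · rw [hzero hy (by rw [← hy₀]; exact min_eq_right (hu' y).1), lipConst_const, zero_add]
    exact (indicator_le_self _ _ _).trans le_self_add
  rw [indicator_of_notMem (s := D) fun h => hy₀.ne' (hζ.eq_zero y h), add_zero]
  rcases le_or_gt (u y) (ζ y) with h | h
  · rw [hleft hy (min_eq_left h)]
    exact le_self_add
  have hmem : y ∈ (E ∩ U) ∪ (K ∩ {y | 0 < ζ y ∧ ζ y ≤ |u y - f y|}) := by
    by_cases hyE : y ∈ E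
    · exact Or.inl ⟨hyE, hy⟩
    · refine Or.inr ⟨?_, hy₀, ?_⟩
      · by_contra hyK
        linarith [hζ.one_le y hyK, (hu' y).2]
      · rw [hfE y hyE, sub_zero]
        exact h.le.trans (le_abs_self _)
  rw [hright hy (min_eq_right h.le), indicator_of_mem hmem]
  exact (lipConst_le_of_lipschitzOnWith univ_mem hζ.lipschitzWith.lipschitzOnWith).trans
    le_add_self

lemma IsCutoff.lintegral_lipConst_min_add_le (hζ : IsCutoff ζ l D K) (hU : IsOpen U)
    (hD : IsOpen D) (hDU : D ⊆ U) (hK : MeasurableSet K) (hfE : ∀ x ∉ E, f x = 0)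
    (hu : ∀ x ∈ U, LipschitzNear u x) (hu' : ∀ x, u x ∈ Icc (0 : ℝ) 1) :
    ∫⁻ y in U, lipConst (fun z => min (u z) (ζ z)) y ∂μ + ∫⁻ y in D, lipConst u y ∂μ ≤
      ∫⁻ y in U, lipConst u y ∂μ +
        l * (μ (E ∩ U) + μ.restrict K {y | 0 < ζ y ∧ ζ y ≤ |u y - f y|}) := by
  have hmu : AEMeasurable (lipConst u) (μ.restrict U) := aemeasurable_lipConst hU
    fun x hx => (hu x hx).continuousAt.continuousWithinAt
  have hindicator : ∫⁻ y in D, lipConst u y ∂μ = ∫⁻ y in U, D.indicator (lipConst u) y ∂μ := by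
    rw [lintegral_indicator hD.measurableSet, Measure.restrict_restrict hD.measurableSet,
      inter_eq_left.2 hDU]
  rw [hindicator]
  refine (le_lintegral_add _ _).trans ((lintegral_mono_ae ((ae_restrict_iff' hU.measurableSet).2
    (hζ.ae_lipConst_min_add_le hU hfE hu hu'))).trans ?_)
  rw [lintegral_add_left' hmu, Measure.restrict_apply' hK, inter_comm _ K]
  gcongr
  refine (lintegral_indicator_const_le _ _).trans ?_
  gcongr
  exact (Measure.restrict_le_self _).trans (measure_union_le _ _)

lemma IsCutoff.totVarOn_min_add_le (hζ : IsCutoff ζ l D K) (hU : IsOpen U) (hD : IsOpen D)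
    (hDU : D ⊆ U) (hK : IsCompact K) (hKU : K ⊆ U) (hf : ∀ x, f x ∈ Icc (0 : ℝ) 1)
    (hfm : AEMeasurable f μ) (hfE : ∀ x ∉ E, f x = 0) (hV : totVarOn μ f U < ⊤) :
    totVarOn μ (fun y => min (f y) (ζ y)) U + totVarOn μ f D ≤
      totVarOn μ f U + l * μ (E ∩ U) := by
  obtain ⟨u, hu, hu', hlim, henergy⟩ := exists_optimal_seq_mem_Icc hU hV hf
  have hζL := lipschitzNear_of_lipschitzWith hζ.lipschitzWith
  have hbad : Tendsto (fun i => μ.restrict K {y | 0 < ζ y ∧ ζ y ≤ |u i y - f y|}) atTop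
      (𝓝 0) := by
    have : IsFiniteMeasure (μ.restrict K) := ⟨by simpa using hK.measure_lt_top⟩
    refine tendsto_measure_pos_le hζ.lipschitzWith.continuous.measurable (fun i => ?_)
      (hlim K hK.isClosed hK.isBounded hKU)
    have hui : AEMeasurable (u i) (μ.restrict K) :=
      ((hu i).aemeasurable hU).mono_measure (Measure.restrict_mono hKU le_rfl)
    have hfK : AEMeasurable f (μ.restrict K) := hfm.restrict
    fun_prop
  have hmin : ∀ i, LocallyLipschitzOnSet (fun y => min (u i y) (ζ y)) U := fun i =>
    LocallyLipschitzOnSet.of_lipschitzNear fun y hy =>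
      ((hu i).lipschitzNear hU hy).min (hζL y)
  calc totVarOn μ (fun y => min (f y) (ζ y)) U + totVarOn μ f D
      ≤ liminf (fun i => ∫⁻ y in U, lipConst (fun z => min (u i z) (ζ z)) y ∂μ) atTop +
          liminf (fun i => ∫⁻ y in D, lipConst (u i) y ∂μ) atTop :=
        add_le_add (totVarOn_le_liminf hmin (hlim.min_right ζ))
          (totVarOn_le_liminf (fun i => (hu i).mono hDU) (hlim.mono hDU))
    _ ≤ liminf (fun i => ∫⁻ y in U, lipConst (fun z => min (u i z) (ζ z)) y ∂μ +
          ∫⁻ y in D, lipConst (u i) y ∂μ) atTop := liminf_add_liminf_le _ _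
    _ ≤ liminf (fun i => ∫⁻ y in U, lipConst (u i) y ∂μ +
          l * (μ (E ∩ U) + μ.restrict K {y | 0 < ζ y ∧ ζ y ≤ |u i y - f y|})) atTop :=
        liminf_le_liminf (Eventually.of_forall fun i => hζ.lintegral_lipConst_min_add_le hU hD hDU
          hK.measurableSet hfE (fun _ => (hu i).lipschitzNear hU) (hu' i))
    _ = totVarOn μ f U + l * (μ (E ∩ U) + 0) :=
        (henergy.add (ENNReal.Tendsto.const_mul (tendsto_const_nhds.add hbad)
          (Or.inr ENNReal.coe_ne_top))).liminf_eq
    _ = totVarOn μ f U + l * μ (E ∩ U) := by rw [add_zero]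

end CutEnergy

section Cuttable

/-- Cutting the indicator of `E` down to zero in `ball x ρ` saves the proportion `c` of the
perimeter of `E` in `ball x (12 * ρ)`: the perimeter in `ball x ρ`, which disappears, exceeds the
energy created by a cutoff of slope `2 / ρ`. -/
def IsCuttable {X : Type*} [PseudoMetricSpace X] [MeasurableSpace X] (μ : Measure X) (E : Set X)
    (c : ℝ≥0∞) (x : X) (ρ : ℝ) : Prop :=
  ENNReal.ofReal (2 / ρ) * μ (E ∩ ball x (2 * ρ)) +
      c * totVarOn μ (E.indicator fun _ => (1 : ℝ)) (ball x (6 * (2 * ρ))) ≤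
    totVarOn μ (E.indicator fun _ => (1 : ℝ)) (ball x ρ)

lemma indicator_one_mem_Icc {X : Type*} (E : Set X) (x : X) :
    E.indicator (fun _ => (1 : ℝ)) x ∈ Icc (0 : ℝ) 1 :=
  ⟨indicator_nonneg (fun _ _ => zero_le_one) x, indicator_le_self' (fun _ _ => zero_le_one) x⟩

lemma indicator_compl_one {X : Type*} (E : Set X) :
    (Eᶜ.indicator fun _ => (1 : ℝ)) = fun x => 1 - E.indicator (fun _ => (1 : ℝ)) x := by
  rw [indicator_compl]
  rfl

lemma IsCompetitor.one_sub {X : Type*} [PseudoMetricSpace X] [MeasurableSpace X] {μ : Measure X}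
    {f w : X → ℝ} {c C : ℝ≥0∞} {x : X} {r : ℝ}
    (hw : IsCompetitor μ (fun y => 1 - f y) c C x r w) :
    IsCompetitor μ f c C x r fun y => 1 - w y where
  mem_Icc y := ⟨sub_nonneg.2 (hw.mem_Icc y).2, sub_le_self _ (hw.mem_Icc y).1⟩
  aemeasurable := hw.aemeasurable.const_sub 1
  exists_compact := by
    obtain ⟨K, hK, hKU, hwf⟩ := hw.exists_compact
    exact ⟨K, hK, hKU, fun y hy => by rw [hwf y hy, sub_sub_cancel]⟩
  totVarOn_add_le := by
    simpa only [totVarOn_one_sub] using hw.totVarOn_add_le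
  lintegral_le := by
    have habs : ∀ y, |1 - w y - f y| = |w y - (1 - f y)| := fun y => by
      rw [← abs_neg]
      ring_nf
    simpa only [habs, totVarOn_one_sub] using hw.lintegral_le

variable {X : Type*} [MetricSpace X] [ProperSpace X] [MeasurableSpace X] [BorelSpace X]
  {μ : Measure X} [IsLocallyFiniteMeasure μ] [IsUnifLocDoublingMeasure μ] {E A : Set X}
  {c : ℝ≥0∞} {x : X} {ρ : ℝ}

lemma IsCuttable.exists_isCompetitor (h : IsCuttable μ E c x ρ) (hE : NullMeasurableSet E μ)
    (hV : totVarOn μ (E.indicator fun _ => (1 : ℝ)) univ < ⊤) (hρ : 0 < ρ) :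
    ∃ w, IsCompetitor μ (E.indicator fun _ => (1 : ℝ)) c 1 x (2 * ρ) w := by
  set f : X → ℝ := E.indicator fun _ => (1 : ℝ)
  have hf : ∀ y, f y ∈ Icc (0 : ℝ) 1 := indicator_one_mem_Icc E
  have hfm : AEMeasurable f μ := aemeasurable_const.indicator₀ hE
  have hfE : ∀ y ∉ E, f y = 0 := fun y hy => indicator_of_notMem hy _
  have hK : closedBall x (3 / 2 * ρ) ⊆ ball x (2 * ρ) := closedBall_subset_ball (by linarith)
  have hζ := isCutoff_ball x hρ
  set ζ : X → ℝ := fun y => 2 / ρ * max 0 (dist y x - ρ)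
  have hm : ENNReal.ofReal (2 / ρ) * μ (E ∩ ball x (2 * ρ)) ≤
      totVarOn μ f (ball x (6 * (2 * ρ))) :=
    (le_self_add.trans h).trans (totVarOn_mono (ball_subset_ball (by linarith)))
  have hm' : ENNReal.ofReal (2 / ρ) * μ (E ∩ ball x (2 * ρ)) ≠ ⊤ :=
    ENNReal.mul_ne_top ENNReal.ofReal_ne_top
      ((measure_mono inter_subset_right).trans_lt measure_ball_lt_top).ne
  refine ⟨fun y => min (f y) (ζ y), hζ.min_mem_Icc hf,
    hfm.min hζ.lipschitzWith.continuous.measurable.aemeasurable,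
    ⟨_, isCompact_closedBall x (3 / 2 * ρ), hK, fun y => hζ.min_eq_of_notMem hf⟩, ?_, ?_⟩
  · refine (ENNReal.add_le_add_iff_right hm').1 (le_trans ?_ (hζ.totVarOn_min_add_le isOpen_ball
      isOpen_ball (ball_subset_ball (by linarith)) (isCompact_closedBall _ _) hK hf hfm hfE
      ((totVarOn_mono (subset_univ _)).trans_lt hV)))
    rw [add_assoc, add_comm (c * _)]
    gcongr
    exact h
  · calc ∫⁻ y, ENNReal.ofReal |min (f y) (ζ y) - f y| ∂μ
        ≤ μ (E ∩ ball x (2 * ρ)) :=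
          (hζ.lintegral_min_sub_le hf hfE).trans (measure_mono (inter_subset_inter_right _ hK))
      _ ≤ 4 * μ (E ∩ ball x (2 * ρ)) := le_mul_of_one_le_left' (by norm_num)
      _ = ENNReal.ofReal (2 * ρ) * (ENNReal.ofReal (2 / ρ) * μ (E ∩ ball x (2 * ρ))) := by
          rw [← mul_assoc, ← ENNReal.ofReal_mul (by positivity),
            show 2 * ρ * (2 / ρ) = 4 by field_simp; norm_num, ENNReal.ofReal_ofNat]
      _ ≤ 1 * ENNReal.ofReal (2 * ρ) * totVarOn μ f (ball x (6 * (2 * ρ))) := by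
          rw [one_mul]
          gcongr

lemma IsCuttable.exists_isCompetitor_of_compl (h : IsCuttable μ Eᶜ c x ρ)
    (hE : NullMeasurableSet E μ) (hV : totVarOn μ (E.indicator fun _ => (1 : ℝ)) univ < ⊤)
    (hρ : 0 < ρ) : ∃ w, IsCompetitor μ (E.indicator fun _ => (1 : ℝ)) c 1 x (2 * ρ) w := by
  obtain ⟨w, hw⟩ := h.exists_isCompetitor hE.compl (by rwa [totVarOn_indicator_compl]) hρ
  rw [indicator_compl_one] at hw
  exact ⟨_, hw.one_sub⟩

lemma totVarSet_eq_zero_of_isCuttable (hE : NullMeasurableSet E μ)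
    (hV : totVarOn μ (E.indicator fun _ => (1 : ℝ)) univ < ⊤) (hc : c ≠ 0)
    (h : ∀ x ∈ A, ∃ᶠ ρ in 𝓝[>] (0 : ℝ), IsCuttable μ E c x ρ ∨ IsCuttable μ Eᶜ c x ρ) :
    totVarSet μ (E.indicator fun _ => (1 : ℝ)) A = 0 := by
  refine totVarSet_eq_zero_of_competitors (indicator_one_mem_Icc E)
    (aemeasurable_const.indicator₀ hE) hV.ne hc ENNReal.one_ne_top fun x hx hev => ?_
  refine h x hx ((eventually_nhdsGT_zero_mul_left two_pos hev).and
    self_mem_nhdsWithin |>.mono fun ρ ⟨hno, hρ⟩ hcut => hno ?_)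
  exact hcut.elim (·.exists_isCompetitor hE hV hρ) (·.exists_isCompetitor_of_compl hE hV hρ)

end Cuttable

section UpperGradient

variable {X : Type*} [PseudoMetricSpace X] {v : X → ℝ}

lemma ofReal_abs_deriv_le_lipConst {γ : ℝ → X} {L t v' : ℝ}
    (hγ : LipschitzOnWith 1 γ (Icc 0 L)) (ht : t ∈ Ioo 0 L) (hv : HasDerivAt (v ∘ γ) v' t) :
    ENNReal.ofReal |v'| ≤ lipConst v (γ t) := by
  -- At distance `r - r ^ 2` instead of `r` the curve stays inside the open ball of radius `r`.
  have hderiv : HasDerivAt (fun r : ℝ => (v ∘ γ) (t + (r - r ^ 2))) v' 0 := by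
    have h1 : HasDerivAt (fun r : ℝ => t + (r - r ^ 2)) 1 0 := by
      simpa using ((hasDerivAt_id (0 : ℝ)).sub ((hasDerivAt_id (0 : ℝ)).pow 2)).const_add t
    have h2 : HasDerivAt (v ∘ γ) v' (t + (0 - 0 ^ 2)) := by simpa using hv
    rw [← mul_one v']
    exact h2.comp (0 : ℝ) h1
  have hslope := hderiv.tendsto_slope_zero_right
  simp only [zero_add, sub_self, ne_eq, OfNat.ofNat_ne_zero, not_false_eq_true, zero_pow,
    add_zero, smul_eq_mul] at hslope
  rw [← ((ENNReal.continuous_ofReal.tendsto _).comp hslope.abs).liminf_eq]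
  refine liminf_le_liminf ?_
  filter_upwards [Ioo_mem_nhdsGT (lt_min one_pos (sub_pos.2 ht.2))] with r ⟨hr, hr'⟩
  obtain ⟨hr1, hrL⟩ := lt_min_iff.1 hr'
  have hpos : 0 ≤ r - r ^ 2 := by nlinarith
  have hlt : r - r ^ 2 < r := by nlinarith
  refine le_iSup₂_of_le (γ (t + (r - r ^ 2))) ?_ ?_
  · have h := hγ.dist_le_mul (t + (r - r ^ 2)) ⟨by linarith [ht.1], by linarith⟩ t
      ⟨ht.1.le, ht.2.le⟩
    rw [Real.dist_eq, add_sub_cancel_left, abs_of_nonneg hpos, NNReal.coe_one, one_mul] at h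
    exact mem_ball.2 (h.trans_lt hlt)
  · simp only [Function.comp]
    rw [abs_mul, abs_inv, abs_of_pos hr, div_eq_inv_mul]

lemma LocallyLipschitzOnSet.exists_bound_on_curve (hv : LocallyLipschitzOnSet v univ) {γ : ℝ → X}
    {L : ℝ} (hL : 0 ≤ L) (hγ : LipschitzOnWith 1 γ (Icc 0 L)) :
    ∃ M : ℝ≥0, LipschitzOnWith M (v ∘ γ) (Icc 0 L) ∧ ∀ t ∈ Icc 0 L, lipConst v (γ t) ≤ M := by
  obtain ⟨M, hM⟩ := hv (closedBall (γ 0) (L + 1)) isClosed_closedBall isBounded_closedBall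
    (subset_univ _)
  have hdist : ∀ t ∈ Icc 0 L, dist (γ t) (γ 0) ≤ L := fun t ht => by
    have h := hγ.dist_le_mul t ht 0 ⟨le_rfl, hL⟩
    rw [Real.dist_eq, sub_zero, abs_of_nonneg ht.1, NNReal.coe_one, one_mul] at h
    exact h.trans ht.2
  refine ⟨M, ?_, fun t ht => lipConst_le_of_lipschitzOnWith ?_ hM⟩
  · simpa only [mul_one] using hM.comp hγ fun t ht =>
      mem_closedBall.2 ((hdist t ht).trans (by linarith))
  · exact mem_of_superset (ball_mem_nhds _ one_pos) (ball_subset_closedBall.trans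
      (closedBall_subset_closedBall' (by linarith [hdist t ht])))

lemma LocallyLipschitzOnSet.continuous (hv : LocallyLipschitzOnSet v univ) : Continuous v :=
  continuous_iff_continuousAt.2 fun x => (hv.lipschitzNear isOpen_univ (mem_univ x)).continuousAt

variable [MeasurableSpace X] [BorelSpace X]

lemma LocallyLipschitzOnSet.isUpperGradientOf_lipConst (hv : LocallyLipschitzOnSet v univ) :
    IsUpperGradientOf (fun x => (lipConst v x).toReal) v := by
  intro L hL γ hγ
  obtain ⟨M, hlip, hbound⟩ := hv.exists_bound_on_curve hL hγ
  rw [← uIcc_of_le hL] at hlip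
  have hac := hlip.absolutelyContinuousOnInterval
  have hFTC := hac.integral_deriv_eq_sub
  simp only [Function.comp_apply] at hFTC
  rw [abs_sub_comm, ← hFTC, ← Real.norm_eq_abs]
  refine intervalIntegral.norm_integral_le_of_norm_le hL ?_ ?_
  · filter_upwards [hac.ae_differentiableAt, Measure.ae_ne volume L] with t hdiff htL ht
    have ht' : t ∈ Ioo 0 L := ⟨ht.1, ht.2.lt_of_ne htL⟩
    have hdiff' := hdiff (by rw [uIcc_of_le hL]; exact Ioo_subset_Icc_self ht')
    have hfin := (hbound t (Ioo_subset_Icc_self ht')).trans_lt ENNReal.coe_lt_top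
    exact (ENNReal.ofReal_le_iff_le_toReal hfin.ne).1
      (ofReal_abs_deriv_le_lipConst hγ ht' hdiff'.hasDerivAt)
  · rw [intervalIntegrable_iff_integrableOn_Ioc_of_le hL, ← integrableOn_Icc_iff_integrableOn_Ioc]
    refine IntegrableOn.of_bound measure_Icc_lt_top ?_ (M : ℝ)
      ((ae_restrict_iff' measurableSet_Icc).2 (Eventually.of_forall fun t ht => ?_))
    · exact ((measurable_lipConst hv.continuous).ennreal_toReal.comp_aemeasurable
        (hγ.continuousOn.aemeasurable measurableSet_Icc)).aestronglyMeasurable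
    · rw [Real.norm_of_nonneg ENNReal.toReal_nonneg]
      exact ENNReal.toReal_mono ENNReal.coe_ne_top (hbound t ht)

end UpperGradient

section Isoperimetric

lemma ofReal_mul_measure_le_setLIntegral {X : Type*} [MeasurableSpace X] {μ : Measure X}
    {A B : Set X} (hA : NullMeasurableSet A μ) {a : ℝ} {f : X → ℝ} (hf : ∀ y ∈ A, a ≤ f y) :
    ENNReal.ofReal a * μ (A ∩ B) ≤ ∫⁻ y in B ∩ A, ENNReal.ofReal (f y) ∂μ := by
  have hA' : NullMeasurableSet A (μ.restrict B) := hA.mono_ac Measure.absolutelyContinuous_restrict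
  have hmem := ae_restrict_mem₀ hA'
  rw [Measure.restrict_restrict₀ hA', inter_comm] at hmem
  rw [inter_comm, ← setLIntegral_const]
  refine lintegral_mono_ae ?_
  filter_upwards [hmem] with y hy
  exact ENNReal.ofReal_le_ofReal (hf y hy)

lemma min_measure_le_lintegral {X : Type*} [MeasurableSpace X] {μ : Measure X} {E B : Set X}
    (hE : NullMeasurableSet E μ) {m : ℝ} (hm : m ∈ Icc (0 : ℝ) 1) :
    min (μ (E ∩ B)) (μ (Eᶜ ∩ B)) ≤
      ∫⁻ y in B, ENNReal.ofReal |E.indicator (fun _ => (1 : ℝ)) y - m| ∂μ := by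
  calc min (μ (E ∩ B)) (μ (Eᶜ ∩ B))
      = ENNReal.ofReal (1 - m) * min (μ (E ∩ B)) (μ (Eᶜ ∩ B)) +
        ENNReal.ofReal m * min (μ (E ∩ B)) (μ (Eᶜ ∩ B)) := by
        rw [← add_mul, ← ENNReal.ofReal_add (by linarith [hm.2]) hm.1, sub_add_cancel,
          ENNReal.ofReal_one, one_mul]
    _ ≤ ENNReal.ofReal (1 - m) * μ (E ∩ B) + ENNReal.ofReal m * μ (Eᶜ ∩ B) := by
        gcongr
        exacts [min_le_left _ _, min_le_right _ _]
    _ ≤ ∫⁻ y in B ∩ E, ENNReal.ofReal |E.indicator (fun _ => (1 : ℝ)) y - m| ∂μ +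
        ∫⁻ y in B ∩ Eᶜ, ENNReal.ofReal |E.indicator (fun _ => (1 : ℝ)) y - m| ∂μ := by
        refine add_le_add (ofReal_mul_measure_le_setLIntegral hE fun y hy => ?_)
          (ofReal_mul_measure_le_setLIntegral hE.compl fun y hy => ?_)
        · rw [indicator_of_mem hy]
          exact le_abs_self _
        · rw [indicator_of_notMem hy, zero_sub, abs_neg]
          exact le_abs_self _
    _ = ∫⁻ y in B, ENNReal.ofReal |E.indicator (fun _ => (1 : ℝ)) y - m| ∂μ := by
        rw [← Set.sdiff_eq, ← lintegral_add_measure, Measure.restrict_inter_add_sdiff₀ B hE]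

lemma LocallyLipschitzOnSet.exists_extension {X : Type*} [MetricSpace X] [ProperSpace X]
    {u : X → ℝ} {C U : Set X} (hU : IsOpen U) (hu : LocallyLipschitzOnSet u U)
    (hu01 : ∀ y, u y ∈ Icc (0 : ℝ) 1) (hC : IsCompact C) (hCU : C ⊆ U) :
    ∃ v, LocallyLipschitzOnSet v univ ∧ (∀ y, v y ∈ Icc (0 : ℝ) 1) ∧ EqOn v u C := by
  obtain ⟨β, l, K, hβ, hK, -, hKU⟩ := exists_isCutoff hC hU hCU
  refine ⟨fun y => max 0 (u y - β y), .of_lipschitzNear fun y _ => ?_, fun y =>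
    ⟨le_max_left _ _, max_le zero_le_one (by linarith [(hu01 y).2, hβ.nonneg y])⟩, fun y hy => ?_⟩
  · by_cases hy : y ∈ U
    · exact (lipschitzNear_const 0 y).max
        ((hu.lipschitzNear hU hy).sub (lipschitzNear_of_lipschitzWith hβ.lipschitzWith y))
    · refine (lipschitzNear_const 0 y).congr ?_
      filter_upwards [hK.isClosed.isOpen_compl.mem_nhds fun h => hy (hKU h)] with z hz
      exact (max_eq_left (by linarith [(hu01 z).2, hβ.one_le z hz])).symm
  · simp only [hβ.eq_zero y hy, sub_zero, max_eq_right (hu01 y).1]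

variable {X : Type*} [MetricSpace X] [MeasurableSpace X] {μ : Measure X} [BorelSpace X]
  [ProperSpace X] [IsLocallyFiniteMeasure μ] {CP : ℝ}

lemma SupportsPoincare.exists_lintegral_le (hP : SupportsPoincare μ CP) {v : X → ℝ}
    (hv : LocallyLipschitzOnSet v univ) (hv01 : ∀ x, v x ∈ Icc (0 : ℝ) 1) (x : X) {r : ℝ}
    (hr : 0 < r) (hB : μ (ball x r) ≠ 0) :
    ∃ m ∈ Icc (0 : ℝ) 1, ∫⁻ y in ball x r, ENNReal.ofReal |v y - m| ∂μ ≤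
      ENNReal.ofReal (CP * r) * ∫⁻ y in ball x r, lipConst v y ∂μ := by
  have hBt : μ (ball x r) ≠ ⊤ := measure_ball_lt_top.ne
  have hvi : IntegrableOn v (ball x r) μ :=
    IntegrableOn.of_bound hBt.lt_top hv.continuous.aestronglyMeasurable 1
      (Eventually.of_forall fun y => by rw [Real.norm_of_nonneg (hv01 y).1]; exact (hv01 y).2)
  set m := ⨍ z in ball x r, v z ∂μ with hm
  refine ⟨m, (convex_Icc (0 : ℝ) 1).set_average_mem isClosed_Icc hB hBt
    (Eventually.of_forall hv01) hvi, ?_⟩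
  have hgm := measurable_lipConst hv.continuous
  have havg := hP v hv (fun y => (lipConst v y).toReal) (fun y => ENNReal.toReal_nonneg)
    hgm.ennreal_toReal hv.isUpperGradientOf_lipConst x r hr
  rw [← hm, setAverage_eq, setAverage_eq, smul_eq_mul, smul_eq_mul, mul_left_comm] at havg
  have hint := le_of_mul_le_mul_left havg (inv_pos.2 (ENNReal.toReal_pos hB hBt))
  have habs : IntegrableOn (fun y => |v y - m|) (ball x r) μ :=
    (hvi.sub (integrableOn_const hBt)).abs
  rw [← ofReal_integral_eq_lintegral_ofReal habs (Eventually.of_forall fun y => abs_nonneg _)]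
  refine (ENNReal.ofReal_le_ofReal hint).trans ?_
  rw [ENNReal.ofReal_mul' (integral_nonneg fun y => ENNReal.toReal_nonneg),
    integral_toReal hgm.aemeasurable (Eventually.of_forall fun y =>
      (hv.lipschitzNear isOpen_univ (mem_univ y)).lipConst_lt_top)]
  gcongr
  exact ENNReal.ofReal_toReal_le

variable {E : Set X}

lemma SupportsPoincare.min_measure_le_totVarOn (hP : SupportsPoincare μ CP)
    (hE : NullMeasurableSet E μ) (x : X) {r : ℝ} (hr : 0 < r) (hB : μ (ball x r) ≠ 0)
    (hV : totVarOn μ (E.indicator fun _ => (1 : ℝ)) (ball x (2 * r)) < ⊤) :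
    min (μ (E ∩ ball x r)) (μ (Eᶜ ∩ ball x r)) ≤
      ENNReal.ofReal (CP * r) * totVarOn μ (E.indicator fun _ => (1 : ℝ)) (ball x (2 * r)) := by
  set f : X → ℝ := E.indicator fun _ => (1 : ℝ)
  obtain ⟨us, hlip, h01, htend, henergy⟩ :=
    exists_optimal_seq_mem_Icc isOpen_ball hV (indicator_one_mem_Icc E)
  have hcb : closedBall x r ⊆ ball x (2 * r) := closedBall_subset_ball (by linarith)
  have hlim := (htend (closedBall x r) isClosed_closedBall isBounded_closedBall hcb).add
    (ENNReal.Tendsto.const_mul (a := ENNReal.ofReal (CP * r)) henergy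
      (Or.inr ENNReal.ofReal_ne_top))
  rw [zero_add] at hlim
  refine ge_of_tendsto' hlim fun i => ?_
  obtain ⟨v, hv, hv01, hvu⟩ :=
    (hlip i).exists_extension isOpen_ball (h01 i) (isCompact_closedBall x r) hcb
  obtain ⟨m, hm, hmle⟩ := hP.exists_lintegral_le hv hv01 x hr hB
  have hfm : AEMeasurable f μ := aemeasurable_const.indicator₀ hE
  calc min (μ (E ∩ ball x r)) (μ (Eᶜ ∩ ball x r))
      ≤ ∫⁻ y in ball x r, ENNReal.ofReal |f y - m| ∂μ := min_measure_le_lintegral hE hm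
    _ ≤ ∫⁻ y in ball x r, ENNReal.ofReal |f y - v y| ∂μ +
        ∫⁻ y in ball x r, ENNReal.ofReal |v y - m| ∂μ :=
        lintegral_ofReal_abs_sub_le_add hfm.restrict hv.continuous.aemeasurable
    _ ≤ ∫⁻ y in ball x r, ENNReal.ofReal |us i y - f y| ∂μ +
        ENNReal.ofReal (CP * r) * ∫⁻ y in ball x r, lipConst (us i) y ∂μ := by
        refine add_le_add (setLIntegral_congr_fun measurableSet_ball fun y hy => ?_).le
          (hmle.trans_eq ?_)
        · rw [hvu (ball_subset_closedBall hy), abs_sub_comm]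
        · congr 1
          refine setLIntegral_congr_fun measurableSet_ball fun y hy => lipConst_congr ?_
          filter_upwards [isOpen_ball.mem_nhds hy] with z hz using hvu (ball_subset_closedBall hz)
    _ ≤ _ := by
        gcongr
        exacts [ball_subset_closedBall, by linarith]

end Isoperimetric

section Doubling

variable {X : Type*} [MeasurableSpace X] {Cd : ℝ≥0} {r R : ℝ}

section PseudoMetricSpace

variable [PseudoMetricSpace X] {μ : Measure X}

lemma IsDoublingWith.measure_ball_pos (h : IsDoublingWith μ Cd) (x : X) (hr : 0 < r) :
    0 < μ (ball x r) := by
  have hpos := (h x (r / 2) (by positivity)).1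
  rwa [mul_div_cancel₀ r two_ne_zero] at hpos

lemma IsDoublingWith.measure_ball_lt_top (h : IsDoublingWith μ Cd) (x : X) (hr : 0 < r) :
    μ (ball x r) < ⊤ := by
  obtain ⟨-, hle, hlt⟩ := h x (r / 2) (by positivity)
  rw [mul_div_cancel₀ r two_ne_zero] at hle
  exact hle.trans_lt hlt

lemma IsDoublingWith.measure_ball_pow_le (h : IsDoublingWith μ Cd) (x : X) (hr : 0 < r) (n : ℕ) :
    μ (ball x (2 ^ n * r)) ≤ (Cd : ℝ≥0∞) ^ n * μ (ball x r) := by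
  induction n with
  | zero => simp
  | succ n ih =>
    rw [pow_succ', pow_succ', mul_assoc, mul_assoc]
    exact (h x (2 ^ n * r) (by positivity)).2.1.trans (by gcongr)

lemma IsDoublingWith.one_le_coe (h : IsDoublingWith μ Cd) (x : X) : 1 ≤ (Cd : ℝ≥0∞) := by
  have hpos := (h.measure_ball_pos x one_pos).ne'
  have htop := (h.measure_ball_lt_top x one_pos).ne
  refine (ENNReal.mul_le_mul_iff_left hpos htop).1 ?_
  rw [one_mul]
  exact (measure_mono (ball_subset_ball (by norm_num))).trans (h x 1 one_pos).2.1

lemma IsDoublingWith.isLocallyFiniteMeasure (h : IsDoublingWith μ Cd) :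
    IsLocallyFiniteMeasure μ :=
  ⟨fun x => ⟨ball x 1, ball_mem_nhds x one_pos, h.measure_ball_lt_top x one_pos⟩⟩

lemma IsDoublingWith.isUnifLocDoublingMeasure (h : IsDoublingWith μ Cd) :
    IsUnifLocDoublingMeasure μ := by
  refine ⟨Cd ^ 2, ?_⟩
  filter_upwards [self_mem_nhdsWithin] with r (hr : 0 < r) x
  calc μ (closedBall x (2 * r)) ≤ μ (ball x (2 ^ 2 * r)) :=
        measure_mono (closedBall_subset_ball (by linarith))
    _ ≤ (Cd : ℝ≥0∞) ^ 2 * μ (ball x r) := h.measure_ball_pow_le x hr 2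
    _ ≤ (Cd ^ 2 : ℝ≥0) * μ (closedBall x r) := by
        rw [ENNReal.coe_pow]
        gcongr
        exact ball_subset_closedBall

lemma IsDoublingWith.finite_of_pairwiseDisjoint [OpensMeasurableSpace X]
    (h : IsDoublingWith μ Cd) {x : X} {t : Set X} (hr : 0 < r) (hR : 0 < R) (ht : t ⊆ ball x R)
    (hd : t.PairwiseDisjoint fun y => closedBall y r) : t.Finite := by
  obtain ⟨k, hk⟩ : ∃ k : ℕ, 2 * R ≤ 2 ^ k * r := by
    obtain ⟨k, hk⟩ := pow_unbounded_of_one_lt (2 * R / r) one_lt_two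
    exact ⟨k, ((div_lt_iff₀ hr).1 hk).le⟩
  have hlower : ∀ y : t, μ (ball x R) / (Cd : ℝ≥0∞) ^ k ≤ μ (closedBall (y : X) r) := fun y => by
    refine ENNReal.div_le_of_le_mul' ?_
    have hyx : dist (y : X) x < R := ht y.2
    calc μ (ball x R) ≤ μ (ball (y : X) (2 ^ k * r)) :=
          measure_mono (ball_subset_ball' (by rw [dist_comm]; linarith))
      _ ≤ (Cd : ℝ≥0∞) ^ k * μ (ball (y : X) r) := h.measure_ball_pow_le y hr k
      _ ≤ (Cd : ℝ≥0∞) ^ k * μ (closedBall (y : X) r) := by gcongr; exact ball_subset_closedBall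
  have hsub : ⋃ y : t, closedBall (y : X) r ⊆ ball x (2 * R + r) := iUnion_subset fun y =>
    closedBall_subset_ball' (by linarith [mem_ball.1 (ht y.2)])
  have hfinite := Measure.finite_const_le_meas_of_disjoint_iUnion μ
    (ε := μ (ball x R) / (Cd : ℝ≥0∞) ^ k)
    (ENNReal.div_pos (h.measure_ball_pos x hR).ne' (ENNReal.pow_ne_top ENNReal.coe_ne_top))
    (As := fun y : t => closedBall (y : X) r) (fun _ => measurableSet_closedBall)
    (fun y z hyz => hd y.2 z.2 fun h => hyz (Subtype.ext h))
    (measure_ne_top_of_subset hsub (h.measure_ball_lt_top x (by positivity)).ne)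
  exact finite_coe_iff.1 (finite_univ_iff.1 (hfinite.subset fun y _ => hlower y))

lemma IsDoublingWith.totallyBounded_ball [OpensMeasurableSpace X] (h : IsDoublingWith μ Cd)
    (x : X) (hR : 0 < R) : TotallyBounded (ball x R) := by
  refine Metric.totallyBounded_iff.2 fun ε hε => ?_
  obtain ⟨t, htA, htd, htc⟩ := Vitali.exists_disjoint_subfamily_covering_enlargement_closedBall
    (ball x R) id (fun _ => ε / 6) (ε / 6) (fun _ _ => le_rfl) 5 (by norm_num)
  refine ⟨t, h.finite_of_pairwiseDisjoint (by positivity) hR htA htd, fun y hy => ?_⟩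
  obtain ⟨b, hb, hyb⟩ := htc y hy
  have hyb' : y ∈ closedBall b (5 * (ε / 6)) := hyb (mem_closedBall_self (by positivity))
  exact mem_iUnion₂.2 ⟨b, hb, mem_ball.2 ((mem_closedBall.1 hyb').trans_lt (by linarith))⟩

end PseudoMetricSpace

lemma IsDoublingWith.properSpace [MetricSpace X] [OpensMeasurableSpace X] [CompleteSpace X]
    {μ : Measure X} (h : IsDoublingWith μ Cd) : ProperSpace X :=
  ⟨fun x R => ((h.totallyBounded_ball x (R := max R 0 + 1) (by positivity)).subset
    (closedBall_subset_ball (by linarith [le_max_left R 0]))).isCompact_of_isClosed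
      isClosed_closedBall⟩

end Doubling

section Scales

variable {a a' b b' c M D : ℝ≥0∞} {s : ℝ}

lemma le_ofReal_mul_of_doubling_failure (ha : a' ≤ D * a) (hb : 2 * D * b ≤ b')
    (h : M * a ≤ ENNReal.ofReal s * b) : 32 * M * a' ≤ ENNReal.ofReal (16 * s) * b' := by
  calc 32 * M * a' ≤ 32 * M * (D * a) := by gcongr
    _ = 32 * D * (M * a) := by ring
    _ ≤ 32 * D * (ENNReal.ofReal s * b) := by gcongr
    _ = 16 * ENNReal.ofReal s * (2 * D * b) := by ring
    _ ≤ 16 * ENNReal.ofReal s * b' := by gcongr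
    _ = ENNReal.ofReal (16 * s) * b' := by
        rw [ENNReal.ofReal_mul (p := 16) (by norm_num), ENNReal.ofReal_ofNat]

lemma ofReal_mul_le_of_doubling_failure (hD0 : D ≠ 0) (hD : D ≠ ⊤) (ha : a' ≤ D * a)
    (hb : 2 * D * b ≤ b') (h : M * (ENNReal.ofReal (16 * s) * b') ≤ c * a') :
    32 * M * (ENNReal.ofReal s * b) ≤ c * a := by
  refine (ENNReal.mul_le_mul_iff_right hD0 hD).1 ?_
  calc D * (32 * M * (ENNReal.ofReal s * b))
      = M * (16 * ENNReal.ofReal s * (2 * D * b)) := by ring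
    _ ≤ M * (16 * ENNReal.ofReal s * b') := by gcongr
    _ = M * (ENNReal.ofReal (16 * s) * b') := by
        rw [ENNReal.ofReal_mul (p := 16) (by norm_num), ENNReal.ofReal_ofNat]
    _ ≤ c * (D * a) := h.trans (by gcongr)
    _ = D * (c * a) := by ring

variable {ν m : ℝ → ℝ≥0∞} {δ : ℝ}

lemma mul_pow_le_of_doubling_failure (hm : ∀ r, 0 < r → m (16 * r) ≤ D * m r)
    (hfail : ∀ r ∈ Ioo 0 δ, M * m r ≤ ENNReal.ofReal r * ν r → 2 * D * ν r ≤ ν (16 * r)) {r : ℝ}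
    (hr : 0 < r) (h : M * m r ≤ ENNReal.ofReal r * ν r) {k : ℕ} (hk : 16 ^ k * r < 16 * δ) :
    32 ^ k * M * m (16 ^ k * r) ≤ ENNReal.ofReal (16 ^ k * r) * ν (16 ^ k * r) := by
  induction k with
  | zero => simpa using h
  | succ k ih =>
    rw [pow_succ', mul_assoc] at hk
    have hlt : 16 ^ k * r < δ := lt_of_mul_lt_mul_left hk (by norm_num)
    have hpos : 0 < 16 ^ k * r := by positivity
    have ih' := ih (by linarith)
    rw [pow_succ', pow_succ', mul_assoc 32, mul_assoc 16]
    refine le_ofReal_mul_of_doubling_failure (hm _ hpos) (hfail _ ⟨hpos, hlt⟩ (le_trans ?_ ih')) ih'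
    gcongr
    exact le_mul_of_one_le_left' (one_le_pow₀ (by norm_num))

lemma exists_pow_mul_near {r : ℝ} (hr : 0 < r) {k : ℕ} (hrδ : r < δ / 16 ^ (k + 1)) :
    ∃ n ≥ k, 16 ^ n * r ≤ δ ∧ δ / 16 < 16 ^ n * r := by
  rw [lt_div_iff₀ (by positivity)] at hrδ
  have hpow : (1 : ℝ) ≤ 16 ^ (k + 1) := one_le_pow₀ (by norm_num)
  obtain ⟨n, hn, hn'⟩ := exists_nat_pow_near (x := δ / r) (y := 16)
    ((one_le_div hr).2 (by nlinarith)) (by norm_num)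
  rw [le_div_iff₀ hr] at hn
  rw [div_lt_iff₀ hr] at hn'
  refine ⟨n, ?_, hn, by rw [pow_succ] at hn'; linarith⟩
  have hlt : (16 : ℝ) ^ (k + 1) < 16 ^ (n + 1) := lt_of_mul_lt_mul_right (by linarith) hr.le
  have hkn := (pow_lt_pow_iff_right₀ (by norm_num : (1 : ℝ) < 16)).1 hlt
  omega

/- If `ν` failed to double at all small scales where `r * ν r / m r` is large, this quotient would
double along `16 ^ k * r` up to a fixed scale; starting from a tiny `r` this contradicts `ν ≤ V`. -/
lemma frequently_doubling_of_large (hm : ∀ r, 0 < r → m (16 * r) ≤ D * m r)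
    (hm0 : ∀ r, 0 < r → m r ≠ 0) (hmm : Monotone m) {V : ℝ≥0∞} (hV : V ≠ ⊤) (hν : ∀ r, ν r ≤ V)
    (hM : M ≠ 0) (h : ∃ᶠ r in 𝓝[>] 0, M * m r ≤ ENNReal.ofReal r * ν r) :
    ∃ᶠ r in 𝓝[>] 0, M * m r ≤ ENNReal.ofReal r * ν r ∧ ν (16 * r) ≤ 2 * D * ν r := by
  intro hfail
  obtain ⟨δ, hδ : 0 < δ, hδfail⟩ := mem_nhdsGT_iff_exists_Ioo_subset.1 hfail
  obtain ⟨k₀, hk₀⟩ : ∃ k₀ : ℕ, ENNReal.ofReal δ * V < M * m (δ / 16) * 32 ^ k₀ := by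
    have htop := ENNReal.Tendsto.const_mul (a := M * m (δ / 16))
      (ENNReal.tendsto_pow_atTop_nhds_top_iff.2 (by norm_num : (1 : ℝ≥0∞) < 32))
      (Or.inl ENNReal.top_ne_zero)
    rw [ENNReal.mul_top (mul_ne_zero hM (hm0 _ (by positivity)))] at htop
    exact (htop.eventually (lt_mem_nhds (ENNReal.mul_lt_top ENNReal.ofReal_lt_top
      hV.lt_top))).exists
  obtain ⟨r, hr, hr0, hrδ⟩ :=
    (h.and_eventually (Ioo_mem_nhdsGT (show 0 < δ / 16 ^ (k₀ + 1) by positivity))).exists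
  obtain ⟨n, hkn, hn, hn'⟩ := exists_pow_mul_near hr0 hrδ
  refine hk₀.not_ge ?_
  calc M * m (δ / 16) * 32 ^ k₀ ≤ M * m (16 ^ n * r) * 32 ^ n := by
        gcongr
        · exact hmm (by linarith)
        · norm_num
    _ = 32 ^ n * M * m (16 ^ n * r) := by ring
    _ ≤ ENNReal.ofReal (16 ^ n * r) * ν (16 ^ n * r) :=
        mul_pow_le_of_doubling_failure hm
          (fun s hs hlarge => (not_le.1 fun hdoub => hδfail hs ⟨hlarge, hdoub⟩).le) hr0 hr
          (by linarith)
    _ ≤ ENNReal.ofReal δ * V := by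
        gcongr
        exact hν _

lemma pow_mul_le_of_doubling_failure (hm : ∀ r, 0 < r → m (16 * r) ≤ D * m r) (hD0 : D ≠ 0)
    (hD : D ≠ ⊤)
    (hfail : ∀ r ∈ Ioo 0 δ, ENNReal.ofReal (16 * r) * ν (16 * r) ≤ c * m (16 * r) →
      2 * D * ν r ≤ ν (16 * r))
    {r : ℝ} (hr : 0 < r) (hrδ : r < δ) (h : ENNReal.ofReal r * ν r ≤ c * m r) (k : ℕ) :
    32 ^ k * (ENNReal.ofReal (r / 16 ^ k) * ν (r / 16 ^ k)) ≤ c * m (r / 16 ^ k) := by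
  induction k with
  | zero => simpa using h
  | succ k ih =>
    have hpos : 0 < r / 16 ^ (k + 1) := by positivity
    have hlt : r / 16 ^ (k + 1) < δ := (div_le_self hr.le (one_le_pow₀ (by norm_num))).trans_lt hrδ
    rw [show r / 16 ^ k = 16 * (r / 16 ^ (k + 1)) by rw [pow_succ]; field_simp] at ih
    rw [pow_succ']
    exact ofReal_mul_le_of_doubling_failure hD0 hD (hm _ hpos) (hfail _ ⟨hpos, hlt⟩
      ((le_mul_of_one_le_left' (one_le_pow₀ (by norm_num))).trans ih)) ih

lemma ofReal_two_pow_mul (r : ℝ) (k : ℕ) :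
    ENNReal.ofReal (2 ^ k * r) = 32 ^ k * ENNReal.ofReal (r / 16 ^ k) := by
  rw [show (2 : ℝ) ^ k * r = 32 ^ k * (r / 16 ^ k) by
    rw [show (32 : ℝ) = 2 * 16 by norm_num, mul_pow]; field_simp,
    ENNReal.ofReal_mul (by positivity), ENNReal.ofReal_pow (by norm_num), ENNReal.ofReal_ofNat]

/- If `ν` failed to double at all small scales where `r * ν r / m r` is small, this quotient would
halve along `r / 16 ^ k`, so that `ν / m` would tend to `0` along these scales. -/
lemma frequently_doubling_of_small (hm : ∀ r, 0 < r → m (16 * r) ≤ D * m r) (hD0 : D ≠ 0)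
    (hD : D ≠ ⊤) (hν : Monotone ν) (hc : c ≠ ⊤) {η : ℝ≥0∞} (hη : η ≠ 0)
    (hdens : ∀ r ∈ Ioo (0 : ℝ) 1, η * m r < ν (6 * r))
    (h : ∃ᶠ r in 𝓝[>] 0, ENNReal.ofReal r * ν r ≤ c * m r) :
    ∃ᶠ r in 𝓝[>] 0, ENNReal.ofReal (16 * r) * ν (16 * r) ≤ c * m (16 * r) ∧
      ν (16 * r) ≤ 2 * D * ν r := by
  intro hfail
  obtain ⟨δ, hδ : 0 < δ, hδfail⟩ := mem_nhdsGT_iff_exists_Ioo_subset.1 hfail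
  obtain ⟨r, hr, hr0, hr'⟩ := (h.and_eventually (Ioo_mem_nhdsGT (lt_min one_pos hδ))).exists
  obtain ⟨hr1, hrδ⟩ := lt_min_iff.1 hr'
  obtain ⟨k, hk⟩ : ∃ k : ℕ, c * D < η * ENNReal.ofReal (2 ^ k * r) := by
    have htop := ENNReal.Tendsto.const_mul (a := η) (ENNReal.tendsto_ofReal_atTop.comp
      ((tendsto_pow_atTop_atTop_of_one_lt one_lt_two).atTop_mul_const hr0))
      (Or.inl ENNReal.top_ne_zero)
    rw [ENNReal.mul_top hη] at htop
    exact (htop.eventually (lt_mem_nhds (ENNReal.mul_lt_top hc.lt_top hD.lt_top))).exists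
  have hsmall := pow_mul_le_of_doubling_failure hm hD0 hD
    (fun s hs hsmall => (not_le.1 fun hdoub => hδfail hs ⟨hsmall, hdoub⟩).le) hr0 hrδ hr k
  set s := r / 16 ^ (k + 1) with hs
  have hs0 : 0 < s := by positivity
  have hs1 : s < 1 := (div_le_self hr0.le (one_le_pow₀ (by norm_num))).trans_lt hr1
  have hs16 : r / 16 ^ k = 16 * s := by rw [hs, pow_succ]; field_simp
  rw [hs16] at hsmall
  refine lt_irrefl (ENNReal.ofReal (2 ^ k * r) * ν (6 * s)) ?_
  calc ENNReal.ofReal (2 ^ k * r) * ν (6 * s)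
      ≤ 32 ^ k * (ENNReal.ofReal (16 * s) * ν (16 * s)) := by
        rw [ofReal_two_pow_mul r k, hs16, mul_assoc]
        gcongr
        exact hν (by linarith)
    _ ≤ c * (D * m s) := hsmall.trans (by gcongr; exact hm s hs0)
    _ = c * D * m s := by ring
    _ ≤ η * ENNReal.ofReal (2 ^ k * r) * m s := by gcongr
    _ = ENNReal.ofReal (2 ^ k * r) * (η * m s) := by ring
    _ < ENNReal.ofReal (2 ^ k * r) * ν (6 * s) :=
        (ENNReal.mul_lt_mul_iff_right (ENNReal.ofReal_pos.2 (by positivity)).ne'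
          ENNReal.ofReal_ne_top).2 (hdens s ⟨hs0, hs1⟩)

end Scales

section RelativeIsoperimetric

variable {X : Type*} [MetricSpace X] [MeasurableSpace X] {μ : Measure X} {Cd : ℝ≥0} {CP : ℝ}
  {E : Set X}

lemma IsDoublingWith.exists_density_transition (hμ : IsDoublingWith μ Cd)
    [IsLocallyFiniteMeasure μ] [ProperSpace X] {y : X} {t₀ : ℝ} (ht₀ : 0 < t₀)
    (hy : Tendsto (fun n : ℕ => μ (E ∩ closedBall y (t₀ / 2 ^ n)) /
      μ (closedBall y (t₀ / 2 ^ n))) atTop (𝓝 1))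
    (h₀ : 4 * (Cd : ℝ≥0∞) * μ (E ∩ closedBall y t₀) ≤ μ (closedBall y t₀)) :
    ∃ s ∈ Ioc 0 t₀, 4 * (Cd : ℝ≥0∞) * μ (E ∩ closedBall y s) ≤ μ (closedBall y s) ∧
      μ (closedBall y (s / 2)) ≤ 4 * (Cd : ℝ≥0∞) * μ (E ∩ closedBall y (s / 2)) := by
  have hdense : ∃ n : ℕ, μ (closedBall y (t₀ / 2 ^ n)) <
      4 * (Cd : ℝ≥0∞) * μ (E ∩ closedBall y (t₀ / 2 ^ n)) := by
    have hlt : (4 * (Cd : ℝ≥0∞))⁻¹ < 1 := by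
      rw [ENNReal.inv_lt_one]
      calc (1 : ℝ≥0∞) < 4 * 1 := by norm_num
        _ ≤ 4 * Cd := by gcongr; exact hμ.one_le_coe y
    obtain ⟨n, hn⟩ := (hy.eventually (lt_mem_nhds hlt)).exists
    have hpos : 0 < μ (closedBall y (t₀ / 2 ^ n)) :=
      (hμ.measure_ball_pos y (by positivity)).trans_le (measure_mono ball_subset_closedBall)
    have hCd0 : (Cd : ℝ≥0∞) ≠ 0 := (one_pos.trans_le (hμ.one_le_coe y)).ne'
    rw [ENNReal.lt_div_iff_mul_lt (Or.inl hpos.ne') (Or.inl measure_closedBall_lt_top.ne),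
      mul_comm, ← div_eq_mul_inv, ENNReal.div_lt_iff (Or.inl (by simp [hCd0]))
        (Or.inl (ENNReal.mul_ne_top (by simp) ENNReal.coe_ne_top)), mul_comm] at hn
    exact ⟨n, hn⟩
  obtain ⟨k, hk, hk'⟩ :=
    Nat.exists_not_and_succ_of_not_zero_of_exists (by simpa using h₀) hdense
  refine ⟨t₀ / 2 ^ k, ⟨by positivity, div_le_self ht₀.le (one_le_pow₀ one_le_two)⟩,
    not_lt.1 hk, ?_⟩
  rw [div_div, ← pow_succ]
  exact hk'.le

lemma IsDoublingWith.measure_ball_le_mul_inter (hμ : IsDoublingWith μ Cd) {y : X} {s : ℝ}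
    (hs : 0 < s)
    (h : μ (closedBall y (s / 2)) ≤ 4 * (Cd : ℝ≥0∞) * μ (E ∩ closedBall y (s / 2))) :
    μ (ball y s) ≤ 4 * (Cd : ℝ≥0∞) ^ 2 * μ (E ∩ ball y s) := by
  have hdoub := (hμ y (s / 2) (by positivity)).2.1
  rw [mul_div_cancel₀ s two_ne_zero] at hdoub
  calc μ (ball y s) ≤ Cd * (4 * (Cd : ℝ≥0∞) * μ (E ∩ closedBall y (s / 2))) := by
        refine hdoub.trans ?_
        gcongr
        exact (measure_mono ball_subset_closedBall).trans h
    _ = 4 * (Cd : ℝ≥0∞) ^ 2 * μ (E ∩ closedBall y (s / 2)) := by ring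
    _ ≤ 4 * (Cd : ℝ≥0∞) ^ 2 * μ (E ∩ ball y s) := by
        gcongr
        exact closedBall_subset_ball (by linarith)

lemma IsDoublingWith.measure_ball_le_mul_compl_inter (hμ : IsDoublingWith μ Cd) {y : X} {s : ℝ}
    (hs : 0 < s) (h : 4 * (Cd : ℝ≥0∞) * μ (E ∩ closedBall y s) ≤ μ (closedBall y s)) :
    μ (ball y s) ≤ 4 * (Cd : ℝ≥0∞) ^ 2 * μ (Eᶜ ∩ ball y s) := by
  have hCd0 : (Cd : ℝ≥0∞) ≠ 0 := (one_pos.trans_le (hμ.one_le_coe y)).ne'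
  have hE : 4 * μ (E ∩ ball y s) ≤ μ (ball y s) := by
    refine (ENNReal.mul_le_mul_iff_right hCd0 ENNReal.coe_ne_top).1 ?_
    calc Cd * (4 * μ (E ∩ ball y s)) ≤ 4 * (Cd : ℝ≥0∞) * μ (E ∩ closedBall y s) := by
          rw [← mul_assoc, mul_comm (Cd : ℝ≥0∞)]
          gcongr
          exact ball_subset_closedBall
      _ ≤ μ (closedBall y s) := h
      _ ≤ μ (ball y (2 * s)) := measure_mono (closedBall_subset_ball (by linarith))
      _ ≤ Cd * μ (ball y s) := (hμ y s hs).2.1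
  have hsplit : μ (ball y s) + 3 * μ (ball y s) ≤ μ (ball y s) + 4 * μ (Eᶜ ∩ ball y s) := by
    calc μ (ball y s) + 3 * μ (ball y s) = 4 * μ (ball y s) := by ring
      _ ≤ 4 * (μ (E ∩ ball y s) + μ (Eᶜ ∩ ball y s)) := by
          rw [inter_comm E, inter_comm Eᶜ, ← Set.sdiff_eq]
          gcongr
          exact measure_le_inter_add_sdiff _ _ _
      _ ≤ μ (ball y s) + 4 * μ (Eᶜ ∩ ball y s) := by rw [mul_add]; gcongr
  calc μ (ball y s) = 1 * μ (ball y s) := (one_mul _).symm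
    _ ≤ 3 * μ (ball y s) := by gcongr; norm_num
    _ ≤ 4 * 1 * μ (Eᶜ ∩ ball y s) := by
        rw [mul_one]
        exact (ENNReal.add_le_add_iff_left (hμ.measure_ball_lt_top y hs).ne).1 hsplit
    _ ≤ 4 * (Cd : ℝ≥0∞) ^ 2 * μ (Eᶜ ∩ ball y s) := by
        gcongr
        exact one_le_pow₀ (hμ.one_le_coe y)

lemma IsDoublingWith.measure_inter_closedBall_le (hμ : IsDoublingWith μ Cd) {x y : X} {ρ : ℝ}
    (hρ : 0 < ρ) (hyx : dist y x < 2 * ρ) (m : ℕ)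
    (h : 4 * (Cd : ℝ≥0∞) ^ (m + 4) * μ (E ∩ ball x (4 * ρ)) ≤ μ (ball x (4 * ρ))) :
    4 * (Cd : ℝ≥0∞) * μ (E ∩ closedBall y (ρ / 2 ^ m)) ≤ μ (closedBall y (ρ / 2 ^ m)) := by
  have hle : ρ / 2 ^ m ≤ ρ := div_le_self hρ.le (one_le_pow₀ one_le_two)
  have hscale : 2 ^ (m + 3) * (ρ / 2 ^ m) = 8 * ρ := by rw [pow_add]; field_simp; norm_num
  have hCd0 : (Cd : ℝ≥0∞) ≠ 0 := (one_pos.trans_le (hμ.one_le_coe y)).ne'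
  refine (ENNReal.mul_le_mul_iff_right (pow_ne_zero (m + 3) hCd0)
    (ENNReal.pow_ne_top ENNReal.coe_ne_top)).1 ?_
  calc (Cd : ℝ≥0∞) ^ (m + 3) * (4 * Cd * μ (E ∩ closedBall y (ρ / 2 ^ m)))
      = 4 * (Cd : ℝ≥0∞) ^ (m + 4) * μ (E ∩ closedBall y (ρ / 2 ^ m)) := by ring
    _ ≤ 4 * (Cd : ℝ≥0∞) ^ (m + 4) * μ (E ∩ ball x (4 * ρ)) := by
        gcongr
        exact closedBall_subset_ball' (by linarith)
    _ ≤ μ (ball y (2 ^ (m + 3) * (ρ / 2 ^ m))) := by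
        refine h.trans (measure_mono (ball_subset_ball' ?_))
        rw [hscale, dist_comm]
        linarith
    _ ≤ (Cd : ℝ≥0∞) ^ (m + 3) * μ (closedBall y (ρ / 2 ^ m)) := by
        refine (hμ.measure_ball_pow_le y (by positivity) _).trans ?_
        gcongr
        exact ball_subset_closedBall

variable [BorelSpace X] [ProperSpace X]

lemma measure_le_of_forall_exists_measure_ball_le (hμ : IsDoublingWith μ Cd) {f : X → ℝ}
    {A U : Set X} (hU : IsOpen U) {κ : ℝ≥0∞} {t₀ : ℝ}
    (h : ∀ y ∈ A, ∃ s ∈ Ioc 0 t₀, ball y (2 * s) ⊆ U ∧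
      μ (ball y s) ≤ κ * totVarOn μ f (ball y (2 * s))) :
    μ A ≤ (Cd : ℝ≥0∞) ^ 4 * κ * totVarOn μ f U := by
  choose! s hs hsU hsμ using h
  obtain ⟨t, htA, htc, htd, htcov⟩ := exists_disjoint_balls_covering (A := A)
    (r := fun y => 2 * s y) (R := 2 * t₀) (fun y hy => by linarith [(hs y hy).1])
    (fun y hy => by linarith [(hs y hy).2])
  have hsum : ∑' y : t, totVarOn μ f (ball (y : X) (2 * s y)) ≤ totVarOn μ f U := by
    rw [ENNReal.tsum_eq_iSup_sum]
    exact iSup_le fun F => sum_totVarOn_le_of_disjoint hU (fun _ _ => isOpen_ball)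
      (fun y _ => hsU y (htA y.2)) fun y _ z _ hyz =>
        (htd y.2 z.2 (Subtype.coe_injective.ne hyz)).mono ball_subset_closedBall
          ball_subset_closedBall
  have hball : ∀ y : t, μ (ball (y : X) (6 * (2 * s y))) ≤
      (Cd : ℝ≥0∞) ^ 4 * κ * totVarOn μ f (ball (y : X) (2 * s y)) := fun y => by
    have hy := htA y.2
    calc μ (ball (y : X) (6 * (2 * s y))) ≤ μ (ball (y : X) (2 ^ 4 * s y)) :=
          measure_mono (ball_subset_ball (by linarith [(hs y hy).1]))
      _ ≤ (Cd : ℝ≥0∞) ^ 4 * μ (ball (y : X) (s y)) := hμ.measure_ball_pow_le _ (hs y hy).1 4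
      _ ≤ (Cd : ℝ≥0∞) ^ 4 * κ * totVarOn μ f (ball (y : X) (2 * s y)) := by
          rw [mul_assoc]
          gcongr
          exact hsμ y hy
  calc μ A ≤ ∑' y : t, μ (ball (y : X) (6 * (2 * s y))) :=
        (measure_mono htcov).trans (measure_biUnion_le _ htc _)
    _ ≤ (Cd : ℝ≥0∞) ^ 4 * κ * ∑' y : t, totVarOn μ f (ball (y : X) (2 * s y)) :=
        (ENNReal.tsum_le_tsum hball).trans_eq ENNReal.tsum_mul_left
    _ ≤ (Cd : ℝ≥0∞) ^ 4 * κ * totVarOn μ f U := by gcongr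

variable [IsLocallyFiniteMeasure μ]

lemma exists_measure_ball_le_totVarOn (hμ : IsDoublingWith μ Cd) (hP : SupportsPoincare μ CP)
    (hE : NullMeasurableSet E μ) (hV : totVarOn μ (E.indicator fun _ => (1 : ℝ)) univ < ⊤) {y : X}
    {t₀ : ℝ} (ht₀ : 0 < t₀)
    (hy : Tendsto (fun n : ℕ => μ (E ∩ closedBall y (t₀ / 2 ^ n)) /
      μ (closedBall y (t₀ / 2 ^ n))) atTop (𝓝 1))
    (h₀ : 4 * (Cd : ℝ≥0∞) * μ (E ∩ closedBall y t₀) ≤ μ (closedBall y t₀)) :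
    ∃ s ∈ Ioc 0 t₀, μ (ball y s) ≤ 4 * (Cd : ℝ≥0∞) ^ 2 * (ENNReal.ofReal (CP * s) *
      totVarOn μ (E.indicator fun _ => (1 : ℝ)) (ball y (2 * s))) := by
  obtain ⟨s, hs, hsparse, hdense⟩ := hμ.exists_density_transition ht₀ hy h₀
  refine ⟨s, hs, ?_⟩
  calc μ (ball y s)
      ≤ min (4 * (Cd : ℝ≥0∞) ^ 2 * μ (E ∩ ball y s)) (4 * (Cd : ℝ≥0∞) ^ 2 * μ (Eᶜ ∩ ball y s)) :=
        le_min (hμ.measure_ball_le_mul_inter hs.1 hdense)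
          (hμ.measure_ball_le_mul_compl_inter hs.1 hsparse)
    _ = 4 * (Cd : ℝ≥0∞) ^ 2 * min (μ (E ∩ ball y s)) (μ (Eᶜ ∩ ball y s)) :=
        mul_right_mono.map_min.symm
    _ ≤ _ := by
        gcongr
        exact hP.min_measure_le_totVarOn hE y hs.1 (hμ.measure_ball_pos y hs.1).ne'
          ((totVarOn_mono (subset_univ _)).trans_lt hV)

lemma ae_mem_tendsto_density [IsUnifLocDoublingMeasure μ] (hE : NullMeasurableSet E μ) {t₀ : ℝ}
    (ht₀ : 0 < t₀) : ∀ᵐ y ∂μ, y ∈ E → Tendsto (fun n : ℕ =>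
      μ (E ∩ closedBall y (t₀ / 2 ^ n)) / μ (closedBall y (t₀ / 2 ^ n))) atTop (𝓝 1) := by
  filter_upwards [(ae_restrict_iff'₀ hE).1
    (IsUnifLocDoublingMeasure.ae_tendsto_measure_inter_div μ E 1)] with y hy hyE
  refine hy hyE (fun _ => y) _ (tendsto_nhdsWithin_iff.2 ⟨tendsto_const_nhds.div_atTop
    (tendsto_pow_atTop_atTop_of_one_lt one_lt_two), Eventually.of_forall fun n => ?_⟩)
    (Eventually.of_forall fun n => mem_closedBall_self (by positivity))
  exact mem_Ioi.2 (by positivity)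

lemma min_measure_le_of_totVarOn_small (hμ : IsDoublingWith μ Cd) (hP : SupportsPoincare μ CP)
    (hE : NullMeasurableSet E μ) (hV : totVarOn μ (E.indicator fun _ => (1 : ℝ)) univ < ⊤) {x : X}
    {ρ : ℝ} (hρ : 0 < ρ) {κ : ℝ≥0∞}
    (h : ENNReal.ofReal (16 * ρ) *
        totVarOn μ (E.indicator fun _ => (1 : ℝ)) (ball x (16 * ρ)) ≤
      (κ * (Cd : ℝ≥0∞) ^ 2 * ENNReal.ofReal (CP / 4))⁻¹ * μ (ball x (16 * ρ))) :
    κ * min (μ (E ∩ ball x (4 * ρ))) (μ (Eᶜ ∩ ball x (4 * ρ))) ≤ μ (ball x (4 * ρ)) := by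
  set N := totVarOn μ (E.indicator fun _ => (1 : ℝ)) (ball x (16 * ρ))
  set M := κ * (Cd : ℝ≥0∞) ^ 2 * ENNReal.ofReal (CP / 4) with hM
  have hpoincare := hP.min_measure_le_totVarOn hE x (r := 4 * ρ) (by positivity)
    (hμ.measure_ball_pos x (by positivity)).ne' ((totVarOn_mono (subset_univ _)).trans_lt hV)
  have hdoubling : μ (ball x (16 * ρ)) ≤ (Cd : ℝ≥0∞) ^ 2 * μ (ball x (4 * ρ)) := by
    have := hμ.measure_ball_pow_le x (r := 4 * ρ) (by positivity) 2
    rwa [show (2 : ℝ) ^ 2 * (4 * ρ) = 16 * ρ by ring] at this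
  calc κ * min (μ (E ∩ ball x (4 * ρ))) (μ (Eᶜ ∩ ball x (4 * ρ)))
      ≤ κ * (ENNReal.ofReal (CP * (4 * ρ)) * N) := by
        gcongr
        refine hpoincare.trans ?_
        gcongr
        exact totVarOn_mono (ball_subset_ball (by linarith))
    _ = κ * ENNReal.ofReal (CP / 4) * (ENNReal.ofReal (16 * ρ) * N) := by
        rw [show CP * (4 * ρ) = CP / 4 * (16 * ρ) by ring, ENNReal.ofReal_mul' (by positivity)]
        ring
    _ ≤ κ * ENNReal.ofReal (CP / 4) * (M⁻¹ * ((Cd : ℝ≥0∞) ^ 2 * μ (ball x (4 * ρ)))) := by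
        gcongr κ * ENNReal.ofReal (CP / 4) * ?_
        exact h.trans (by gcongr)
    _ = M * M⁻¹ * μ (ball x (4 * ρ)) := by rw [hM]; ring
    _ ≤ μ (ball x (4 * ρ)) := mul_le_of_le_one_left' (ENNReal.mul_inv_le_one M)

lemma exists_mul_ofReal_div_two_pow_le {κ ε : ℝ≥0∞} (hκ : κ ≠ ⊤) (hε : ε ≠ 0) (a : ℝ) :
    ∃ m : ℕ, κ * ENNReal.ofReal (a / 2 ^ m) ≤ ε := by
  have hlim : Tendsto (fun m : ℕ => κ * ENNReal.ofReal (a / 2 ^ m)) atTop (𝓝 0) := by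
    have ha : Tendsto (fun m : ℕ => a / 2 ^ m) atTop (𝓝 0) :=
      tendsto_const_nhds.div_atTop (tendsto_pow_atTop_atTop_of_one_lt one_lt_two)
    simpa using ENNReal.Tendsto.const_mul (ENNReal.tendsto_ofReal ha) (Or.inr hκ)
  exact (hlim.eventually (ge_mem_nhds hε.bot_lt)).exists

variable [IsUnifLocDoublingMeasure μ]

lemma measure_inter_ball_le_of_sparse (hμ : IsDoublingWith μ Cd) (hP : SupportsPoincare μ CP)
    (hE : NullMeasurableSet E μ) (hV : totVarOn μ (E.indicator fun _ => (1 : ℝ)) univ < ⊤) (x : X)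
    {ρ : ℝ} (hρ : 0 < ρ) (m : ℕ)
    (hm : 4 * (Cd : ℝ≥0∞) ^ (m + 4) * μ (E ∩ ball x (4 * ρ)) ≤ μ (ball x (4 * ρ))) :
    μ (E ∩ ball x (2 * ρ)) ≤ (Cd : ℝ≥0∞) ^ 4 *
      (4 * (Cd : ℝ≥0∞) ^ 2 * (ENNReal.ofReal CP * ENNReal.ofReal (ρ / 2 ^ m))) *
        totVarOn μ (E.indicator fun _ => (1 : ℝ)) (ball x (16 * ρ)) := by
  set t₀ := ρ / 2 ^ m
  have ht₀ : 0 < t₀ := by positivity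
  have htρ : t₀ ≤ ρ := div_le_self hρ.le (one_le_pow₀ one_le_two)
  set A : Set X := {y ∈ E ∩ ball x (2 * ρ) | Tendsto (fun n : ℕ =>
    μ (E ∩ closedBall y (t₀ / 2 ^ n)) / μ (closedBall y (t₀ / 2 ^ n))) atTop (𝓝 1)}
  have hEA : μ (E ∩ ball x (2 * ρ)) ≤ μ A := measure_mono_ae <| by
    filter_upwards [ae_mem_tendsto_density hE ht₀] with y hy hyE using ⟨hyE, hy hyE.1⟩
  refine hEA.trans (measure_le_of_forall_exists_measure_ball_le hμ isOpen_ball (t₀ := t₀)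
    fun y hy => ?_)
  have hyx : dist y x < 2 * ρ := hy.1.2
  obtain ⟨s, hs, hsμ⟩ := exists_measure_ball_le_totVarOn hμ hP hE hV ht₀ hy.2
    (hμ.measure_inter_closedBall_le hρ hyx m hm)
  refine ⟨s, hs, ball_subset_ball' (by linarith [hs.2]), hsμ.trans ?_⟩
  rw [ENNReal.ofReal_mul' hs.1.le, ← mul_assoc]
  gcongr
  exact hs.2

lemma exists_forall_measure_inter_ball_le (hμ : IsDoublingWith μ Cd) (hP : SupportsPoincare μ CP)
    (hE : NullMeasurableSet E μ) (hV : totVarOn μ (E.indicator fun _ => (1 : ℝ)) univ < ⊤)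
    {ε : ℝ≥0∞} (hε : ε ≠ 0) :
    ∃ c₀ : ℝ≥0∞, c₀ ≠ 0 ∧ c₀ ≠ ⊤ ∧ ∀ (x : X) (ρ : ℝ), 0 < ρ →
      ENNReal.ofReal (16 * ρ) * totVarOn μ (E.indicator fun _ => (1 : ℝ)) (ball x (16 * ρ)) ≤
        c₀ * μ (ball x (16 * ρ)) →
      μ (E ∩ ball x (2 * ρ)) ≤ ε * (ENNReal.ofReal ρ *
        totVarOn μ (E.indicator fun _ => (1 : ℝ)) (ball x (16 * ρ))) ∨
      μ (Eᶜ ∩ ball x (2 * ρ)) ≤ ε * (ENNReal.ofReal ρ *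
        totVarOn μ (E.indicator fun _ => (1 : ℝ)) (ball x (16 * ρ))) := by
  obtain ⟨m, hm⟩ := exists_mul_ofReal_div_two_pow_le
    (κ := (Cd : ℝ≥0∞) ^ 4 * (4 * (Cd : ℝ≥0∞) ^ 2)) (by finiteness) hε CP
  set κ : ℝ≥0∞ := 4 * (Cd : ℝ≥0∞) ^ (m + 4)
  have hM : κ * (Cd : ℝ≥0∞) ^ 2 * ENNReal.ofReal (CP / 4) ≠ ⊤ := by finiteness
  refine ⟨min (κ * (Cd : ℝ≥0∞) ^ 2 * ENNReal.ofReal (CP / 4))⁻¹ 1,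
    (lt_min (ENNReal.inv_pos.2 hM) one_pos).ne',
    ((min_le_right _ _).trans_lt ENNReal.one_lt_top).ne, fun x ρ hρ h => ?_⟩
  have hmin := min_measure_le_of_totVarOn_small hμ hP hE hV hρ
    (h.trans (by gcongr; exact min_le_left _ _))
  set N := totVarOn μ (E.indicator fun _ => (1 : ℝ)) (ball x (16 * ρ))
  have hscale : (Cd : ℝ≥0∞) ^ 4 * (4 * (Cd : ℝ≥0∞) ^ 2 *
      (ENNReal.ofReal CP * ENNReal.ofReal (ρ / 2 ^ m))) * N ≤ ε * (ENNReal.ofReal ρ * N) := by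
    calc _ = (Cd : ℝ≥0∞) ^ 4 * (4 * (Cd : ℝ≥0∞) ^ 2) * ENNReal.ofReal (CP / 2 ^ m) *
          (ENNReal.ofReal ρ * N) := by
          rw [← ENNReal.ofReal_mul' (by positivity), show CP * (ρ / 2 ^ m) = CP / 2 ^ m * ρ by ring,
            ENNReal.ofReal_mul' hρ.le]
          ring
      _ ≤ ε * (ENNReal.ofReal ρ * N) := by gcongr
  rcases le_total (μ (E ∩ ball x (4 * ρ))) (μ (Eᶜ ∩ ball x (4 * ρ))) with hle | hle
  · rw [min_eq_left hle] at hmin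
    exact Or.inl ((measure_inter_ball_le_of_sparse hμ hP hE hV x hρ m hmin).trans hscale)
  · rw [min_eq_right hle] at hmin
    have hcompl := measure_inter_ball_le_of_sparse hμ hP hE.compl
      (by rwa [totVarOn_indicator_compl]) x hρ m hmin
    rw [totVarOn_indicator_compl] at hcompl
    exact Or.inr (hcompl.trans hscale)

end RelativeIsoperimetric

section DensityRegimes

variable {X : Type*} [MetricSpace X] [MeasurableSpace X] {μ : Measure X} {Cd : ℝ≥0} {CP : ℝ}
  {D : ℝ≥0∞} {E : Set X} {x : X} {r ρ : ℝ}

lemma inv_four_mul_le_half {a b : ℝ≥0∞} (h : a ≤ 2 * D * b) : (4 * D)⁻¹ * a ≤ b / 2 := by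
  rw [ENNReal.le_div_iff_mul_le (by simp) (by simp)]
  calc (4 * D)⁻¹ * a * 2 ≤ (4 * D)⁻¹ * (2 * D * b) * 2 := by gcongr
    _ = (4 * D)⁻¹ * (4 * D) * b := by ring
    _ ≤ b := mul_le_of_le_one_left' (ENNReal.inv_mul_le_one _)

lemma isCuttable_of_le_half (hρ : 0 < ρ)
    (hcut : ENNReal.ofReal (2 / ρ) * μ (E ∩ ball x (2 * ρ)) ≤
      totVarOn μ (E.indicator fun _ => (1 : ℝ)) (ball x ρ) / 2)
    (hdoub : totVarOn μ (E.indicator fun _ => (1 : ℝ)) (ball x (16 * ρ)) ≤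
      2 * D * totVarOn μ (E.indicator fun _ => (1 : ℝ)) (ball x ρ)) :
    IsCuttable μ E (4 * D)⁻¹ x ρ := by
  rw [IsCuttable, ← ENNReal.add_halves (totVarOn μ _ (ball x ρ))]
  exact add_le_add hcut (inv_four_mul_le_half
    ((totVarOn_mono (ball_subset_ball (by linarith))).trans hdoub))

lemma IsDoublingWith.isCuttable_of_large (hμ : IsDoublingWith μ Cd) (hρ : 0 < ρ)
    (hlarge : 4 * (Cd : ℝ≥0∞) * μ (ball x ρ) ≤
      ENNReal.ofReal ρ * totVarOn μ (E.indicator fun _ => (1 : ℝ)) (ball x ρ))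
    (hdoub : totVarOn μ (E.indicator fun _ => (1 : ℝ)) (ball x (16 * ρ)) ≤
      2 * D * totVarOn μ (E.indicator fun _ => (1 : ℝ)) (ball x ρ)) :
    IsCuttable μ E (4 * D)⁻¹ x ρ := by
  refine isCuttable_of_le_half hρ ?_ hdoub
  rw [ENNReal.le_div_iff_mul_le (by simp) (by simp)]
  calc ENNReal.ofReal (2 / ρ) * μ (E ∩ ball x (2 * ρ)) * 2
      ≤ ENNReal.ofReal (2 / ρ) * (Cd * μ (ball x ρ)) * 2 := by
        gcongr
        exact (measure_mono inter_subset_right).trans (hμ x ρ hρ).2.1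
    _ = ENNReal.ofReal ρ⁻¹ * (4 * Cd * μ (ball x ρ)) := by
        rw [div_eq_mul_inv, ENNReal.ofReal_mul zero_le_two, ENNReal.ofReal_ofNat]
        ring
    _ ≤ ENNReal.ofReal ρ⁻¹ *
        (ENNReal.ofReal ρ * totVarOn μ (E.indicator fun _ => (1 : ℝ)) (ball x ρ)) := by gcongr
    _ = totVarOn μ (E.indicator fun _ => (1 : ℝ)) (ball x ρ) := by
        rw [← mul_assoc, ← ENNReal.ofReal_mul (by positivity), inv_mul_cancel₀ hρ.ne',
          ENNReal.ofReal_one, one_mul]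

lemma isCuttable_of_measure_inter_le (hρ : 0 < ρ)
    (hsmall : μ (E ∩ ball x (2 * ρ)) ≤ (8 * D)⁻¹ * (ENNReal.ofReal ρ *
      totVarOn μ (E.indicator fun _ => (1 : ℝ)) (ball x (16 * ρ))))
    (hdoub : totVarOn μ (E.indicator fun _ => (1 : ℝ)) (ball x (16 * ρ)) ≤
      2 * D * totVarOn μ (E.indicator fun _ => (1 : ℝ)) (ball x ρ)) :
    IsCuttable μ E (4 * D)⁻¹ x ρ := by
  refine isCuttable_of_le_half hρ (le_trans ?_ (inv_four_mul_le_half hdoub)) hdoub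
  set N := totVarOn μ (E.indicator fun _ => (1 : ℝ)) (ball x (16 * ρ))
  calc ENNReal.ofReal (2 / ρ) * μ (E ∩ ball x (2 * ρ))
      ≤ ENNReal.ofReal (2 / ρ) * ((8 * D)⁻¹ * (ENNReal.ofReal ρ * N)) := by gcongr
    _ = ENNReal.ofReal (2 / ρ * ρ) * (2 * (4 * D))⁻¹ * N := by
        rw [ENNReal.ofReal_mul' hρ.le, ← mul_assoc 2 4, show (2 : ℝ≥0∞) * 4 = 8 by norm_num]
        ring
    _ = 2 * 2⁻¹ * ((4 * D)⁻¹ * N) := by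
        rw [div_mul_cancel₀ _ hρ.ne', ENNReal.mul_inv (by simp) (by simp), ENNReal.ofReal_ofNat]
        ring
    _ = (4 * D)⁻¹ * N := by rw [ENNReal.mul_inv_cancel two_ne_zero (by simp), one_mul]

lemma IsDoublingWith.measure_ball_sixteen_mul_le (hμ : IsDoublingWith μ Cd) (x : X)
    (hr : 0 < r) : μ (ball x (16 * r)) ≤ (Cd : ℝ≥0∞) ^ 4 * μ (ball x r) := by
  simpa only [show (2 : ℝ) ^ 4 = 16 by norm_num] using hμ.measure_ball_pow_le x hr 4

variable [BorelSpace X] [ProperSpace X] [IsLocallyFiniteMeasure μ] [IsUnifLocDoublingMeasure μ]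

lemma totVarSet_setOf_large_eq_zero (hμ : IsDoublingWith μ Cd) (hE : NullMeasurableSet E μ)
    (hV : totVarOn μ (E.indicator fun _ => (1 : ℝ)) univ < ⊤) :
    totVarSet μ (E.indicator fun _ => (1 : ℝ)) {x | ∃ᶠ r in 𝓝[>] (0 : ℝ),
      4 * (Cd : ℝ≥0∞) * μ (ball x r) ≤
        ENNReal.ofReal r * totVarOn μ (E.indicator fun _ => (1 : ℝ)) (ball x r)} = 0 := by
  refine totVarSet_eq_zero_of_isCuttable hE hV (c := (4 * (Cd : ℝ≥0∞) ^ 4)⁻¹)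
    (ENNReal.inv_ne_zero.2 (by finiteness)) fun x hx => ?_
  have hCd0 : (Cd : ℝ≥0∞) ≠ 0 := (one_pos.trans_le (hμ.one_le_coe x)).ne'
  have hdoub := frequently_doubling_of_large (m := fun r => μ (ball x r))
    (fun r hr => hμ.measure_ball_sixteen_mul_le x hr) (fun r hr => (hμ.measure_ball_pos x hr).ne')
    (fun r s hrs => measure_mono (ball_subset_ball hrs)) hV.ne
    (fun r => totVarOn_mono (subset_univ (ball x r))) (mul_ne_zero four_ne_zero hCd0) hx
  exact (hdoub.and_eventually self_mem_nhdsWithin).mono fun ρ ⟨⟨hlarge, hdoub⟩, hρ⟩ =>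
    Or.inl (hμ.isCuttable_of_large hρ hlarge hdoub)

lemma exists_totVarSet_setOf_small_eq_zero (hμ : IsDoublingWith μ Cd) (hP : SupportsPoincare μ CP)
    (hE : NullMeasurableSet E μ) (hV : totVarOn μ (E.indicator fun _ => (1 : ℝ)) univ < ⊤) :
    ∃ c₀ : ℝ≥0∞, c₀ ≠ 0 ∧ c₀ ≠ ⊤ ∧ totVarSet μ (E.indicator fun _ => (1 : ℝ))
      {x | ∃ᶠ r in 𝓝[>] (0 : ℝ),
        ENNReal.ofReal r * totVarOn μ (E.indicator fun _ => (1 : ℝ)) (ball x r) ≤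
          c₀ * μ (ball x r)} = 0 := by
  set f : X → ℝ := E.indicator fun _ => (1 : ℝ) with hf
  obtain ⟨c₀, hc₀, hc₀', hiso⟩ := exists_forall_measure_inter_ball_le hμ hP hE hV
    (ε := (8 * (Cd : ℝ≥0∞) ^ 4)⁻¹) (ENNReal.inv_ne_zero.2 (by finiteness))
  refine ⟨c₀, hc₀, hc₀', ?_⟩
  set T := {x | ∃ᶠ r in 𝓝[>] (0 : ℝ), ENNReal.ofReal r * totVarOn μ f (ball x r) ≤
    c₀ * μ (ball x r)}
  set Z := {x | ∀ η : ℝ≥0∞, η ≠ 0 → ∃ r ∈ Ioo (0 : ℝ) 1,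
    totVarOn μ f (ball x (6 * r)) ≤ η * μ (ball x r)} with hZ
  have hfm : AEMeasurable f μ := aemeasurable_const.indicator₀ hE
  have hTZ : totVarSet μ f (T \ Z) = 0 := by
    refine totVarSet_eq_zero_of_isCuttable hE hV (c := (4 * (Cd : ℝ≥0∞) ^ 4)⁻¹)
      (ENNReal.inv_ne_zero.2 (by finiteness)) fun x ⟨hxT, hxZ⟩ => ?_
    have hCd0 : (Cd : ℝ≥0∞) ≠ 0 := (one_pos.trans_le (hμ.one_le_coe x)).ne'
    simp only [hZ, mem_ofPred_eq] at hxZ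
    push Not at hxZ
    obtain ⟨η, hη, hdens⟩ := hxZ
    have hdoub := frequently_doubling_of_small (ν := fun r => totVarOn μ f (ball x r))
      (m := fun r => μ (ball x r)) (fun r hr => hμ.measure_ball_sixteen_mul_le x hr)
      (pow_ne_zero 4 hCd0) (by finiteness) (fun r s hrs => totVarOn_mono (ball_subset_ball hrs))
      hc₀' hη hdens hxT
    refine (hdoub.and_eventually self_mem_nhdsWithin).mono fun ρ ⟨⟨hsmall, hdoub⟩, hρ⟩ =>
      (hiso x ρ hρ hsmall).imp (isCuttable_of_measure_inter_le hρ · hdoub) fun h => ?_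
    simp only [hf, ← totVarOn_indicator_compl E] at h hdoub
    exact isCuttable_of_measure_inter_le hρ h hdoub
  refine le_bot_iff.1 ((totVarSet_mono ?_).trans (totVarSet_union_eq_zero
    (indicator_one_mem_Icc E) hfm (totVarSet_setOf_density_eq_zero (indicator_one_mem_Icc E) hfm)
    hTZ).le)
  exact (subset_union_right (s := Z)).trans_eq union_sdiff_self.symm

end DensityRegimes

section ModerateDensity

variable {X : Type*} [MetricSpace X] [MeasurableSpace X] {μ : Measure X} {Cd : ℝ≥0}
  {f : X → ℝ} {M c₀ C₁ θ : ℝ≥0∞} {x : X} {r : ℝ}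

lemma IsDoublingWith.totVarOn_ball_six_mul_le (hμ : IsDoublingWith μ Cd) (hr : 0 < r)
    (hc₀ : c₀ ≠ 0) (hc₀' : c₀ ≠ ⊤)
    (hup : ENNReal.ofReal (8 * r) * totVarOn μ f (ball x (8 * r)) ≤ M * μ (ball x (8 * r)))
    (hlow : c₀ * μ (ball x r) ≤ ENNReal.ofReal r * totVarOn μ f (ball x r)) :
    totVarOn μ f (ball x (6 * r)) ≤
      M * (Cd : ℝ≥0∞) ^ 3 * c₀⁻¹ * totVarOn μ f (ball x r) := by
  refine (ENNReal.mul_le_mul_iff_right (a := ENNReal.ofReal r)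
    (ENNReal.ofReal_pos.2 hr).ne' ENNReal.ofReal_ne_top).1 ?_
  have hdoub : μ (ball x (8 * r)) ≤ (Cd : ℝ≥0∞) ^ 3 * μ (ball x r) := by
    simpa only [show (2 : ℝ) ^ 3 = 8 by norm_num] using hμ.measure_ball_pow_le x hr 3
  calc ENNReal.ofReal r * totVarOn μ f (ball x (6 * r))
      ≤ ENNReal.ofReal (8 * r) * totVarOn μ f (ball x (8 * r)) := by
        gcongr ENNReal.ofReal ?_ * ?_
        · linarith
        · exact totVarOn_mono (ball_subset_ball (by linarith))
    _ ≤ M * ((Cd : ℝ≥0∞) ^ 3 * μ (ball x r)) := hup.trans (by gcongr)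
    _ = M * (Cd : ℝ≥0∞) ^ 3 * (c₀⁻¹ * (c₀ * μ (ball x r))) := by
        rw [ENNReal.inv_mul_cancel_left hc₀ hc₀', mul_assoc]
    _ ≤ M * (Cd : ℝ≥0∞) ^ 3 * (c₀⁻¹ * (ENNReal.ofReal r * totVarOn μ f (ball x r))) := by gcongr
    _ = ENNReal.ofReal r * (M * (Cd : ℝ≥0∞) ^ 3 * c₀⁻¹ * totVarOn μ f (ball x r)) := by ring

variable [BorelSpace X]

lemma lintegral_abs_sub_le_measure_ball {w : X → ℝ} (hf : ∀ y, f y ∈ Icc (0 : ℝ) 1)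
    (hw : ∀ y, w y ∈ Icc (0 : ℝ) 1) (hwf : ∀ y ∉ ball x r, w y = f y) :
    ∫⁻ y, ENNReal.ofReal |w y - f y| ∂μ ≤ μ (ball x r) := by
  rw [← lintegral_indicator_one measurableSet_ball]
  refine lintegral_mono fun y => ?_
  by_cases hy : y ∈ ball x r
  · rw [indicator_of_mem hy, Pi.one_apply, ENNReal.ofReal_le_one]
    exact Real.dist_le_of_mem_Icc_01 (hw y) (hf y)
  · simp [hwf y hy]

variable [ProperSpace X]

lemma exists_isCompetitor_of_iInf_lt (hf : ∀ y, f y ∈ Icc (0 : ℝ) 1) (hfm : AEMeasurable f μ)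
    (hr : 0 < r) (hc₀ : c₀ ≠ 0) (hc₀' : c₀ ≠ ⊤) (hθ : θ ≤ 1)
    (hlow : c₀ * μ (ball x r) ≤ ENNReal.ofReal r * totVarOn μ f (ball x r))
    (hup : totVarOn μ f (ball x (6 * r)) ≤ C₁ * totVarOn μ f (ball x r))
    (hφ : (⨅ (φ : X → ℝ) (_ : MemBVc μ φ (ball x r)),
      totVarOn μ (fun y => f y + φ y) (ball x r)) < θ * totVarOn μ f (ball x r)) :
    ∃ w, IsCompetitor μ f ((1 - θ) * C₁⁻¹) c₀⁻¹ x r w := by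
  simp only [iInf_lt_iff] at hφ
  obtain ⟨φ, ⟨⟨hφi, -⟩, hφc, hφs⟩, hφ⟩ := hφ
  set w : X → ℝ := fun y => projIcc (0 : ℝ) 1 zero_le_one (f y + φ y) with hw
  have hwf : ∀ y ∉ tsupport φ, w y = f y := fun y hy => by
    simp only [hw, image_eq_zero_of_notMem_tsupport hy, add_zero, projIcc_of_mem _ (hf y)]
  refine ⟨w, fun y => Subtype.coe_prop _, ?_, ⟨tsupport φ, hφc, hφs, hwf⟩, ?_, ?_⟩
  · exact (continuous_subtype_val.comp continuous_projIcc).measurable.comp_aemeasurable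
      (hfm.add hφi.aestronglyMeasurable.aemeasurable)
  · calc totVarOn μ w (ball x r) + (1 - θ) * C₁⁻¹ * totVarOn μ f (ball x (6 * r))
        ≤ θ * totVarOn μ f (ball x r) + (1 - θ) * C₁⁻¹ * (C₁ * totVarOn μ f (ball x r)) := by
          gcongr
          exact (totVarOn_comp_le (LipschitzWith.projIcc zero_le_one)).trans hφ.le
      _ = θ * totVarOn μ f (ball x r) + (1 - θ) * (C₁⁻¹ * C₁) * totVarOn μ f (ball x r) := by ring
      _ ≤ θ * totVarOn μ f (ball x r) + (1 - θ) * 1 * totVarOn μ f (ball x r) := by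
          gcongr
          exact ENNReal.inv_mul_le_one _
      _ = totVarOn μ f (ball x r) := by
          rw [mul_one, ← add_mul, add_tsub_cancel_of_le hθ, one_mul]
  · calc ∫⁻ y, ENNReal.ofReal |w y - f y| ∂μ
        ≤ μ (ball x r) := lintegral_abs_sub_le_measure_ball hf (fun y => Subtype.coe_prop _)
          fun y hy => hwf y fun h => hy (hφs h)
      _ = c₀⁻¹ * (c₀ * μ (ball x r)) := (ENNReal.inv_mul_cancel_left hc₀ hc₀').symm
      _ ≤ c₀⁻¹ * (ENNReal.ofReal r * totVarOn μ f (ball x r)) := by gcongr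
      _ ≤ c₀⁻¹ * ENNReal.ofReal r * totVarOn μ f (ball x (6 * r)) := by
          rw [mul_assoc]
          gcongr
          exact totVarOn_mono (ball_subset_ball (by linarith))

lemma totVarSet_eq_zero_of_moderate [IsLocallyFiniteMeasure μ]
    [IsUnifLocDoublingMeasure μ] (hμ : IsDoublingWith μ Cd) (hf : ∀ y, f y ∈ Icc (0 : ℝ) 1)
    (hfm : AEMeasurable f μ) (hV : totVarOn μ f univ < ⊤) (hM : M ≠ ⊤) (hc₀ : c₀ ≠ 0)
    (hc₀' : c₀ ≠ ⊤) (hθ : θ < 1) {A : Set X}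
    (hup : ∀ x ∈ A, ∀ᶠ r in 𝓝[>] (0 : ℝ),
      ENNReal.ofReal r * totVarOn μ f (ball x r) ≤ M * μ (ball x r))
    (hlow : ∀ x ∈ A, ∀ᶠ r in 𝓝[>] (0 : ℝ),
      c₀ * μ (ball x r) ≤ ENNReal.ofReal r * totVarOn μ f (ball x r))
    (hφ : ∀ x ∈ A, ∃ᶠ r in 𝓝[>] (0 : ℝ), (⨅ (φ : X → ℝ) (_ : MemBVc μ φ (ball x r)),
      totVarOn μ (fun y => f y + φ y) (ball x r)) < θ * totVarOn μ f (ball x r)) :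
    totVarSet μ f A = 0 := by
  have hC₁ : M * (Cd : ℝ≥0∞) ^ 3 * c₀⁻¹ ≠ ⊤ := by finiteness
  refine totVarSet_eq_zero_of_competitors hf hfm hV.ne
    (c := (1 - θ) * (M * (Cd : ℝ≥0∞) ^ 3 * c₀⁻¹)⁻¹)
    (mul_ne_zero (tsub_pos_of_lt hθ).ne' (ENNReal.inv_ne_zero.2 hC₁))
    (ENNReal.inv_ne_top.2 hc₀) fun x hx => ?_
  have hup8 := eventually_nhdsGT_zero_mul_left (show (0 : ℝ) < 8 by norm_num) (hup x hx)
  refine ((hφ x hx).and_eventually ((hlow x hx).and (hup8.and self_mem_nhdsWithin))).mono ?_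
  rintro r ⟨hφ, hlow, hup, hr⟩
  exact exists_isCompetitor_of_iInf_lt hf hfm hr hc₀ hc₀' hθ.le hlow
    (hμ.totVarOn_ball_six_mul_le hr hc₀ hc₀' hup hlow) hφ

end ModerateDensity

lemma totVarSet_setOf_frequently_iInf_lt_eq_zero {X : Type*} [MetricSpace X] [ProperSpace X]
    [MeasurableSpace X] [BorelSpace X] {μ : Measure X} [IsLocallyFiniteMeasure μ]
    [IsUnifLocDoublingMeasure μ] {Cd : ℝ≥0} {CP : ℝ} {E : Set X} {θ : ℝ≥0∞}
    (hμ : IsDoublingWith μ Cd) (hP : SupportsPoincare μ CP) (hE : NullMeasurableSet E μ)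
    (hV : totVarOn μ (E.indicator fun _ => (1 : ℝ)) univ < ⊤) (hθ : θ < 1) :
    totVarSet μ (E.indicator fun _ => (1 : ℝ)) {x | ∃ᶠ r in 𝓝[>] (0 : ℝ),
      (⨅ (φ : X → ℝ) (_ : MemBVc μ φ (ball x r)),
          totVarOn μ (fun y => E.indicator (fun _ => (1 : ℝ)) y + φ y) (ball x r)) <
        θ * totVarOn μ (E.indicator fun _ => (1 : ℝ)) (ball x r)} = 0 := by
  have hf := indicator_one_mem_Icc E
  have hfm : AEMeasurable (E.indicator fun _ => (1 : ℝ)) μ := aemeasurable_const.indicator₀ hE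
  have hlarge := totVarSet_setOf_large_eq_zero hμ hE hV
  obtain ⟨c₀, hc₀, hc₀', hsmall⟩ := exists_totVarSet_setOf_small_eq_zero hμ hP hE hV
  have hmoderate := fun A => totVarSet_eq_zero_of_moderate hμ hf hfm hV (M := 4 * Cd)
    (by finiteness) hc₀ hc₀' hθ (A := A)
  have hextreme := totVarSet_union_eq_zero hf hfm hlarge hsmall
  refine le_bot_iff.1 ((totVarSet_mono ((subset_union_right).trans_eq union_sdiff_self.symm)).trans
    (totVarSet_union_eq_zero hf hfm hextreme (hmoderate _ (fun x hx => ?_) (fun x hx => ?_)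
      fun x hx => hx.1)).le)
  · exact (not_frequently.1 fun h => hx.2 (Or.inl h)).mono fun r hr => (not_le.1 hr).le
  · exact (not_frequently.1 fun h => hx.2 (Or.inr h)).mono fun r hr => (not_le.1 hr).le

theorem statement12_general {X : Type u} [MetricSpace X] [CompleteSpace X] [MeasurableSpace X]
    [BorelSpace X] {μ : Measure X} {Cd : ℝ≥0} {CP : ℝ} (hμ : IsDoublingWith μ Cd)
    (hP : SupportsPoincare μ CP) {E : Set X} (hE : NullMeasurableSet E μ)
    (hper : totVarOn μ (E.indicator fun _ => (1 : ℝ)) univ < ⊤) :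
    totVarSet μ (E.indicator fun _ => (1 : ℝ))
      {x : X | ∃ θ : ℝ, 0 < θ ∧ θ < 1 ∧ ∃ rs : ℕ → ℝ, (∀ i, 0 < rs i) ∧ Tendsto rs atTop (𝓝 0) ∧
        ∀ i, (⨅ (φ : X → ℝ) (_ : MemBVc μ φ (ball x (rs i))),
            totVarOn μ (fun y => E.indicator (fun _ => (1 : ℝ)) y + φ y) (ball x (rs i))) <
          ENNReal.ofReal θ * totVarOn μ (E.indicator fun _ => (1 : ℝ)) (ball x (rs i))} = 0 := by
  have := hμ.properSpace
  have := hμ.isLocallyFiniteMeasure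
  have := hμ.isUnifLocDoublingMeasure
  have hnull (q : {q : ℚ // (q : ℝ) < 1}) := totVarSet_setOf_frequently_iInf_lt_eq_zero hμ hP hE
    hper (ENNReal.ofReal_lt_one.2 q.2)
  refine le_bot_iff.1 ((totVarSet_mono ?_).trans (totVarSet_iUnion_eq_zero
    (indicator_one_mem_Icc E) (aemeasurable_const.indicator₀ hE) hnull).le)
  rintro x ⟨θ, -, hθ, rs, hrs_pos, hrs, hlt⟩
  obtain ⟨q, hθq, hq⟩ := exists_rat_btwn hθ
  have hrs' : Tendsto rs atTop (𝓝[>] 0) :=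
    tendsto_nhdsWithin_iff.2 ⟨hrs, Eventually.of_forall hrs_pos⟩
  refine mem_iUnion.2 ⟨⟨q, hq⟩, hrs'.frequently (Frequently.of_forall fun i => ?_)⟩
  exact (hlt i).trans_le (by gcongr)

theorem statement12 {X : Type u} [MetricSpace X] [MeasurableSpace X] [BorelSpace X]
    (μ : Measure X) (Cd : ℝ≥0) (CP : ℝ) (hCd : 1 ≤ Cd) (hCP : 0 < CP)
    (hX : GoodSpace X μ Cd CP)
    (E : Set X) (hE : NullMeasurableSet E μ)
    (hper : totVarOn μ (E.indicator fun _ => (1:ℝ)) Set.univ < ⊤) :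
    totVarSet μ (E.indicator fun _ => (1:ℝ))
      {x : X | ∃ θ : ℝ, 0 < θ ∧ θ < 1 ∧ ∃ rs : ℕ → ℝ, (∀ i, 0 < rs i) ∧
        Tendsto rs atTop (𝓝 0) ∧
        ∀ i,
          (⨅ (φ : X → ℝ) (_ : MemBVc μ φ (ball x (rs i))),
            totVarOn μ (fun y => E.indicator (fun _ => (1:ℝ)) y + φ y)
              (ball x (rs i))) <
            ENNReal.ofReal θ *
              totVarOn μ (E.indicator fun _ => (1:ℝ)) (ball x (rs i))} = 0 := by
  obtain ⟨-, _, -, hμ, hP⟩ := hX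
  exact statement12_general hμ hP hE hper

end
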